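/- arXiv:math/0203180 — 3 statements merged into one kernel-verified Lean document; each statement's English description precedes it below -/
import Mathlib

section
/- Assume k has characteristic 0. Let t ≥ 2 and let p_2, …, p_t ∈ k \ {0,1} be distinct elements generating a free abelian subgroup of k^× of rank t−1. Let D_1 be the k-linear endomorphism of k[Y,Y⁻¹] determined by D_1(Yⁿ) = n·Y^{n−1} for all n ∈ ℤ (formal differentiation d/dY). Then the k-subalgebra of End_k(k[Y,Y⁻¹]) generated by D_1, D_{p_2}, …, D_{p_t} is a noetherian ring. -/
set_option synthInstance.maxHeartbeats 1000000
set_option maxHeartbeats 4000000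
set_option maxSynthPendingDepth 3

noncomputable section

/-!
Write an operator that lowers degrees by `n` as `T j ↦ g j • T (j - n)`, with symbol `g : ℤ → k`.
If `F` is the span of `1`, `j` and the `pᵢ ^ j`, then `D₁` and the `D_{pᵢ}` span the operators of
degree `-1` whose symbol lies in `F` and vanishes at `0`, and the symbols in degree `-n` of the
algebra which they generate are the elements of `F ^ n` that vanish at `0, …, n - 1`.

As for enveloping algebras, a left ideal is controlled by its spaces `Lₙ ⊆ F ^ n` of leading
symbols, which satisfy `Vₙ Lₙ ⊆ Lₙ₊₁`, where `Vₙ` is the space of functions in `F` that vanish at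
`n`, and it suffices to show that this is an equality for large `n`. Since the Rees algebra
`⨁ Fⁿ Xⁿ` is noetherian, `Lₙ₊₁ ⊆ ∑ F ^ (n + 1 - m) Lₘ` with `m` bounded. By the
Skolem–Mahler–Lech theorem, which applies because the `pᵢ` are multiplicatively independent, some
`f ∈ L_b` has no zeros at the integers `≥ b`. Dividing by `f` through interpolation turns
`F ^ (n + 1 - m)` into `V_m ⋯ Vₙ + f F ^ (n + 1 - m - b)`, whence
`Lₙ₊₁ ⊆ Vₙ Lₙ + f F ^ (n + 1 - b)`. Elements of `Lₙ₊₁` vanish at `0, …, n`, so the factor of `f`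
may be taken to vanish at `b, …, n`, that is, in `V_b ⋯ Vₙ`. The interpolation works in degree `b`
less than the number of points because `F` contains `q ^ j - 1 - (q - 1) j`, which vanishes at both
`0` and `1`.

Right ideals are left ideals for the symbols read backwards.

Skolem–Mahler–Lech is proved by embedding a finitely generated domain into an algebraic closure of
some `ℚ_p`, where exponential polynomials are `p`-adic analytic on residue classes and Strassmann's
theorem bounds their zeros.
-/

open Filter Polynomial Topology
open scoped Finset

section Strassmann

theorem exists_last_norm_max {E : Type*} [NormedAddCommGroup E] {b : ℕ → E}
    (hb : Tendsto b atTop (𝓝 0)) (hb0 : b ≠ 0) :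
    ∃ N, b N ≠ 0 ∧ (∀ i, ‖b i‖ ≤ ‖b N‖) ∧ ∀ i, N < i → ‖b i‖ < ‖b N‖ := by
  obtain ⟨j, hj⟩ := Function.ne_iff.1 hb0
  have hfin : {i | ‖b j‖ ≤ ‖b i‖}.Finite := by
    have hlt : ∀ᶠ i in atTop, ‖b i‖ < ‖b j‖ :=
      (tendsto_zero_iff_norm_tendsto_zero.1 hb).eventually_lt_const (norm_pos_iff.2 hj)
    rw [← Nat.cofinite_eq_atTop, eventually_cofinite] at hlt
    simpa using hlt
  obtain ⟨N, hN, hmax⟩ := hfin.toFinset.exists_max_image (fun i => toLex (‖b i‖, i)) ⟨j, by simp⟩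
  have hjN : ‖b j‖ ≤ ‖b N‖ := by simpa using hN
  have hlex (i : ℕ) : ‖b i‖ < ‖b N‖ ∨ ‖b i‖ = ‖b N‖ ∧ i ≤ N := by
    by_cases hi : ‖b j‖ ≤ ‖b i‖
    · exact Prod.Lex.le_iff.1 (hmax i (by simpa using hi))
    · exact .inl ((not_le.1 hi).trans_le hjN)
  refine ⟨N, norm_pos_iff.1 ((norm_pos_iff.2 hj).trans_le hjN), fun i => ?_, fun i hi => ?_⟩
  · exact (hlex i).elim le_of_lt fun h => h.1.le
  · exact (hlex i).resolve_right fun h => hi.not_ge h.2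

theorem degree_sum_smul_descPochhammer {R : Type*} [CommRing R] [IsDomain R]
    {a : ℕ → R} {M N : ℕ} (hNM : N < M) (haN : a N ≠ 0) (ha : ∀ i, N < i → a i = 0) :
    (∑ i ∈ Finset.range M, a i • descPochhammer R i).degree = N := by
  have htrunc : ∑ i ∈ Finset.range M, a i • descPochhammer R i =
      ∑ i ∈ Finset.range (N + 1), a i • descPochhammer R i := by
    refine (Finset.sum_subset (Finset.range_mono hNM) fun i _ hi => ?_).symm
    rw [ha i (by simpa using hi), zero_smul]
  have hdeg (i : ℕ) : (descPochhammer R i).degree = i := by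
    rw [degree_eq_natDegree (monic_descPochhammer R i).ne_zero, descPochhammer_natDegree]
  have hlast : (a N • descPochhammer R N).degree = N := by
    rw [smul_eq_C_mul, degree_mul, degree_C haN, zero_add, hdeg]
  rw [htrunc, Finset.sum_range_succ, degree_add_eq_right_of_degree_lt] <;> rw [hlast]
  refine (degree_sum_le _ _).trans_lt ((Finset.sup_lt_iff (WithBot.bot_lt_coe N)).2 fun i hi => ?_)
  refine (degree_smul_le _ _).trans_lt ?_
  rw [hdeg]
  exact WithBot.coe_lt_coe.2 (Finset.mem_range.1 hi)

theorem eval_sum_smul_descPochhammer {R : Type*} [CommRing R] (a : ℕ → R) {n M : ℕ} (h : n < M) :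
    (∑ i ∈ Finset.range M, a i • descPochhammer R i).eval (n : R) =
      ∑ i ∈ Finset.range (n + 1), a i * (n.descFactorial i : R) := by
  simp only [eval_finsetSum, eval_smul, smul_eq_mul, descPochhammer_eval_eq_descFactorial]
  refine (Finset.sum_subset (Finset.range_mono h) fun i _ hi => ?_).symm
  rw [Nat.descFactorial_of_lt (by simpa using hi), Nat.cast_zero, mul_zero]

/-- Strassmann's bound: modulo the maximal ideal the series becomes a polynomial of degree `N`. -/
theorem card_zeros_descFactorial_series_le {R : Type*} [CommRing R] [IsDomain R] [CharZero R]
    [IsLocalRing R] {a : ℕ → R} {N : ℕ} (haN : IsUnit (a N))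
    (ha : ∀ i, N < i → a i ∈ IsLocalRing.maximalIdeal R) {s : Finset ℕ}
    (hs : ∀ n ∈ s, ∑ i ∈ Finset.range (n + 1), a i * (n.descFactorial i : R) = 0) :
    s.card ≤ N := by
  classical
  let M := max (s.sup id) N + 1
  let P : R[X] := ∑ i ∈ Finset.range M, a i • descPochhammer R i
  have hmap : (P.map (IsLocalRing.residue R)).degree = N := by
    simp only [P, Polynomial.map_sum, Polynomial.map_smul, descPochhammer_map]
    refine degree_sum_smul_descPochhammer (by grind) ?_ fun i hi => ?_
    · exact (haN.map _).ne_zero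
    · exact (IsLocalRing.residue_eq_zero_iff _).2 (ha i hi)
  have hmap0 : P.map (IsLocalRing.residue R) ≠ 0 := by
    rintro h
    simp [h] at hmap
  have hP0 : P ≠ 0 := fun h => hmap0 (by rw [h, Polynomial.map_zero])
  have hroots : s.image (Nat.cast : ℕ → R) ⊆ P.roots.toFinset := by
    intro x hx
    obtain ⟨n, hn, rfl⟩ := Finset.mem_image.1 hx
    have hnM : n < M := Nat.lt_succ_of_le (le_max_of_le_left (Finset.le_sup (f := id) hn))
    rw [Multiset.mem_toFinset, mem_roots hP0, IsRoot, eval_sum_smul_descPochhammer a hnM, hs n hn]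
  calc s.card = (s.image (Nat.cast : ℕ → R)).card :=
        (Finset.card_image_of_injective s Nat.cast_injective).symm
    _ ≤ P.roots.toFinset.card := Finset.card_le_card hroots
    _ ≤ P.roots.card := Multiset.toFinset_card_le _
    _ ≤ (P.map (IsLocalRing.residue R)).roots.card := card_roots_le_map hmap0
    _ ≤ N := by simpa [natDegree_eq_of_degree_eq_some hmap] using
        card_roots' (P.map (IsLocalRing.residue R))

variable (K : Type*) [NormedField K]

/-- The sequences `n ↦ ∑ bᵢ · n(n - 1)⋯(n - i + 1)` with coefficients `bᵢ` tending to zero. The sum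
is finite for each `n`, so that `K` need not be complete. -/
def factorialSeries : Submodule K (ℕ → K) where
  carrier := {g | ∃ b : ℕ → K, Tendsto b atTop (𝓝 0) ∧
    ∀ n, g n = ∑ i ∈ Finset.range (n + 1), b i * (n.descFactorial i : K)}
  zero_mem' := ⟨0, tendsto_const_nhds, by simp⟩
  add_mem' := by
    rintro g h ⟨b, hb, hg⟩ ⟨c, hc, hh⟩
    exact ⟨b + c, add_zero (0 : K) ▸ hb.add hc, by simp [hg, hh, add_mul, Finset.sum_add_distrib]⟩
  smul_mem' := by
    rintro a g ⟨b, hb, hg⟩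
    exact ⟨a • b, smul_zero (A := K) a ▸ hb.const_smul a, by simp [hg, Finset.mul_sum, mul_assoc]⟩

variable {K} [IsUltrametricDist K]

theorem eq_zero_of_mem_factorialSeries [CharZero K] {g : ℕ → K} (hg : g ∈ factorialSeries K)
    (hinf : {n | g n = 0}.Infinite) : g = 0 := by
  obtain ⟨b, hb, hgb⟩ := hg
  by_contra hg0
  obtain ⟨N, hN, hle, hlt⟩ := exists_last_norm_max hb (by
    rintro rfl
    exact hg0 (funext fun n => by simp [hgb]))
  let O := (NormedField.valuation (K := K)).valuationSubring
  have hquot (i : ℕ) : ‖b i / b N‖ ≤ 1 := by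
    rw [norm_div]
    exact div_le_one_of_le₀ (hle i) (norm_nonneg _)
  let a (i : ℕ) : O := ⟨b i / b N, hquot i⟩
  have haN : a N = 1 := Subtype.ext (div_self hN)
  have ha (i : ℕ) (hi : N < i) : a i ∈ IsLocalRing.maximalIdeal O := by
    have hi' : ‖b i / b N‖ < 1 := by
      rw [norm_div]
      exact (div_lt_one (norm_pos_iff.2 hN)).2 (hlt i hi)
    exact (Valuation.mem_maximalIdeal_iff K _).2 hi'
  obtain ⟨s, hs, hcard⟩ := hinf.exists_subset_card_eq (N + 1)
  have := card_zeros_descFactorial_series_le (haN ▸ isUnit_one) ha (s := s) fun n hn => by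
    have hgn := hs hn
    rw [Set.mem_ofPred_eq, hgb] at hgn
    apply Subtype.ext
    push_cast
    simp only [a, div_mul_eq_mul_div, ← Finset.sum_div, hgn, zero_div]
  omega

theorem natCast_mul_mem_factorialSeries {g : ℕ → K} (hg : g ∈ factorialSeries K) :
    (fun n : ℕ => (n : K) * g n) ∈ factorialSeries K := by
  obtain ⟨b, hb, hgb⟩ := hg
  let b' : ℕ → K := fun i => i.casesOn 0 b
  refine ⟨fun i => b' i + i * b i, ?_, fun n => ?_⟩
  · rw [← add_zero (0 : K)]
    refine ((tendsto_add_atTop_iff_nat 1).1 hb).add ?_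
    refine squeeze_zero_norm (fun i => ?_) (tendsto_zero_iff_norm_tendsto_zero.1 hb)
    rw [norm_mul]
    exact mul_le_of_le_one_left (norm_nonneg _) (IsUltrametricDist.norm_natCast_le_one K i)
  · have hmul (i : ℕ) (hi : i ≤ n) : (n : K) * n.descFactorial i =
        n.descFactorial (i + 1) + i * n.descFactorial i := by
      rw [Nat.descFactorial_succ]
      push_cast [hi]
      ring
    have hshift : ∑ i ∈ Finset.range (n + 1), b' i * (n.descFactorial i : K) =
        ∑ i ∈ Finset.range (n + 1), b i * (n.descFactorial (i + 1) : K) := by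
      rw [Finset.sum_range_succ', Finset.sum_range_succ _ n,
        Nat.descFactorial_of_lt (Nat.lt_succ_self n)]
      simp [b']
    simp only [add_mul, Finset.sum_add_distrib]
    rw [hshift, ← Finset.sum_add_distrib, hgb, Finset.mul_sum]
    refine Finset.sum_congr rfl fun i hi => ?_
    rw [mul_left_comm, hmul i (Finset.mem_range_succ_iff.1 hi)]
    ring

theorem eval_mul_mem_factorialSeries (f : K[X]) {g : ℕ → K} (hg : g ∈ factorialSeries K) :
    (fun n : ℕ => f.eval (n : K) * g n) ∈ factorialSeries K := by
  have hpow (j : ℕ) : (fun n : ℕ => (n : K) ^ j * g n) ∈ factorialSeries K := by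
    induction j with
    | zero => simpa using hg
    | succ j ih => simpa only [pow_succ', mul_assoc] using natCast_mul_mem_factorialSeries ih
  have hsum : (fun n : ℕ => f.eval (n : K) * g n) =
      ∑ i ∈ Finset.range (f.natDegree + 1), f.coeff i • fun n : ℕ => (n : K) ^ i * g n := by
    ext n
    simp [eval_eq_sum_range, Finset.sum_mul, mul_assoc]
  exact hsum ▸ Submodule.sum_mem _ fun i _ => Submodule.smul_mem _ _ (hpow i)

omit [IsUltrametricDist K] in
theorem pow_mem_factorialSeries [CharZero K] {r : ℝ} (hr : 0 < r)
    (hfac : ∀ i : ℕ, r ^ i ≤ ‖(i.factorial : K)‖) {x : K} (hx : ‖x - 1‖ < r) :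
    (fun n => x ^ n) ∈ factorialSeries K := by
  refine ⟨fun i => (x - 1) ^ i / i.factorial, ?_, fun n => ?_⟩
  · have hgeom : Tendsto (fun i : ℕ => (‖x - 1‖ / r) ^ i) atTop (𝓝 0) :=
      tendsto_pow_atTop_nhds_zero_of_lt_one (by positivity) ((div_lt_one hr).2 hx)
    refine squeeze_zero_norm (fun i => ?_) hgeom
    rw [norm_div, norm_pow, div_pow]
    exact div_le_div_of_nonneg_left (by positivity) (by positivity) (hfac i)
  · change x ^ n = _
    conv_lhs => rw [← sub_add_cancel x 1, add_pow]
    refine Finset.sum_congr rfl fun i _ => ?_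
    have hi : (i.factorial : K) ≠ 0 := Nat.cast_ne_zero.2 i.factorial_ne_zero
    rw [Nat.descFactorial_eq_factorial_mul_choose, Nat.cast_mul]
    field_simp
    simp

end Strassmann

section ExponentialPolynomials

variable {k : Type*} [Field k]

/-- The exponential polynomial `n ↦ ∑ fᵢ(n) αᵢⁿ` with bases `αᵢ`, as a function on `ℤ`. -/
def expPoly {ι : Type*} [Fintype ι] (α : ι → k) (f : ι → k[X]) (n : ℤ) : k :=
  ∑ i, (f i).eval (n : k) * α i ^ n

theorem shift_sub_smul_pow_apply (g : k → k) (c : k) (n : ℕ) :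
    ((LinearMap.funLeft k k Nat.succ - c • 1) ^ n) (fun m => g m * c ^ m) =
      c ^ n • fun m : ℕ => (fwdDiff 1)^[n] g m * c ^ m := by
  induction n with
  | zero => simp
  | succ n ih =>
    rw [pow_succ', Module.End.mul_apply, ih]
    ext m
    simp only [map_smul, LinearMap.sub_apply, LinearMap.smul_apply, Module.End.one_apply,
      Pi.smul_apply, Pi.sub_apply, LinearMap.funLeft_apply, Nat.succ_eq_add_one, Nat.cast_add,
      Nat.cast_one, smul_eq_mul, Function.iterate_succ_apply', fwdDiff]
    ring

theorem eval_mul_pow_mem_maxGenEigenspace_shift (f : k[X]) (c : k) :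
    (fun m : ℕ => f.eval (m : k) * c ^ m) ∈
      Module.End.maxGenEigenspace (LinearMap.funLeft k k Nat.succ) c := by
  rw [Module.End.mem_maxGenEigenspace]
  refine ⟨f.natDegree + 1, ?_⟩
  rw [shift_sub_smul_pow_apply (fun x => f.eval x), fwdDiff_iter_degree_add_one_eq_zero]
  ext
  simp

variable [CharZero k]

theorem eq_zero_of_forall_eval_eq_zero {R : Type*} [CommRing R] [IsDomain R] {x : ℕ → R}
    (hx : Function.Injective x) {f : R[X]} (h : ∀ m, f.eval (x m) = 0) : f = 0 :=
  eq_zero_of_infinite_isRoot f <|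
    (Set.infinite_range_of_injective hx).mono (Set.range_subset_iff.2 h)

theorem eq_zero_of_forall_expPoly_eq_zero {ι : Type*} [Fintype ι] {α : ι → k}
    (hα0 : ∀ i, α i ≠ 0) (hα : Function.Injective α) {f : ι → k[X]}
    (h : ∀ m : ℕ, expPoly α f m = 0) : f = 0 := by
  let v (i : ι) (m : ℕ) : k := (f i).eval (m : k) * α i ^ m
  have hv : ∑ i, v i = 0 := by
    ext m
    simpa [v, expPoly] using h m
  have hind := (Module.End.independent_maxGenEigenspace
    (LinearMap.funLeft k k Nat.succ)).comp hα
  have hv0 := (iSupIndep_iff_finsetSum_eq_zero_imp_eq_zero _).1 hind Finset.univ v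
    (fun i _ => eval_mul_pow_mem_maxGenEigenspace_shift (f i) (α i)) hv
  ext1 i
  refine eq_zero_of_forall_eval_eq_zero Nat.cast_injective fun m => ?_
  simpa [v, hα0 i] using congrFun (hv0 i (Finset.mem_univ i)) m

end ExponentialPolynomials

section SkolemMahlerLech

theorem map_expPoly {K L : Type*} [Field K] [Field L] (φ : K →+* L) {ι : Type*} [Fintype ι]
    (α : ι → K) (f : ι → K[X]) (n : ℤ) :
    φ (expPoly α f n) = expPoly (φ ∘ α) (fun i => (f i).map φ) n := by
  have heval (i : ι) : φ ((f i).eval (n : K)) = ((f i).map φ).eval (n : L) := by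
    rw [← eval_map_apply, map_intCast]
  simp only [expPoly, map_sum, map_mul, map_zpow₀, heval, Function.comp_apply]

theorem expPoly_add_mul {k : Type*} [Field k] {ι : Type*} [Fintype ι] {α : ι → k}
    (hα0 : ∀ i, α i ≠ 0) (f : ι → k[X]) (c N m : ℤ) :
    expPoly α f (c + N * m) = expPoly (fun i => α i ^ N)
      (fun i => C (α i ^ c) * (f i).comp (C (c : k) + C (N : k) * X)) m := by
  refine Finset.sum_congr rfl fun i _ => ?_
  simp only [eval_mul, eval_C, eval_comp, eval_add, eval_X, Int.cast_add, Int.cast_mul,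
    zpow_add₀ (hα0 i), zpow_mul]
  ring

theorem eq_zero_of_infinite_zeros_expPoly_of_norm_lt {K : Type*} [NormedField K]
    [IsUltrametricDist K] [CharZero K] {r : ℝ} (hr : 0 < r)
    (hfac : ∀ i : ℕ, r ^ i ≤ ‖(i.factorial : K)‖) {ι : Type*} [Fintype ι] {α : ι → K}
    (hα0 : ∀ i, α i ≠ 0) (hα : Function.Injective α) (hαr : ∀ i, ‖α i - 1‖ < r) {f : ι → K[X]}
    (hinf : {n : ℕ | expPoly α f n = 0}.Infinite) : f = 0 := by
  refine eq_zero_of_forall_expPoly_eq_zero hα0 hα fun m => ?_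
  have hmem : (fun m : ℕ => expPoly α f m) ∈ factorialSeries K := by
    have hsum : (fun m : ℕ => expPoly α f m) =
        ∑ i, fun m : ℕ => (f i).eval (m : K) * α i ^ m := by
      ext m
      simp [expPoly]
    exact hsum ▸ Submodule.sum_mem _ fun i _ =>
      eval_mul_mem_factorialSeries (f i) (pow_mem_factorialSeries hr hfac (hαr i))
  exact congrFun (eq_zero_of_mem_factorialSeries hmem hinf) m

theorem exists_residue_class_infinite {s : Set ℕ} (hs : s.Infinite) {N : ℕ} (hN : N ≠ 0) :
    ∃ c, {m : ℕ | c + N * m ∈ s}.Infinite := by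
  contrapose! hs
  refine Set.Finite.of_finite_fibers (· % N) ((Set.finite_lt_nat N).subset ?_) fun c _ => ?_
  · rintro _ ⟨n, -, rfl⟩
    exact Nat.mod_lt n (Nat.pos_of_ne_zero hN)
  · refine ((hs c).image (c + N * ·)).subset ?_
    rintro n ⟨hn, rfl⟩
    exact ⟨n / N, by simpa [Nat.mod_add_div] using hn, Nat.mod_add_div n N⟩

theorem eq_zero_of_infinite_zeros_expPoly_of_pow_norm_lt {K : Type*} [NormedField K]
    [IsUltrametricDist K] [CharZero K] {r : ℝ} (hr : 0 < r)
    (hfac : ∀ i : ℕ, r ^ i ≤ ‖(i.factorial : K)‖) {ι : Type*} [Fintype ι] {α : ι → K}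
    (hα0 : ∀ i, α i ≠ 0) {N : ℕ} (hN : N ≠ 0) (hα : Function.Injective fun i => α i ^ N)
    (hαr : ∀ i, ‖α i ^ N - 1‖ < r) {f : ι → K[X]}
    (hinf : {n : ℕ | expPoly α f n = 0}.Infinite) : f = 0 := by
  obtain ⟨c, hc⟩ := exists_residue_class_infinite hinf hN
  have hzero := eq_zero_of_infinite_zeros_expPoly_of_norm_lt hr hfac
    (fun i => pow_ne_zero N (hα0 i)) hα hαr
    (f := fun i => C (α i ^ c) * (f i).comp (C (c : K) + C (N : K) * X)) <| hc.mono fun m hm => by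
      simpa using (expPoly_add_mul hα0 f c N m).symm.trans hm
  ext1 i
  have hinj : Function.Injective fun m : ℕ => (c : K) + N * m := by
    intro a b hab
    simpa [hN] using hab
  refine eq_zero_of_forall_eval_eq_zero hinj fun m => ?_
  simpa [hα0 i, eval_comp] using congrArg (eval (m : K)) (congrFun hzero i)

theorem norm_le_one_of_isIntegral {R K : Type*} [CommRing R] [NormedField K]
    [IsUltrametricDist K] [Algebra R K] (hR : ∀ r : R, ‖algebraMap R K r‖ ≤ 1) {x : K}
    (hx : IsIntegral R x) : ‖x‖ ≤ 1 := by
  let v := NormedField.valuation (K := K)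
  have hx' : IsIntegral v.integer x :=
    hx.map_of_comp_eq ((algebraMap R K).codRestrict v.integer hR) (RingHom.id K) rfl
  exact (Valuation.integer.integers v).mem_of_integral hx'

theorem norm_aeval_sub_eval_lt_one {K : Type*} [NormedField K] [IsUltrametricDist K] {ι : Type*}
    {τ : ι → K} {c : ι → ℤ} (h : ∀ i, ‖τ i - c i‖ < 1) (P : MvPolynomial ι ℤ) :
    ‖MvPolynomial.aeval τ P - (MvPolynomial.eval c P : ℤ)‖ < 1 := by
  let O := (NormedField.valuation (K := K)).valuationSubring
  have hτ (i : ι) : ‖τ i‖ ≤ 1 := by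
    rw [← sub_add_cancel (τ i) (c i)]
    exact (IsUltrametricDist.norm_add_le_max _ _).trans
      (max_le (h i).le (IsUltrametricDist.norm_intCast_le_one K _))
  let τ' (i : ι) : O := ⟨τ i, hτ i⟩
  have hmem (x : O) : IsLocalRing.residue O x = 0 ↔ ‖(x : K)‖ < 1 :=
    (IsLocalRing.residue_eq_zero_iff x).trans (Valuation.mem_maximalIdeal_iff K _)
  have hres : (IsLocalRing.residue O).comp (MvPolynomial.aeval τ').toRingHom =
      (Int.castRingHom _).comp (MvPolynomial.eval c) := by
    refine MvPolynomial.ringHom_ext (fun a => by simp) fun i => ?_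
    have hi := (hmem (τ' i - c i)).2 (by simpa using h i)
    simpa [sub_eq_zero] using hi
  have hcoe : ((MvPolynomial.aeval τ' P : O) : K) = MvPolynomial.aeval τ P :=
    (MvPolynomial.map_aeval τ' O.subtype P).trans rfl
  have hP := (hmem (MvPolynomial.aeval τ' P - (MvPolynomial.eval c P : ℤ))).1 <| by
    simpa [sub_eq_zero] using RingHom.congr_fun hres P
  simpa [hcoe] using hP

theorem exists_pow_sub_one_norm_lt (F : Type*) {L : Type*} [NontriviallyNormedField F]
    [ProperSpace F] [NormedField L] [NormedAlgebra F L] {u : L} (hu : IsIntegral F u)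
    (hu1 : ‖u‖ = 1) {ε : ℝ} (hε : 0 < ε) : ∃ N : ℕ, N ≠ 0 ∧ ‖u ^ N - 1‖ < ε := by
  let S := (Algebra.adjoin F {u}).toSubmodule
  have hfd : FiniteDimensional F S :=
    (Submodule.fg_iff_finiteDimensional _).1 hu.fg_adjoin_singleton
  have hproper : ProperSpace S := FiniteDimensional.proper F S
  let x (n : ℕ) : S := ⟨u ^ n, pow_mem (Algebra.self_mem_adjoin_singleton F u) n⟩
  have hx (n : ℕ) : x n ∈ Metric.closedBall (0 : S) 1 := by simp [x, hu1]
  obtain ⟨_, -, φ, hφ, hlim⟩ := (isCompact_closedBall (0 : S) 1).tendsto_subseq hx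
  obtain ⟨M, hM⟩ := Metric.cauchySeq_iff'.1 hlim.cauchySeq ε hε
  have hlt : φ M < φ (M + 1) := hφ M.lt_succ_self
  refine ⟨φ (M + 1) - φ M, by omega, ?_⟩
  have hfactor : u ^ φ (M + 1) - u ^ φ M = u ^ φ M * (u ^ (φ (M + 1) - φ M) - 1) := by
    rw [mul_sub, ← pow_add, mul_one, Nat.add_sub_cancel' hlt.le]
  have hdist := hM (M + 1) M.le_succ
  rw [Subtype.dist_eq, dist_eq_norm] at hdist
  simpa [x, hfactor, hu1] using hdist

theorem inv_pow_le_norm_factorial (p : ℕ) [hp : Fact p.Prime] (i : ℕ) :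
    (p : ℝ)⁻¹ ^ i ≤ ‖(i.factorial : ℚ_[p])‖ := by
  have hval : padicValNat p i.factorial ≤ i := by
    rcases eq_or_ne i 0 with rfl | hi
    · simp
    · exact (padicValNat_factorial_lt_of_ne_zero p hi).le
  rw [Padic.norm_eq_zpow_neg_valuation (by exact_mod_cast i.factorial_ne_zero),
    Padic.valuation_natCast, zpow_neg, zpow_natCast, inv_pow]
  have hp0 : (0 : ℝ) < p := by exact_mod_cast hp.1.pos
  exact inv_anti₀ (by positivity) (pow_le_pow_right₀ (by exact_mod_cast hp.1.one_le) hval)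

theorem norm_intCast_padicAlgCl (p : ℕ) [Fact p.Prime] (n : ℤ) :
    ‖(n : PadicAlgCl p)‖ = ‖(n : ℚ_[p])‖ := by
  rw [← PadicAlgCl.norm_extends p n, map_intCast]

theorem eq_zero_of_infinite_zeros_expPoly_of_norm_eq_one (p : ℕ) [hp : Fact p.Prime] {ι : Type*}
    [Fintype ι] {α : ι → PadicAlgCl p} (hα1 : ∀ i, ‖α i‖ = 1)
    (hα : ∀ N : ℕ, N ≠ 0 → Function.Injective fun i => α i ^ N) {f : ι → (PadicAlgCl p)[X]}
    (hinf : {n : ℕ | expPoly α f n = 0}.Infinite) : f = 0 := by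
  have hp0 : (0 : ℝ) < (p : ℝ)⁻¹ := inv_pos.2 (by exact_mod_cast hp.1.pos)
  have hfac (i : ℕ) : (p : ℝ)⁻¹ ^ i ≤ ‖(i.factorial : PadicAlgCl p)‖ := by
    have hnorm := norm_intCast_padicAlgCl p i.factorial
    push_cast at hnorm
    exact hnorm ▸ inv_pow_le_norm_factorial p i
  choose M hM0 hM using fun i => exists_pow_sub_one_norm_lt ℚ_[p]
    (Algebra.IsIntegral.isIntegral (α i)) (hα1 i) hp0
  have hN0 : ∏ i, M i ≠ 0 := Finset.prod_ne_zero_iff.2 fun i _ => hM0 i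
  refine eq_zero_of_infinite_zeros_expPoly_of_pow_norm_lt hp0 hfac
    (fun i => norm_ne_zero_iff.1 (by simp [hα1 i])) hN0 (hα _ hN0) (fun i => ?_) hinf
  obtain ⟨q, hq⟩ := Finset.dvd_prod_of_mem M (Finset.mem_univ i)
  rw [hq, pow_mul, ← mul_geom_sum, norm_mul]
  refine (mul_le_of_le_one_right (norm_nonneg _) ?_).trans_lt (hM i)
  refine IsUltrametricDist.norm_sum_le_of_forall_le_of_nonneg zero_le_one fun j _ => ?_
  simp [hα1 i]

theorem exists_algebraicIndependent_int (K : Type*) [Field K] [CharZero K] [IsAlgClosed K]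
    [Uncountable K] (ι : Type*) [Finite ι] : ∃ v : ι → K, AlgebraicIndependent ℤ v := by
  obtain ⟨κ, v, hv⟩ := exists_isTranscendenceBasis' ℤ K
  have hcard := IsAlgClosed.cardinal_eq_cardinal_transcendence_basis_of_aleph0_lt v hv
    Cardinal.mk_le_aleph0 Cardinal.aleph0_lt_mk
  rw [Cardinal.lift_id, Cardinal.lift_id] at hcard
  have : Infinite κ := Cardinal.infinite_iff.2 (hcard ▸ Cardinal.aleph0_le_mk K)
  obtain ⟨n, ⟨e⟩⟩ := Finite.exists_equiv_fin ι
  let j : ι ↪ κ := (e.toEmbedding.trans Fin.valEmbedding).trans (Infinite.natEmbedding κ)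
  exact ⟨v ∘ j, hv.1.comp j j.injective⟩

instance uncountable_padicAlgCl (p : ℕ) [Fact p.Prime] : Uncountable (PadicAlgCl p) := by
  have : Uncountable ℚ_[p] := Cardinal.aleph0_lt_mk_iff.1 <|
    Cardinal.aleph0_lt_continuum.trans_le (continuum_le_cardinal_of_nontriviallyNormedField ℚ_[p])
  exact (algebraMap ℚ_[p] (PadicAlgCl p)).injective.uncountable

theorem exists_algebraicIndependent_norm_sub_intCast_lt_one {K : Type*} [NormedField K]
    {ι : Type*} {v : ι → K} (hv : AlgebraicIndependent ℤ v) {a : ℤ} (ha0 : a ≠ 0)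
    (ha : ‖(a : K)‖ < 1) (c : ι → ℤ) :
    ∃ τ : ι → K, AlgebraicIndependent ℤ τ ∧ ∀ i, ‖τ i - c i‖ < 1 := by
  have hM (i : ι) : ∃ M : ℕ, ‖(a : K)‖ ^ M * ‖v i‖ < 1 := by
    have hlim := (tendsto_pow_atTop_nhds_zero_of_lt_one (norm_nonneg _) ha).mul_const ‖v i‖
    rw [zero_mul] at hlim
    exact (hlim.eventually_lt_const one_pos).exists
  choose M hM using hM
  refine ⟨_, hv.polynomial_aeval_of_transcendental
    (f := fun i => C (a ^ M i) * X + C (c i)) fun i => ?_, fun i => ?_⟩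
  · have haM : a ^ M i ≠ 0 := pow_ne_zero _ ha0
    refine Polynomial.transcendental _ ?_ ?_
    · rw [natDegree_linear haM]
      exact one_ne_zero
    · rw [leadingCoeff_linear haM]
      exact mem_nonZeroDivisors_of_ne_zero haM
  · simpa [norm_mul] using hM i

theorem exists_padic_point_norm_aeval_eq_one {ι : Type*} [Finite ι] {Q : MvPolynomial ι ℤ}
    (hQ : Q ≠ 0) : ∃ (p : ℕ) (_ : Fact p.Prime) (τ : ι → PadicAlgCl p),
      AlgebraicIndependent ℤ τ ∧ (∀ P : MvPolynomial ι ℤ, ‖MvPolynomial.aeval τ P‖ ≤ 1) ∧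
      ‖MvPolynomial.aeval τ Q‖ = 1 := by
  obtain ⟨c, hc⟩ : ∃ c : ι → ℤ, MvPolynomial.eval c Q ≠ 0 := by
    by_contra! h
    exact hQ (MvPolynomial.funext fun c => by simpa using h c)
  obtain ⟨p, hpgt, hp⟩ := Nat.exists_infinite_primes ((MvPolynomial.eval c Q).natAbs + 1)
  have : Fact p.Prime := ⟨hp⟩
  have hp1 : ‖((p : ℤ) : PadicAlgCl p)‖ < 1 := by
    rw [norm_intCast_padicAlgCl, Int.cast_natCast]
    exact Padic.norm_p_lt_one
  have hcQ : ‖((MvPolynomial.eval c Q : ℤ) : PadicAlgCl p)‖ = 1 := by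
    refine le_antisymm (IsUltrametricDist.norm_intCast_le_one _ _) (not_lt.1 fun hlt => ?_)
    rw [norm_intCast_padicAlgCl, Padic.norm_intCast_lt_one_iff, Int.natCast_dvd] at hlt
    have := Nat.le_of_dvd (Int.natAbs_pos.2 hc) hlt
    omega
  obtain ⟨v, hv⟩ := exists_algebraicIndependent_int (PadicAlgCl p) ι
  obtain ⟨τ, hτ, hτc⟩ := exists_algebraicIndependent_norm_sub_intCast_lt_one hv
    (Nat.cast_ne_zero.2 hp.ne_zero) hp1 c
  refine ⟨p, this, τ, hτ, fun P => ?_, ?_⟩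
  · rw [← sub_add_cancel (MvPolynomial.aeval τ P) ((MvPolynomial.eval c P : ℤ) : PadicAlgCl p)]
    exact (IsUltrametricDist.norm_add_le_max _ _).trans
      (max_le (norm_aeval_sub_eval_lt_one hτc P).le (IsUltrametricDist.norm_intCast_le_one _ _))
  · have hlt := norm_aeval_sub_eval_lt_one hτc Q
    rw [← hcQ] at hlt
    have hmax := IsUltrametricDist.norm_add_eq_max_of_norm_ne_norm hlt.ne
    rwa [sub_add_cancel, max_eq_right hlt.le, hcQ] at hmax

/-- Cassels' embedding theorem, for a field of finite transcendence degree over `ℚ`. -/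
theorem exists_ringHom_padicAlgCl_norm_le_one {K : Type*} [Field K] [CharZero K] {ι : Type*}
    [Finite ι] {x : ι → K} (hx : IsTranscendenceBasis ℤ x) (G : Finset K) :
    ∃ (p : ℕ) (_ : Fact p.Prime) (φ : K →+* PadicAlgCl p), ∀ g ∈ G, ‖φ g‖ ≤ 1 := by
  let R := Algebra.adjoin ℤ (Set.range x)
  let E : MvPolynomial ι ℤ ≃ₐ[ℤ] R := hx.1.aevalEquiv
  have : Algebra.IsAlgebraic R K := hx.isAlgebraic
  obtain ⟨y, hy0, hy⟩ := Algebra.IsAlgebraic.exists_integral_multiples R G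
  have hEy : E.symm y ≠ 0 := by simpa only [ne_eq, EmbeddingLike.map_eq_zero_iff] using hy0
  obtain ⟨p, hp, τ, hτ, hτle, hτy⟩ := exists_padic_point_norm_aeval_eq_one hEy
  let : Algebra R (PadicAlgCl p) :=
    ((MvPolynomial.aeval τ).comp E.symm.toAlgHom).toRingHom.toAlgebra
  have hmap (r : R) : algebraMap R (PadicAlgCl p) r = MvPolynomial.aeval τ (E.symm r) := rfl
  have hinj : Function.Injective (algebraMap R (PadicAlgCl p)) :=
    (show Function.Injective (MvPolynomial.aeval (R := ℤ) τ) from hτ).comp E.symm.injective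
  have : FaithfulSMul R (PadicAlgCl p) := (faithfulSMul_iff_algebraMap_injective _ _).2 hinj
  let φ : K →ₐ[R] PadicAlgCl p := IsAlgClosed.lift
  refine ⟨p, hp, φ, fun g hg => ?_⟩
  have hle : ‖φ (y • g)‖ ≤ 1 :=
    norm_le_one_of_isIntegral (R := R) (fun r => hτle (E.symm r)) ((hy g hg).map φ)
  rwa [φ.map_smul_of_tower, Algebra.smul_def, norm_mul, hmap, hτy, one_mul] at hle

theorem eq_zero_of_infinite_zeros_expPoly_of_isTranscendenceBasis {K : Type*} [Field K] [CharZero K]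
    {κ : Type*} [Finite κ] {x : κ → K} (hx : IsTranscendenceBasis ℤ x) {ι : Type*} [Fintype ι]
    {α : ι → K} (hα0 : ∀ i, α i ≠ 0)
    (hα : ∀ N : ℕ, N ≠ 0 → Function.Injective fun i => α i ^ N) {f : ι → K[X]}
    (hinf : {n : ℕ | expPoly α f n = 0}.Infinite) : f = 0 := by
  classical
  obtain ⟨p, _, φ, hφ⟩ := exists_ringHom_padicAlgCl_norm_le_one hx
    (Finset.univ.image α ∪ Finset.univ.image fun i => (α i)⁻¹)
  have hle (i : ι) : ‖φ (α i)‖ ≤ 1 := hφ _ (by simp)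
  have hge (i : ι) : 1 ≤ ‖φ (α i)‖ := by
    have hinv : ‖φ (α i)⁻¹‖ ≤ 1 := hφ _ (by simp)
    rw [map_inv₀, norm_inv] at hinv
    exact (inv_le_one₀ (norm_pos_iff.2 ((map_ne_zero φ).2 (hα0 i)))).1 hinv
  have hzero := eq_zero_of_infinite_zeros_expPoly_of_norm_eq_one p (α := φ ∘ α)
    (fun i => (hle i).antisymm (hge i))
    (fun N hN i j hij => hα N hN (φ.injective (by simpa using hij)))
    (f := fun i => (f i).map φ) (hinf.mono fun n hn => by
      rw [Set.mem_ofPred_eq, ← map_expPoly, hn, map_zero])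
  ext1 i
  exact (Polynomial.map_eq_zero φ).1 (congrFun hzero i)

theorem exists_isTranscendenceBasis_subfieldClosure {k : Type*} [Field k] [CharZero k] {G : Set k}
    (hG : G.Finite) : ∃ (n : ℕ) (x : Fin n → Subfield.closure G), IsTranscendenceBasis ℤ x := by
  let s : Set (Subfield.closure G) := (↑) ⁻¹' G
  have halg : Algebra.IsAlgebraic (Algebra.adjoin ℤ s) (Subfield.closure G) := by
    refine ⟨fun ⟨a, ha⟩ => ?_⟩
    induction ha using Subfield.closure_induction with
    | mem a ha =>
      exact isAlgebraic_algebraMap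
        (⟨⟨a, _⟩, Algebra.subset_adjoin (s := s) ha⟩ : Algebra.adjoin ℤ s)
    | one => exact isAlgebraic_one
    | add a b _ _ iha ihb => exact iha.add ihb
    | neg a _ iha => exact iha.neg
    | inv a _ iha => exact iha.inv
    | mul a b _ _ iha ihb => exact iha.mul ihb
  obtain ⟨t, hts, ht⟩ := exists_isTranscendenceBasis_subset (R := ℤ) s
  have : Finite t := ((hG.preimage Subtype.val_injective.injOn).subset hts).to_subtype
  obtain ⟨n, ⟨e⟩⟩ := Finite.exists_equiv_fin t
  exact ⟨n, _, ht.comp_equiv e.symm⟩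

theorem eq_zero_of_infinite_zeros_expPoly {k : Type*} [Field k] [CharZero k] {ι : Type*} [Fintype ι]
    {α : ι → k} (hα0 : ∀ i, α i ≠ 0)
    (hα : ∀ N : ℕ, N ≠ 0 → Function.Injective fun i => α i ^ N) {f : ι → k[X]}
    (hinf : {n : ℕ | expPoly α f n = 0}.Infinite) : f = 0 := by
  let G : Set k := Set.range α ∪ ⋃ i, ((f i).coeffs : Set k)
  have hG : G.Finite := (Set.finite_range α).union
    (Set.finite_iUnion fun i => Finset.finite_toSet _)
  obtain ⟨n, x, hx⟩ := exists_isTranscendenceBasis_subfieldClosure hG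
  let φ := (Subfield.closure G).subtype
  let β (i : ι) : Subfield.closure G := ⟨α i, Subfield.subset_closure (.inl ⟨i, rfl⟩)⟩
  have hlift (i : ι) : ∃ g : (Subfield.closure G)[X], g.map φ = f i := by
    rw [← mem_lifts, lifts_iff_coeffs_subset_range]
    intro a ha
    exact ⟨⟨a, Subfield.subset_closure (.inr (Set.mem_iUnion.2 ⟨i, ha⟩))⟩, rfl⟩
  choose g hg using hlift
  have hzero := eq_zero_of_infinite_zeros_expPoly_of_isTranscendenceBasis hx (α := β)
    (fun i hi => hα0 i (congrArg φ hi))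
    (fun N hN i j hij => hα N hN (by simpa [β] using congrArg Subtype.val hij))
    (f := g) (hinf.mono fun n hn => φ.injective <| by
      rw [map_expPoly, map_zero, funext hg]
      exact hn)
  ext1 i
  rw [← hg i, hzero, Pi.zero_apply, Polynomial.map_zero, Pi.zero_apply]

theorem finite_zeros_expPoly {k : Type*} [Field k] [CharZero k] {ι : Type*} [Fintype ι] {α : ι → k}
    (hα0 : ∀ i, α i ≠ 0) (hα : ∀ N : ℕ, N ≠ 0 → Function.Injective fun i => α i ^ N)
    {f : ι → k[X]} (hf : f ≠ 0) : {j : ℤ | expPoly α f j = 0}.Finite := by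
  have hpos : {n : ℕ | expPoly α f n = 0}.Finite := by
    contrapose! hf
    exact eq_zero_of_infinite_zeros_expPoly hα0 hα hf
  have hreflect (j : ℤ) : expPoly (fun i => (α i)⁻¹) (fun i => (f i).comp (-X)) j =
      expPoly α f (-j) := by
    simp [expPoly, eval_comp]
  have hneg : {n : ℕ | expPoly α f (-n) = 0}.Finite := by
    simp only [← hreflect]
    contrapose! hf
    have hcomp := eq_zero_of_infinite_zeros_expPoly (fun i => inv_ne_zero (hα0 i))
      (fun N hN i j hij => hα N hN (by simpa using hij)) hf
    ext1 i
    rw [← comp_neg_X_comp_neg_X (f i), congrFun hcomp i, Pi.zero_apply, zero_comp]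
  refine ((hpos.image Nat.cast).union (hneg.image fun n : ℕ => -(n : ℤ))).subset fun j hj => ?_
  obtain ⟨n, rfl | rfl⟩ := j.eq_nat_or_neg
  · exact .inl ⟨n, hj, rfl⟩
  · exact .inr ⟨n, hj, rfl⟩

end SkolemMahlerLech

section VanishingAt

/-- The functions in `F` that vanish at `x`. -/
def vanishingAt {k X : Type*} [Field k] (F : Submodule k (X → k)) (x : X) : Submodule k (X → k) :=
  F ⊓ LinearMap.ker (LinearMap.proj x)

theorem pow_succ_le_mul_pow_add_one {S : Type*} [IdemCommSemiring S] {F V : S} (hF : 1 ≤ F)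
    (hV : F ≤ V + 1) (n : ℕ) : F ^ (n + 1) ≤ V * F ^ n + 1 := by
  induction n with
  | zero => simpa using hV
  | succ n ih =>
    calc F ^ (n + 2) = F * F ^ (n + 1) := pow_succ' F (n + 1)
      _ ≤ (V + 1) * F ^ (n + 1) := mul_le_mul' hV le_rfl
      _ = V * F ^ (n + 1) + F ^ (n + 1) := by rw [add_mul, one_mul]
      _ ≤ V * F ^ (n + 1) + (V * F ^ n + 1) := add_le_add le_rfl ih
      _ ≤ V * F ^ (n + 1) + (V * F ^ (n + 1) + 1) :=
        add_le_add le_rfl (add_le_add (mul_le_mul' le_rfl (pow_le_pow_right' hF n.le_succ)) le_rfl)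
      _ = V * F ^ (n + 1) + 1 := by rw [← add_assoc, add_idem]

theorem mul_pow_card_le_mul_prod_add {S ι : Type*} [IdemCommSemiring S] {F W x : S} {V : ι → S}
    {s : Finset ι} (hW : W ≤ F) (hV : ∀ i ∈ s, V i ≤ F) (hF : ∀ i ∈ s, F ≤ V i + x) :
    W * F ^ #s ≤ W * ∏ i ∈ s, V i + x * F ^ #s := by
  classical
  induction s using Finset.induction_on with
  | empty => simp
  | insert i s hi ih =>
    rw [Finset.forall_mem_insert] at hV hF
    have hprod : W * ∏ j ∈ s, V j ≤ F * F ^ #s :=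
      mul_le_mul' hW (Finset.prod_le_pow_card s V F hV.2)
    rw [Finset.prod_insert hi, Finset.card_insert_of_notMem hi, pow_succ']
    calc W * (F * F ^ #s) = W * F ^ #s * F := by ring
      _ ≤ (W * ∏ j ∈ s, V j + x * F ^ #s) * F := mul_le_mul' (ih hV.2 hF.2) le_rfl
      _ = (W * ∏ j ∈ s, V j) * F + x * (F * F ^ #s) := by ring
      _ ≤ (W * ∏ j ∈ s, V j) * (V i + x) + x * (F * F ^ #s) :=
        add_le_add (mul_le_mul' le_rfl hF.1) le_rfl
      _ = W * (V i * ∏ j ∈ s, V j) + x * (W * ∏ j ∈ s, V j) + x * (F * F ^ #s) := by ring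
      _ ≤ W * (V i * ∏ j ∈ s, V j) + x * (F * F ^ #s) + x * (F * F ^ #s) :=
        add_le_add (add_le_add le_rfl (mul_le_mul' le_rfl hprod)) le_rfl
      _ = W * (V i * ∏ j ∈ s, V j) + x * (F * F ^ #s) := by rw [add_assoc, add_idem]

variable {k X : Type*} [Field k] {F : Submodule k (X → k)} {x : X}

theorem mem_vanishingAt {f : X → k} : f ∈ vanishingAt F x ↔ f ∈ F ∧ f x = 0 :=
  Iff.rfl

theorem apply_eq_zero_of_mem_vanishingAt_mul {M : Submodule k (X → k)} {f : X → k}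
    (hf : f ∈ vanishingAt F x * M) : f x = 0 := by
  have hle : vanishingAt F x * M ≤ LinearMap.ker (LinearMap.proj x) := Submodule.mul_le.2
    fun g hg h _ => show g x * h x = 0 by rw [(mem_vanishingAt.1 hg).2, zero_mul]
  exact hle hf

theorem sub_apply_mem_vanishingAt (h1 : 1 ∈ F) {f : X → k} (hf : f ∈ F) (x : X) :
    f - f x • 1 ∈ vanishingAt F x :=
  mem_vanishingAt.2 ⟨F.sub_mem hf (F.smul_mem _ h1), by simp⟩

theorem mem_vanishingAt_mul_pow (h1 : 1 ∈ F) {n : ℕ} {f : X → k} (hf : f ∈ F ^ (n + 1))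
    (hx : f x = 0) : f ∈ vanishingAt F x * F ^ n := by
  have hF : F ≤ vanishingAt F x + 1 := fun g hg => Submodule.mem_sup.2
    ⟨_, sub_apply_mem_vanishingAt h1 hg x, g x • 1,
      Submodule.smul_mem _ _ (Submodule.one_le.1 le_rfl), sub_add_cancel _ _⟩
  obtain ⟨g, hg, c, hc, rfl⟩ :=
    Submodule.mem_sup.1 (pow_succ_le_mul_pow_add_one (Submodule.one_le.2 h1) hF n hf)
  obtain ⟨c, rfl⟩ := Submodule.mem_one.1 hc
  have hc0 : c = 0 := by simpa [apply_eq_zero_of_mem_vanishingAt_mul hg] using hx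
  simpa [hc0] using hg

theorem le_vanishingAt_add_span {v : X → k} (hv : v ∈ F) (hvx : v x ≠ 0) :
    F ≤ vanishingAt F x + Submodule.span k {v} := fun g hg => Submodule.mem_sup.2
  ⟨g - (g x / v x) • v, mem_vanishingAt.2 ⟨F.sub_mem hg (F.smul_mem _ hv), by simp [hvx]⟩, _,
    Submodule.smul_mem _ (g x / v x) (Submodule.mem_span_singleton_self v), sub_add_cancel _ _⟩

theorem mem_prod_vanishingAt_iff {ι : Type*} {z : ι → X} (h1 : 1 ∈ F) {y : X → k} (hy : y ∈ F)
    (hyz : Function.Injective (y ∘ z)) {s : Finset ι} {g : X → k} :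
    g ∈ ∏ i ∈ s, vanishingAt F (z i) ↔ g ∈ F ^ #s ∧ ∀ i ∈ s, g (z i) = 0 := by
  classical
  have hle (i : ι) : vanishingAt F (z i) ≤ F := inf_le_left
  refine ⟨fun hg => ⟨Finset.prod_le_pow_card s _ F (fun i _ => hle i) hg, fun i hi => ?_⟩, ?_⟩
  · rw [← Finset.mul_prod_erase s _ hi] at hg
    exact apply_eq_zero_of_mem_vanishingAt_mul hg
  rintro ⟨hg, hgz⟩
  induction s using Finset.induction_on generalizing g with
  | empty => simpa using hg
  | insert i s hi ih =>
    rw [Finset.card_insert_of_notMem hi] at hg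
    rw [Finset.forall_mem_insert] at hgz
    let v := y - y (z i) • 1
    have hv : v ∈ vanishingAt F (z i) := sub_apply_mem_vanishingAt h1 hy _
    have hvz (j : ι) (hj : j ∈ s) : v (z j) ≠ 0 := by
      simpa [v, sub_eq_zero] using hyz.ne (ne_of_mem_of_not_mem hj hi)
    obtain ⟨g₁, hg₁, g₂, hg₂, rfl⟩ := Submodule.mem_sup.1 <| mul_pow_card_le_mul_prod_add (hle i)
      (fun j _ => hle j) (fun j hj => le_vanishingAt_add_span (hle i hv) (hvz j hj))
      (mem_vanishingAt_mul_pow h1 hg hgz.1)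
    obtain ⟨h, hh, rfl⟩ := Submodule.mem_span_singleton_mul.1 hg₂
    rw [Finset.prod_insert hi]
    refine Submodule.add_mem _ hg₁ (Submodule.mul_mem_mul hv (ih hh fun j hj => ?_))
    have hg₁j : g₁ (z j) = 0 := by
      rw [← Finset.mul_prod_erase s _ hj, mul_left_comm] at hg₁
      exact apply_eq_zero_of_mem_vanishingAt_mul hg₁
    simpa [hg₁j, hvz j hj] using hgz.2 j hj

end VanishingAt

section Interpolation

variable {k X ι : Type*} [Field k]

theorem exists_forall_mem_eq_of_forall_exists_peak {M : Submodule k (X → k)} {z : ι → X}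
    {s : Finset ι}
    (h : ∀ i ∈ s, ∃ w ∈ M, w (z i) ≠ 0 ∧ ∀ j ∈ s, j ≠ i → w (z j) = 0) (v : ι → k) :
    ∃ u ∈ M, ∀ i ∈ s, u (z i) = v i := by
  classical
  choose! w hwM hw hw0 using h
  refine ⟨∑ i ∈ s, (v i / w i (z i)) • w i,
    M.sum_mem fun i hi => M.smul_mem _ (hwM i hi), fun j hj => ?_⟩
  rw [Finset.sum_apply, Finset.sum_eq_single_of_mem j hj fun i hi hij => by
    simp [hw0 i hi j hj hij.symm]]
  simp [hw j hj]

theorem exists_even_offsets {Z : Set ℤ} (hZ : Z.Finite) (b : ℕ) : ∃ c : ℕ, ∀ m n : ℕ, m + c ≤ n →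
    ∀ x : ℤ, ∃ Y : Finset ℕ, #Y = b ∧
      ∀ y ∈ Y, m ≤ y ∧ y + 1 < n ∧ y % 2 = m % 2 ∧ x - y ∉ Z := by
  classical
  refine ⟨2 * (#hZ.toFinset + b), fun m n hmn x => ?_⟩
  let A := (Finset.range ((n - m) / 2)).image fun i => m + 2 * i
  have hA : #hZ.toFinset + b ≤ #A := by
    rw [Finset.card_image_of_injective _ fun i j (hij : m + 2 * i = m + 2 * j) => by omega,
      Finset.card_range]
    omega
  have hbad : #{y ∈ A | x - (y : ℕ) ∈ Z} ≤ #hZ.toFinset :=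
    Finset.card_le_card_of_injOn (fun y => x - y)
      (fun y hy => by simpa using (Finset.mem_filter.1 hy).2)
      fun y _ y' _ hyy' => by simpa using hyy'
  have hgood : b ≤ #{y ∈ A | x - (y : ℕ) ∉ Z} := by
    have := A.card_filter_add_card_filter_not fun y : ℕ => x - y ∈ Z
    omega
  obtain ⟨Y, hY, rfl⟩ := Finset.exists_subset_card_eq hgood
  refine ⟨Y, rfl, fun y hy => ?_⟩
  obtain ⟨hyA, hyZ⟩ := Finset.mem_filter.1 (hY hy)
  obtain ⟨i, hi, rfl⟩ := Finset.mem_image.1 hyA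
  rw [Finset.mem_range] at hi
  exact ⟨by omega, by omega, by omega, hyZ⟩

theorem card_union_image_succ_of_mod_two {Y : Finset ℕ} {r : ℕ} (hY : ∀ y ∈ Y, y % 2 = r) :
    #(Y ∪ Y.image (· + 1)) = 2 * #Y := by
  rw [Finset.card_union_of_disjoint, Finset.card_image_of_injective _ (add_left_injective 1),
    two_mul]
  rw [Finset.disjoint_right]
  rintro _ hy' hy
  obtain ⟨y, hyY, rfl⟩ := Finset.mem_image.1 hy'
  have hpar := hY y hyY
  have hpar' := hY _ hy
  omega

end Interpolation

theorem prod_mem_pow_card {k B ι : Type*} [CommSemiring k] [CommSemiring B] [Algebra k B]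
    {F : Submodule k B} {s : Finset ι} {f : ι → B} (hf : ∀ i ∈ s, f i ∈ F) :
    ∏ i ∈ s, f i ∈ F ^ #s := by
  rw [← mul_one #s, ← smul_eq_mul, ← Finset.sum_const]
  exact SetLike.prod_mem_graded (A := fun n : ℕ => F ^ n) _ _ fun i hi => by simpa using hf i hi

/-- A finite-dimensional, shift invariant space of functions on `ℤ` which contains the polynomials
of degree at most one and whose powers satisfy a Skolem–Mahler–Lech theorem. The function in
`exists_vanish` kills two consecutive integers, which no polynomial of degree one does. -/
structure IsSymbolSpace {k : Type*} [Field k] (F : Submodule k (ℤ → k)) : Prop where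
  fg : F.FG
  one_mem : 1 ∈ F
  intCast_mem : Int.cast ∈ F
  shift_mem : ∀ f ∈ F, ∀ l : ℤ, (fun j => f (j + l)) ∈ F
  finite_zeros : ∀ n : ℕ, ∀ f ∈ F ^ n, f ≠ 0 → {j | f j = 0}.Finite
  exists_vanish : ∃ f ∈ F, f ≠ 0 ∧ f 0 = 0 ∧ f 1 = 0

namespace IsSymbolSpace

variable {k : Type*} [Field k] {F : Submodule k (ℤ → k)}

theorem one_le (hF : IsSymbolSpace F) : 1 ≤ F :=
  Submodule.one_le.2 hF.one_mem

theorem intCast_sub_mem_vanishingAt (hF : IsSymbolSpace F) (c : ℤ) :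
    (fun j : ℤ => ((j - c : ℤ) : k)) ∈ vanishingAt F c := by
  convert sub_apply_mem_vanishingAt hF.one_mem hF.intCast_mem c using 1
  ext j
  simp

theorem exists_mem_pow_card_vanishing_pairs (hF : IsSymbolSpace F) {u : ℤ → k} (hu : u ∈ F)
    (hu₀ : u 0 = 0) (hu₁ : u 1 = 0) {Y : Finset ℕ} {x : ℤ} (hY : ∀ y ∈ Y, u (x - y) ≠ 0) :
    ∃ v ∈ F ^ #Y, v x ≠ 0 ∧ ∀ j ∈ Y ∪ Y.image (· + 1), v (j : ℕ) = 0 := by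
  refine ⟨∏ y ∈ Y, fun j => u (j + -y), prod_mem_pow_card fun y _ => hF.shift_mem u hu _, ?_,
    fun j hj => ?_⟩
  · rw [Finset.prod_apply, Finset.prod_ne_zero_iff]
    exact hY
  · rw [Finset.prod_apply, Finset.prod_eq_zero_iff]
    rcases Finset.mem_union.1 hj with hj | hj
    · exact ⟨j, hj, by simp [hu₀]⟩
    · obtain ⟨y, hy, rfl⟩ := Finset.mem_image.1 hj
      exact ⟨y, hy, by simp [hu₁]⟩

variable [CharZero k]

theorem mem_prod_vanishingAt_iff (hF : IsSymbolSpace F) {s : Finset ℕ} {g : ℤ → k} :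
    g ∈ ∏ j ∈ s, vanishingAt F j ↔ g ∈ F ^ #s ∧ ∀ j ∈ s, g j = 0 :=
  _root_.mem_prod_vanishingAt_iff hF.one_mem hF.intCast_mem
    (Int.cast_injective.comp Nat.cast_injective)

theorem exists_mem_pow_card_vanishing (hF : IsSymbolSpace F) (s : Finset ℕ) :
    ∃ w ∈ F ^ #s, ∀ j : ℕ, w j = 0 ↔ j ∈ s := by
  refine ⟨∏ y ∈ s, fun j : ℤ => ((j - y : ℤ) : k), ?_, fun j => ?_⟩
  · exact prod_mem_pow_card fun y _ => (hF.intCast_sub_mem_vanishingAt y).1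
  · simp [Finset.prod_apply, Finset.prod_eq_zero_iff, sub_eq_zero]

/-- Each of the `b` translates of the function from `exists_vanish` kills two points of the interval
at the cost of a single degree; linear factors kill the remaining points. -/
theorem exists_peak (hF : IsSymbolSpace F) (b : ℕ) : ∃ c : ℕ, ∀ m n : ℕ, m + c ≤ n →
    ∀ x : ℕ, ∃ w ∈ F ^ (n - m - b), w x ≠ 0 ∧ ∀ y ∈ Finset.Ico m n, y ≠ x → w y = 0 := by
  obtain ⟨u, hu, hu0, hu₀, hu₁⟩ := hF.exists_vanish
  obtain ⟨c, hc⟩ := exists_even_offsets (hF.finite_zeros 1 u (by rwa [pow_one]) hu0) b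
  refine ⟨c, fun m n hmn x => ?_⟩
  obtain ⟨Y, rfl, hY⟩ := hc m n hmn x
  obtain ⟨v, hv, hvx, hvP⟩ :=
    hF.exists_mem_pow_card_vanishing_pairs hu hu₀ hu₁ fun y hy => (hY y hy).2.2.2
  set P := Y ∪ Y.image (· + 1)
  have hPsub : P ⊆ Finset.Ico m n := by
    refine Finset.union_subset (fun y hy => ?_) (Finset.image_subset_iff.2 fun y hy => ?_) <;>
    · have := hY y hy
      rw [Finset.mem_Ico]
      omega
  have hPcard : #P = 2 * #Y := card_union_image_succ_of_mod_two fun y hy => (hY y hy).2.2.1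
  let T := (Finset.Ico m n \ P).erase x
  have hT : #Y + #T ≤ n - m - #Y := by
    have hle : #T ≤ #(Finset.Ico m n \ P) := Finset.card_erase_le
    have hPle := Finset.card_le_card hPsub
    rw [Finset.card_sdiff_of_subset hPsub] at hle
    rw [Nat.card_Ico] at hle hPle
    omega
  obtain ⟨w, hw, hw0⟩ := hF.exists_mem_pow_card_vanishing T
  refine ⟨v * w, pow_le_pow_right' hF.one_le hT ?_, mul_ne_zero hvx ?_, fun y hy hyx => ?_⟩
  · rw [pow_add]
    exact Submodule.mul_mem_mul hv hw
  · simp [hw0, T]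
  · rw [Pi.mul_apply]
    by_cases hyP : y ∈ P
    · rw [hvP y hyP, zero_mul]
    · rw [(hw0 y).2 (by simp [T, hyx, hyP, Finset.mem_Ico.1 hy]), mul_zero]

theorem exists_interpolation (hF : IsSymbolSpace F) (b : ℕ) : ∃ c : ℕ, ∀ m n : ℕ, m + c ≤ n →
    ∀ v : ℕ → k, ∃ u ∈ F ^ (n - m - b), ∀ j ∈ Finset.Ico m n, u j = v j := by
  obtain ⟨c, hc⟩ := hF.exists_peak b
  exact ⟨c, fun m n hmn => exists_forall_mem_eq_of_forall_exists_peak fun x _ => hc m n hmn x⟩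

theorem pow_le_prod_vanishingAt_sup (hF : IsSymbolSpace F) {b : ℕ} {f : ℤ → k} (hf : f ∈ F ^ b)
    (hf0 : ∀ j : ℕ, b ≤ j → f j ≠ 0) : ∃ c : ℕ, ∀ m n : ℕ, b ≤ m → m + c ≤ n →
      F ^ (n - m) ≤
        (∏ j ∈ Finset.Ico m n, vanishingAt F j) ⊔ Submodule.span k {f} * F ^ (n - m - b) := by
  obtain ⟨c, hc⟩ := hF.exists_interpolation b
  refine ⟨c + b, fun m n hbm hmn g hg => ?_⟩
  obtain ⟨u, hu, huv⟩ := hc m n (by omega) fun j => g j / f j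
  refine Submodule.mem_sup.2 ⟨g - f * u, hF.mem_prod_vanishingAt_iff.2 ⟨?_, fun j hj => ?_⟩,
    f * u, Submodule.mem_span_singleton_mul.2 ⟨u, hu, rfl⟩, sub_add_cancel _ _⟩
  · rw [Nat.card_Ico]
    refine Submodule.sub_mem _ hg ?_
    rw [← Nat.add_sub_cancel' (show b ≤ n - m by omega), pow_add]
    exact Submodule.mul_mem_mul hf hu
  · have hfj := hf0 j (hbm.trans (Finset.mem_Ico.1 hj).1)
    rw [Pi.sub_apply, Pi.mul_apply, huv j hj, mul_div_cancel₀ _ hfj, sub_self]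

end IsSymbolSpace

section Rees

variable {k B : Type*} [CommRing k] [CommRing B] [Algebra k B]

/-- The Rees algebra `⨁ Fⁿ Xⁿ` of a submodule `F` of a commutative algebra. Unlike Mathlib's
`reesAlgebra`, it is attached to a `k`-submodule rather than to an ideal. -/
def reesSubalgebra (F : Submodule k B) : Subalgebra k B[X] where
  carrier := {P | ∀ n, P.coeff n ∈ F ^ n}
  add_mem' hP hQ n := by
    rw [coeff_add]
    exact Submodule.add_mem _ (hP n) (hQ n)
  mul_mem' hP hQ n := by
    rw [coeff_mul]
    refine Submodule.sum_mem _ fun i hi => ?_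
    rw [← Finset.HasAntidiagonal.mem_antidiagonal.1 hi, pow_add]
    exact Submodule.mul_mem_mul (hP _) (hQ _)
  algebraMap_mem' r n := by
    rw [Polynomial.algebraMap_apply, coeff_C]
    split_ifs with hn
    · subst hn
      exact Submodule.algebraMap_mem r
    · exact Submodule.zero_mem _

theorem monomial_mem_reesSubalgebra {F : Submodule k B} {n : ℕ} {g : B} (hg : g ∈ F ^ n) :
    monomial n g ∈ reesSubalgebra F := fun m => by
  rw [coeff_monomial]
  split_ifs with h
  · exact h ▸ hg
  · exact Submodule.zero_mem _

theorem reesSubalgebra_span (S : Set B) :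
    reesSubalgebra (Submodule.span k S) = Algebra.adjoin k (monomial 1 '' S) := by
  refine le_antisymm (fun P hP => ?_) (Algebra.adjoin_le ?_)
  · have hle : Submodule.span k S ≤
        (Algebra.adjoin k (monomial 1 '' S)).toSubmodule.comap
          ((monomial 1 : B →ₗ[B] B[X]).restrictScalars k) :=
      Submodule.span_le.2 fun g hg => Algebra.subset_adjoin ⟨g, hg, rfl⟩
    have hmon {n : ℕ} {g : B} (hg : g ∈ Submodule.span k S ^ n) :
        monomial n g ∈ Algebra.adjoin k (monomial 1 '' S) := by
      induction hg using Submodule.pow_induction_on_left' with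
      | algebraMap r =>
        rw [monomial_zero_left, ← Polynomial.algebraMap_apply]
        exact Subalgebra.algebraMap_mem _ r
      | add x y i _ _ hx hy =>
        rw [map_add]
        exact Subalgebra.add_mem _ hx hy
      | mem_mul m hm i x _ hx =>
        rw [Nat.succ_eq_add_one, add_comm, ← monomial_mul_monomial]
        exact Subalgebra.mul_mem _ (hle hm) hx
    rw [P.as_sum_support]
    exact Subalgebra.sum_mem _ fun n _ => hmon (hP n)
  · rintro _ ⟨g, hg, rfl⟩
    exact monomial_mem_reesSubalgebra (by simpa using Submodule.subset_span hg)

theorem isNoetherianRing_reesSubalgebra [IsNoetherianRing k] {F : Submodule k B} (hF : F.FG) :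
    IsNoetherianRing (reesSubalgebra F) := by
  obtain ⟨S, rfl⟩ := hF
  have hfg : (reesSubalgebra (Submodule.span k (S : Set B))).FG :=
    Subalgebra.fg_def.2 ⟨_, S.finite_toSet.image _, (reesSubalgebra_span _).symm⟩
  have := (Subalgebra.fg_iff_finiteType _).1 hfg
  exact Algebra.FiniteType.isNoetherianRing k _

/-- The graded ideal `⨁ Wₙ Xⁿ` of the Rees algebra. -/
def reesIdeal {F : Submodule k B} (W : ℕ → Submodule k B)
    (hW : ∀ i j, F ^ i * W j ≤ W (i + j)) : Ideal (reesSubalgebra F) where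
  carrier := {P | ∀ n, (P : B[X]).coeff n ∈ W n}
  add_mem' {P Q} hP hQ n := by
    rw [Subalgebra.coe_add, coeff_add]
    exact Submodule.add_mem _ (hP n) (hQ n)
  zero_mem' n := (W n).zero_mem
  smul_mem' Q P hP n := by
    rw [smul_eq_mul, Subalgebra.coe_mul, coeff_mul]
    refine Submodule.sum_mem _ fun i hi => ?_
    rw [← Finset.HasAntidiagonal.mem_antidiagonal.1 hi]
    exact hW _ _ (Submodule.mul_mem_mul (Q.2 _) (hP _))

theorem exists_forall_le_iSup_pow_mul [IsNoetherianRing k] {F : Submodule k B} (hF : F.FG)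
    {L : ℕ → Submodule k B} (hL : ∀ n, L n ≤ F ^ n) :
    ∃ N, ∀ n, L n ≤ ⨆ (m : ℕ) (_ : m ≤ N ∧ m ≤ n), F ^ (n - m) * L m := by
  let W (N n : ℕ) : Submodule k B := ⨆ (m : ℕ) (_ : m ≤ N ∧ m ≤ n), F ^ (n - m) * L m
  have hleW {N n m : ℕ} (hm : m ≤ N ∧ m ≤ n) : F ^ (n - m) * L m ≤ W N n :=
    le_iSup₂_of_le (f := fun m _ => F ^ (n - m) * L m) m hm le_rfl
  have hW (N i j : ℕ) : F ^ i * W N j ≤ W N (i + j) := by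
    simp only [W, Submodule.mul_iSup]
    refine iSup₂_le fun m hm => ?_
    rw [← mul_assoc, ← pow_add, ← Nat.add_sub_assoc hm.2]
    exact hleW ⟨hm.1, by omega⟩
  let I : ℕ →o Ideal (reesSubalgebra F) :=
    { toFun N := reesIdeal (W N) (hW N)
      monotone' N N' hN P hP n :=
        (iSup₂_le fun m hm => hleW ⟨hm.1.trans hN, hm.2⟩ : W N n ≤ W N' n) (hP n) }
  obtain ⟨N, hN⟩ :=
    monotone_stabilizes_iff_noetherian.2 (isNoetherianRing_reesSubalgebra hF) I
  refine ⟨N, fun n g hg => ?_⟩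
  let P : reesSubalgebra F := ⟨monomial n g, monomial_mem_reesSubalgebra (hL n hg)⟩
  have hP : P ∈ I (max N n) := fun m => by
    change (monomial n g).coeff m ∈ W (max N n) m
    rw [coeff_monomial]
    split_ifs with h
    · subst h
      exact hleW ⟨le_max_right _ _, le_rfl⟩ (by simpa using hg)
    · exact Submodule.zero_mem _
  rw [← hN _ (le_max_left _ _)] at hP
  simpa [P] using hP n

end Rees

theorem prod_Ico_vanishingAt_mul_le {k : Type*} [Field k] {F : Submodule k (ℤ → k)}
    {L : ℕ → Submodule k (ℤ → k)} (hL : ∀ n : ℕ, vanishingAt F n * L n ≤ L (n + 1)) {m n : ℕ}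
    (hmn : m ≤ n) : (∏ j ∈ Finset.Ico m n, vanishingAt F j) * L m ≤ L n := by
  induction n, hmn using Nat.le_induction with
  | base => simp
  | succ n hmn ih =>
    rw [Finset.prod_Ico_succ_top hmn, mul_comm (∏ j ∈ _, _), mul_assoc]
    exact (mul_le_mul' le_rfl ih).trans (hL n)

namespace IsSymbolSpace

variable {k : Type*} [Field k] [CharZero k] {F : Submodule k (ℤ → k)}

theorem exists_mem_forall_apply_ne_zero (hF : IsSymbolSpace F) {L : ℕ → Submodule k (ℤ → k)}
    (hLF : ∀ n, L n ≤ F ^ n) (hL : ∀ n : ℕ, vanishingAt F n * L n ≤ L (n + 1)) {m : ℕ}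
    (hm : L m ≠ ⊥) : ∃ b, ∃ f ∈ L b, ∀ j : ℕ, b ≤ j → f j ≠ 0 := by
  obtain ⟨f₀, hf₀, hf₀0⟩ := (Submodule.ne_bot_iff _).1 hm
  have hstep (n : ℕ) (hmn : m ≤ n) : ∃ f ∈ L n, ∀ j : ℕ, n ≤ j → f₀ j ≠ 0 → f j ≠ 0 := by
    induction n, hmn using Nat.le_induction with
    | base => exact ⟨f₀, hf₀, fun _ _ h => h⟩
    | succ n _ ih =>
      obtain ⟨f, hf, hfj⟩ := ih
      refine ⟨_, hL n (Submodule.mul_mem_mul (hF.intCast_sub_mem_vanishingAt n) hf),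
        fun j hj hj0 => mul_ne_zero ?_ (hfj j (by omega) hj0)⟩
      exact Int.cast_ne_zero.2 (sub_ne_zero.2 (by omega))
  obtain ⟨M, hM⟩ := (hF.finite_zeros m f₀ (hLF m hf₀) hf₀0).bddAbove
  obtain ⟨f, hf, hfj⟩ := hstep (max m (M + 1).toNat) (le_max_left _ _)
  refine ⟨_, f, hf, fun j hj => hfj j hj fun hj0 => ?_⟩
  have hjM : (j : ℤ) ≤ M := hM hj0
  omega

theorem exists_forall_le_mul_sup_span (hF : IsSymbolSpace F) {L : ℕ → Submodule k (ℤ → k)}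
    (hLF : ∀ n, L n ≤ F ^ n) (hL : ∀ n : ℕ, vanishingAt F n * L n ≤ L (n + 1)) {b : ℕ} {f : ℤ → k}
    (hf : f ∈ L b) (hf0 : ∀ j : ℕ, b ≤ j → f j ≠ 0) : ∃ N, ∀ n ≥ N,
      L (n + 1) ≤ vanishingAt F n * L n ⊔ Submodule.span k {f} * F ^ (n + 1 - b) := by
  obtain ⟨c, hc⟩ := hF.pow_le_prod_vanishingAt_sup (hLF b hf) hf0
  obtain ⟨N, hN⟩ := exists_forall_le_iSup_pow_mul hF.fg (L := fun n => ⨆ _ : b ≤ n, L n)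
    fun n => iSup_le fun _ => hLF n
  refine ⟨N + b + c, fun n hn => ?_⟩
  have hLn : L (n + 1) ≤ ⨆ _ : b ≤ n + 1, L (n + 1) := le_iSup_of_le (by omega) le_rfl
  refine hLn.trans ((hN (n + 1)).trans (iSup₂_le fun m hm => ?_))
  rw [Submodule.mul_iSup]
  refine iSup_le fun hbm => ?_
  calc F ^ (n + 1 - m) * L m
    _ ≤ ((∏ j ∈ Finset.Ico m (n + 1), vanishingAt F j) ⊔
          Submodule.span k {f} * F ^ (n + 1 - m - b)) * L m :=
      mul_le_mul' (hc m (n + 1) hbm (by omega)) le_rfl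
    _ = vanishingAt F n * ((∏ j ∈ Finset.Ico m n, vanishingAt F j) * L m) ⊔
          Submodule.span k {f} * (F ^ (n + 1 - m - b) * L m) := by
      rw [Submodule.sup_mul, Finset.prod_Ico_succ_top (by omega), mul_comm (∏ j ∈ _, _)]
      simp only [mul_assoc]
    _ ≤ vanishingAt F n * L n ⊔ Submodule.span k {f} * (F ^ (n + 1 - m - b) * F ^ m) :=
      sup_le_sup (mul_le_mul' le_rfl (prod_Ico_vanishingAt_mul_le hL (by omega)))
        (mul_le_mul' le_rfl (mul_le_mul' le_rfl (hLF m)))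
    _ ≤ vanishingAt F n * L n ⊔ Submodule.span k {f} * F ^ (n + 1 - b) := by
      rw [← pow_add]
      exact sup_le_sup le_rfl (mul_le_mul' le_rfl (pow_le_pow_right' hF.one_le (by omega)))

theorem exists_stable (hF : IsSymbolSpace F) {L : ℕ → Submodule k (ℤ → k)}
    (hLF : ∀ n, L n ≤ F ^ n) (hvan : ∀ n, ∀ f ∈ L n, ∀ j : ℕ, j < n → f j = 0)
    (hL : ∀ n : ℕ, vanishingAt F n * L n ≤ L (n + 1)) :
    ∃ N, ∀ n ≥ N, L (n + 1) ≤ vanishingAt F n * L n := by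
  by_cases hbot : ∀ n, L n = ⊥
  · exact ⟨0, fun n _ => by simp [hbot]⟩
  push Not at hbot
  obtain ⟨m, hm⟩ := hbot
  obtain ⟨b, f, hf, hf0⟩ := hF.exists_mem_forall_apply_ne_zero hLF hL hm
  obtain ⟨N, hN⟩ := hF.exists_forall_le_mul_sup_span hLF hL hf hf0
  refine ⟨max N b, fun n hn g hg => ?_⟩
  obtain ⟨g₁, hg₁, g₂, hg₂, rfl⟩ := Submodule.mem_sup.1 (hN n (le_of_max_le_left hn) hg)
  obtain ⟨u, hu, rfl⟩ := Submodule.mem_span_singleton_mul.1 hg₂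
  have hbn : b ≤ n := le_of_max_le_right hn
  have hprod : u ∈ ∏ j ∈ Finset.Ico b (n + 1), vanishingAt F j := by
    refine hF.mem_prod_vanishingAt_iff.2 ⟨by rwa [Nat.card_Ico], fun j hj => ?_⟩
    rw [Finset.mem_Ico] at hj
    have hgj := hvan _ _ hg j hj.2
    rw [Pi.add_apply, hvan _ _ (hL n hg₁) j hj.2, zero_add, Pi.mul_apply] at hgj
    exact (mul_eq_zero.1 hgj).resolve_left (hf0 j hj.1)
  rw [Finset.prod_Ico_succ_top hbn, mul_comm] at hprod
  refine Submodule.add_mem _ hg₁ ?_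
  rw [mul_comm f u]
  refine mul_le_mul' le_rfl (prod_Ico_vanishingAt_mul_le hL hbn) ?_
  rw [← mul_assoc]
  exact Submodule.mul_mem_mul hprod hf

end IsSymbolSpace

section SymbolFiltration

variable {k R M : Type*} [CommRing k] [Ring R] [Algebra k R] [AddCommGroup M] [Module k M]

/-- The elements of `R` of order less than `n`, when `sym m r` is thought of as the homogeneous
component of degree `m` of `r`. -/
def orderLT (sym : ℕ → R →ₗ[k] M) (n : ℕ) : Submodule k R :=
  ⨅ (m : ℕ) (_ : n ≤ m), LinearMap.ker (sym m)

/-- The leading symbols of degree `n` of a left ideal `I`, including zero. -/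
def leadingSymbols (sym : ℕ → R →ₗ[k] M) (I : Ideal R) (n : ℕ) : Submodule k M :=
  (I.restrictScalars k ⊓ orderLT sym (n + 1)).map (sym n)

variable {sym : ℕ → R →ₗ[k] M}

theorem mem_orderLT {n : ℕ} {r : R} : r ∈ orderLT sym n ↔ ∀ m, n ≤ m → sym m r = 0 := by
  simp only [orderLT, Submodule.mem_iInf, LinearMap.mem_ker]

theorem mem_leadingSymbols {I : Ideal R} {n : ℕ} {f : M} :
    f ∈ leadingSymbols sym I n ↔ ∃ r ∈ I, r ∈ orderLT sym (n + 1) ∧ sym n r = f := by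
  simp only [leadingSymbols, Submodule.mem_map, Submodule.mem_inf, and_assoc,
    Submodule.restrictScalars_mem]

theorem leadingSymbols_mono {I J : Ideal R} (h : I ≤ J) (n : ℕ) :
    leadingSymbols sym I n ≤ leadingSymbols sym J n :=
  Submodule.map_mono (inf_le_inf_right _ h)

theorem le_of_forall_leadingSymbols_le (hfin : ∀ r, ∃ n, r ∈ orderLT sym n)
    (hinj : ∀ r, (∀ n, sym n r = 0) → r = 0) {I J : Ideal R} (hJI : J ≤ I)
    (h : ∀ n, leadingSymbols sym I n ≤ leadingSymbols sym J n) : I ≤ J := by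
  have hlt (n : ℕ) : ∀ r ∈ I, r ∈ orderLT sym n → r ∈ J := by
    induction n with
    | zero =>
      intro r _ hr0
      rw [hinj r fun n => mem_orderLT.1 hr0 n n.zero_le]
      exact J.zero_mem
    | succ n ih =>
      intro r hr hrn
      obtain ⟨r', hr', hrn', hrr'⟩ :=
        mem_leadingSymbols.1 (h n (mem_leadingSymbols.2 ⟨r, hr, hrn, rfl⟩))
      rw [← sub_add_cancel r r']
      refine J.add_mem (ih _ (I.sub_mem hr (hJI hr')) (mem_orderLT.2 fun m hm => ?_)) hr'
      obtain rfl | hnm := hm.eq_or_lt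
      · rw [map_sub, hrr', sub_self]
      · exact mem_orderLT.1 (Submodule.sub_mem _ hrn hrn') m hnm
  intro r hr
  obtain ⟨n, hn⟩ := hfin r
  exact hlt n r hr hn

theorem exists_fg_le_leadingSymbols_le {I : Ideal R} {n : ℕ} (hfg : (leadingSymbols sym I n).FG) :
    ∃ J : Ideal R, J.FG ∧ J ≤ I ∧ leadingSymbols sym I n ≤ leadingSymbols sym J n := by
  classical
  have hspan : leadingSymbols sym I n = Submodule.span k (leadingSymbols sym I n) :=
    (Submodule.span_eq _).symm
  obtain ⟨S, hSI, hS⟩ := Submodule.fg_span_iff_fg_span_finset_subset _ |>.1 (hspan ▸ hfg)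
  choose! g hgI hgn hgx using fun f hf => mem_leadingSymbols.1 (hSI (a := f) hf)
  refine ⟨Ideal.span (S.image g), ⟨_, rfl⟩, Ideal.span_le.2 ?_, ?_⟩
  · simpa [Set.subset_def] using hgI
  · rw [hspan, hS, Submodule.span_le]
    exact fun f hf => mem_leadingSymbols.2
      ⟨g f, Ideal.subset_span (Finset.mem_image_of_mem g hf), hgn f hf, hgx f hf⟩

theorem exists_fg_le_forall_leadingSymbols_le {I : Ideal R}
    (hfg : ∀ n, (leadingSymbols sym I n).FG) (N : ℕ) : ∃ J : Ideal R, J.FG ∧ J ≤ I ∧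
      ∀ n ≤ N, leadingSymbols sym I n ≤ leadingSymbols sym J n := by
  choose J hJ hJI hIJ using fun n => exists_fg_le_leadingSymbols_le (hfg n)
  refine ⟨⨆ n ∈ Finset.range (N + 1), J n, Submodule.fg_biSup _ _ fun n _ => hJ n,
    iSup₂_le fun n _ => hJI n, fun n hn => (hIJ n).trans (leadingSymbols_mono ?_ n)⟩
  exact le_biSup J (Finset.mem_range_succ_iff.2 hn)

end SymbolFiltration

theorem IsSymbolSpace.vanishingAt_mul_leadingSymbols_le {k R : Type*} [Field k] [Ring R]
    [Algebra k R] {F : Submodule k (ℤ → k)} (hF : IsSymbolSpace F) {sym : ℕ → R →ₗ[k] (ℤ → k)}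
    (hmul : ∀ w ∈ vanishingAt F 0, ∃ a : R, ∀ n r j,
      sym (n + 1) (a * r) j = w (j - n) * sym n r j) (I : Ideal R) (n : ℕ) :
    vanishingAt F n * leadingSymbols sym I n ≤ leadingSymbols sym I (n + 1) := by
  refine Submodule.mul_le.2 fun w hw f hf => ?_
  obtain ⟨r, hr, hrn, rfl⟩ := mem_leadingSymbols.1 hf
  obtain ⟨a, ha⟩ := hmul (fun j => w (j + n))
    (mem_vanishingAt.2 ⟨hF.shift_mem w hw.1 n, by simpa using (mem_vanishingAt.1 hw).2⟩)
  refine mem_leadingSymbols.2 ⟨a * r, I.mul_mem_left a hr, mem_orderLT.2 fun m hm => ?_, ?_⟩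
  · obtain ⟨m, rfl⟩ := Nat.exists_eq_add_of_lt hm
    ext j
    rw [ha, mem_orderLT.1 hrn _ (by omega), Pi.zero_apply, mul_zero]
  · ext j
    rw [ha, sub_add_cancel, Pi.mul_apply]

theorem IsSymbolSpace.isNoetherianRing_of_symbols {k R : Type*} [Field k] [CharZero k] [Ring R]
    [Algebra k R] {F : Submodule k (ℤ → k)} (hF : IsSymbolSpace F) {sym : ℕ → R →ₗ[k] (ℤ → k)}
    (hfin : ∀ r, ∃ n, r ∈ orderLT sym n) (hinj : ∀ r, (∀ n, sym n r = 0) → r = 0)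
    (hsym : ∀ n r, sym n r ∈ F ^ n ∧ ∀ j : ℕ, j < n → sym n r j = 0)
    (hmul : ∀ w ∈ vanishingAt F 0, ∃ a : R, ∀ n r j,
      sym (n + 1) (a * r) j = w (j - n) * sym n r j) :
    IsNoetherianRing R := by
  have hpow (I : Ideal R) (n : ℕ) : leadingSymbols sym I n ≤ F ^ n :=
    Submodule.map_le_iff_le_comap.2 fun r _ => (hsym n r).1
  have hstep (I : Ideal R) := hF.vanishingAt_mul_leadingSymbols_le hmul I
  refine (isNoetherianRing_iff_ideal_fg R).2 fun I => ?_
  obtain ⟨N, hN⟩ := hF.exists_stable (hpow I)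
    (by rintro n _ ⟨r, -, rfl⟩; exact (hsym n r).2) (hstep I)
  obtain ⟨J, hJ, hJI, hIJ⟩ := exists_fg_le_forall_leadingSymbols_le
    (fun n => (hF.fg.pow n).of_le (hpow I n)) N
  suffices hle : ∀ n, leadingSymbols sym I n ≤ leadingSymbols sym J n by
    rwa [le_antisymm (le_of_forall_leadingSymbols_le hfin hinj hJI hle) hJI]
  intro n
  obtain hn | hn := le_total n N
  · exact hIJ n hn
  · induction n, hn using Nat.le_induction with
    | base => exact hIJ N le_rfl
    | succ n hn ih => exact (hN n hn).trans ((mul_le_mul' le_rfl ih).trans (hstep J n))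

section Operators

open LaurentPolynomial

variable {k : Type*} [Field k]

/-- The operator `T j ↦ g j • T (j - n)`, which is linear in its symbol `g`. -/
def weightedShift (n : ℕ) : (ℤ → k) →ₗ[k] Module.End k k[T;T⁻¹] :=
  ((AddMonoidAlgebra.basis ℤ k).constr k).toLinearMap ∘ₗ
    LinearMap.pi fun j => (LinearMap.proj j).smulRight (T (j - n))

theorem weightedShift_T (n : ℕ) (g : ℤ → k) (j : ℤ) :
    weightedShift n g (T j) = g j • T (j - n) :=
  (AddMonoidAlgebra.basis ℤ k).constr_basis k _ j

theorem eq_weightedShift_iff {n : ℕ} {g : ℤ → k} {φ : Module.End k k[T;T⁻¹]} :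
    φ = weightedShift n g ↔ ∀ j, φ (T j) = g j • T (j - n) :=
  ⟨fun h j => h ▸ weightedShift_T n g j, fun h => (AddMonoidAlgebra.basis ℤ k).ext fun j =>
    (h j).trans (weightedShift_T n g j).symm⟩

theorem weightedShift_mul (m n : ℕ) (f g : ℤ → k) :
    weightedShift m f * weightedShift n g =
      weightedShift (m + n) (fun j => f (j - n) * g j) := by
  refine eq_weightedShift_iff.2 fun j => ?_
  rw [Module.End.mul_apply, weightedShift_T, map_smul, weightedShift_T, smul_smul, mul_comm,
    Nat.cast_add, sub_add_eq_sub_sub_swap]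

theorem weightedShift_zero_one : weightedShift 0 (1 : ℤ → k) = 1 :=
  (eq_weightedShift_iff.2 fun j => by simp).symm

theorem coeff_weightedShift (n : ℕ) (g : ℤ → k) (f : k[T;T⁻¹]) (i : ℤ) :
    (weightedShift n g f).coeff i = g (i + n) * f.coeff (i + n) := by
  let coeffₗ (i : ℤ) := (AddMonoidAlgebra.basis ℤ k).coord i
  suffices h : coeffₗ i ∘ₗ weightedShift n g = g (i + n) • coeffₗ (i + n) from
    LinearMap.congr_fun h f
  refine (AddMonoidAlgebra.basis ℤ k).ext fun j => ?_
  change (weightedShift n g (T j)).coeff i = g (i + n) * (T j : k[T;T⁻¹]).coeff (i + n)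
  rw [weightedShift_T, AddMonoidAlgebra.coeff_smul_apply, T_apply, T_apply]
  obtain rfl | hj := eq_or_ne j (i + n)
  · simp
  · rw [if_neg (by omega), if_neg hj, smul_zero, mul_zero]

/-- The symbol of the homogeneous component of degree `-n` of an operator. -/
def component (n : ℕ) : Module.End k k[T;T⁻¹] →ₗ[k] (ℤ → k) where
  toFun φ j := (φ (T j)).coeff (j - n)
  map_add' _ _ := rfl
  map_smul' _ _ := rfl

theorem component_apply (n : ℕ) (φ : Module.End k k[T;T⁻¹]) (j : ℤ) :
    component n φ j = (φ (T j)).coeff (j - n) :=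
  rfl

theorem component_weightedShift (m n : ℕ) (g : ℤ → k) :
    component m (weightedShift n g) = if m = n then g else 0 := by
  ext j
  rw [component_apply, weightedShift_T, AddMonoidAlgebra.coeff_smul_apply, T_apply]
  obtain rfl | hmn := eq_or_ne m n
  · simp
  · rw [if_neg (by omega), if_neg hmn, smul_zero, Pi.zero_apply]

theorem component_sum_weightedShift (n : ℕ) (s : Finset ℕ) (g : ℕ → ℤ → k) :
    component n (∑ m ∈ s, weightedShift m (g m)) = if n ∈ s then g n else 0 := by
  simp only [map_sum, component_weightedShift, Finset.sum_ite_eq]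

theorem component_weightedShift_mul (n : ℕ) (w : ℤ → k) (φ : Module.End k k[T;T⁻¹]) (j : ℤ) :
    component (n + 1) (weightedShift 1 w * φ) j = w (j - n) * component n φ j := by
  rw [component_apply, Module.End.mul_apply, coeff_weightedShift, component_apply, Nat.cast_succ,
    Nat.cast_one, sub_add_eq_sub_sub, sub_add_cancel]

theorem component_mul_weightedShift (n : ℕ) (w : ℤ → k) (φ : Module.End k k[T;T⁻¹]) (j : ℤ) :
    component (n + 1) (φ * weightedShift 1 w) j = w j * component n φ (j - 1) := by
  rw [component_apply, Module.End.mul_apply, weightedShift_T, map_smul,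
    AddMonoidAlgebra.coeff_smul_apply, smul_eq_mul, component_apply, Nat.cast_succ (R := ℤ) n,
    Nat.cast_one, sub_add_eq_sub_sub_swap]

/-- The algebra of operators generated by the `weightedShift 1 w` for `w ∈ F` with `w 0 = 0`. -/
def symbolAlgebra (F : Submodule k (ℤ → k)) : Subalgebra k (Module.End k k[T;T⁻¹]) :=
  Algebra.adjoin k ((vanishingAt F 0).map (weightedShift 1))

theorem weightedShift_mem_symbolAlgebra {F : Submodule k (ℤ → k)} {w : ℤ → k}
    (hw : w ∈ vanishingAt F 0) : weightedShift 1 w ∈ symbolAlgebra F :=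
  Algebra.subset_adjoin (Submodule.mem_map_of_mem hw)

namespace IsSymbolSpace

variable {F : Submodule k (ℤ → k)}

theorem symbolAlgebra_le_iSup (hF : IsSymbolSpace F) : (symbolAlgebra F).toSubmodule ≤
    ⨆ n : ℕ, (∏ i ∈ Finset.range n, vanishingAt F i).map (weightedShift n) := by
  rw [symbolAlgebra, Algebra.adjoin_eq_span, Submodule.span_le]
  intro φ hφ
  suffices h : ∃ n : ℕ, φ ∈ (∏ i ∈ Finset.range n, vanishingAt F i).map (weightedShift n) from
    Submodule.mem_iSup_of_mem h.choose h.choose_spec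
  induction hφ using Submonoid.closure_induction_left with
  | one => exact ⟨0, 1, by simp, weightedShift_zero_one⟩
  | mul_left x hx y _ ih =>
    obtain ⟨w, hw, rfl⟩ := hx
    obtain ⟨n, g, hg, rfl⟩ := ih
    refine ⟨n + 1, _, ?_, by rw [weightedShift_mul, add_comm 1]⟩
    rw [Finset.prod_range_succ, mul_comm (∏ i ∈ _, _)]
    exact Submodule.mul_mem_mul (mem_vanishingAt.2
      ⟨by simpa [sub_eq_add_neg] using hF.shift_mem w hw.1 (-n), by simpa using hw.2⟩) hg

theorem exists_eq_sum_weightedShift (hF : IsSymbolSpace F) (φ : symbolAlgebra F) :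
    ∃ (s : Finset ℕ) (g : ℕ → ℤ → k), (∀ n, g n ∈ ∏ i ∈ Finset.range n, vanishingAt F i) ∧
      (φ : Module.End k k[T;T⁻¹]) = ∑ n ∈ s, weightedShift n (g n) := by
  obtain ⟨f, hf, hφ⟩ :=
    (Submodule.mem_iSup_iff_exists_finsupp _ _).1 (hF.symbolAlgebra_le_iSup φ.2)
  choose g hg hgf using hf
  exact ⟨f.support, g, hg, by simp only [hgf, ← hφ, Finsupp.sum]⟩

theorem component_mem_prod_vanishingAt (hF : IsSymbolSpace F) (φ : symbolAlgebra F) (n : ℕ) :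
    component n (φ : Module.End k k[T;T⁻¹]) ∈ ∏ i ∈ Finset.range n, vanishingAt F i := by
  obtain ⟨s, g, hg, hφ⟩ := hF.exists_eq_sum_weightedShift φ
  rw [hφ, component_sum_weightedShift]
  split_ifs
  · exact hg n
  · exact Submodule.zero_mem _

theorem exists_forall_component_eq_zero (hF : IsSymbolSpace F) (φ : symbolAlgebra F) :
    ∃ N, ∀ n, N ≤ n → component n (φ : Module.End k k[T;T⁻¹]) = 0 := by
  obtain ⟨s, g, -, hφ⟩ := hF.exists_eq_sum_weightedShift φ
  refine ⟨s.sup id + 1, fun n hn => ?_⟩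
  rw [hφ, component_sum_weightedShift, if_neg fun hns => ?_]
  exact absurd (Finset.le_sup (f := id) hns) (by simpa using hn)

theorem eq_zero_of_forall_component_eq_zero (hF : IsSymbolSpace F) {φ : symbolAlgebra F}
    (h : ∀ n, component n (φ : Module.End k k[T;T⁻¹]) = 0) : φ = 0 := by
  obtain ⟨s, g, -, hφ⟩ := hF.exists_eq_sum_weightedShift φ
  refine Subtype.ext (hφ.trans (Finset.sum_eq_zero fun n hn => ?_))
  have hgn := h n
  rw [hφ, component_sum_weightedShift, if_pos hn] at hgn
  rw [hgn, map_zero]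

theorem component_mem_pow [CharZero k] (hF : IsSymbolSpace F) (φ : symbolAlgebra F) (n : ℕ) :
    component n (φ : Module.End k k[T;T⁻¹]) ∈ F ^ n ∧
      ∀ j : ℕ, j < n → component n (φ : Module.End k k[T;T⁻¹]) j = 0 := by
  simpa using hF.mem_prod_vanishingAt_iff.1 (hF.component_mem_prod_vanishingAt φ n)

theorem isNoetherianRing_symbolAlgebra [CharZero k] (hF : IsSymbolSpace F) :
    IsNoetherianRing (symbolAlgebra F) := by
  refine hF.isNoetherianRing_of_symbols
    (sym := fun n => component n ∘ₗ (symbolAlgebra F).val.toLinearMap)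
    (fun φ => (hF.exists_forall_component_eq_zero φ).imp fun N => mem_orderLT.2)
    (fun φ => hF.eq_zero_of_forall_component_eq_zero) (fun n φ => hF.component_mem_pow φ n)
    fun w hw => ⟨⟨_, weightedShift_mem_symbolAlgebra hw⟩, fun n φ j => ?_⟩
  exact component_weightedShift_mul n w φ j

end IsSymbolSpace

theorem comp_mem_pow {k X Y : Type*} [Field k] {F : Submodule k (Y → k)} {G : Submodule k (X → k)}
    {σ : X → Y} (h : ∀ f ∈ F, f ∘ σ ∈ G) {n : ℕ} {f : Y → k} (hf : f ∈ F ^ n) : f ∘ σ ∈ G ^ n := by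
  let e : (Y → k) →ₐ[k] (X → k) := AlgHom.pi fun x => Pi.evalAlgHom k _ (σ x)
  have hFG : F.map e.toLinearMap ≤ G := Submodule.map_le_iff_le_comap.2 h
  have hef := Submodule.mem_map_of_mem (f := e.toLinearMap) hf
  rw [Submodule.map_pow] at hef
  exact pow_le_pow_left' hFG n hef

/-- The functions `j ↦ f (-j)` for `f` in `F`. -/
def reflect (F : Submodule k (ℤ → k)) : Submodule k (ℤ → k) :=
  F.comap (LinearMap.funLeft k k Neg.neg)

theorem mem_reflect {F : Submodule k (ℤ → k)} {f : ℤ → k} : f ∈ reflect F ↔ f ∘ Neg.neg ∈ F :=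
  Iff.rfl

namespace IsSymbolSpace

variable {F : Submodule k (ℤ → k)}

theorem comp_sub_mem_reflect (hF : IsSymbolSpace F) {f : ℤ → k} (hf : f ∈ F) (c : ℤ) :
    f ∘ (c - ·) ∈ reflect F := by
  rw [mem_reflect]
  convert hF.shift_mem f hf c using 1
  ext j
  simp [add_comm]

theorem reflect (hF : IsSymbolSpace F) : IsSymbolSpace (reflect F) where
  fg := (hF.fg.map (LinearMap.funLeft k k Neg.neg)).of_le fun f hf =>
    ⟨f ∘ Neg.neg, hf, by ext; simp [LinearMap.funLeft_apply]⟩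
  one_mem := hF.one_mem
  intCast_mem := by
    rw [mem_reflect]
    convert F.neg_mem hF.intCast_mem using 1
    ext j
    exact Int.cast_neg j
  shift_mem f hf l := by
    rw [mem_reflect]
    convert hF.shift_mem _ hf (-l) using 1
    ext j
    exact congr_arg f (by simp [add_comm])
  finite_zeros n f hf hf0 := by
    have hfin := hF.finite_zeros n _ (comp_mem_pow (fun _ => mem_reflect.1) hf) fun h => hf0 ?_
    · exact (hfin.preimage neg_injective.injOn).subset fun j hj => by simpa using hj
    · ext j
      simpa using congr_fun h (-j)
  exists_vanish := by
    obtain ⟨f, hf, hf0, hf₀, hf₁⟩ := hF.exists_vanish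
    refine ⟨f ∘ (1 - ·), hF.comp_sub_mem_reflect hf 1, fun h => hf0 ?_, by simpa, by simpa⟩
    ext j
    simpa using congr_fun h (1 - j)

/-- Reading the symbols of operators backwards, via `j ↦ n - 1 - j` in degree `n`, exchanges left
and right multiplication. -/
theorem isNoetherianRing_op_symbolAlgebra [CharZero k] (hF : IsSymbolSpace F) :
    IsNoetherianRing (symbolAlgebra F)ᵐᵒᵖ := by
  have hrev {n : ℕ} {f : ℤ → k} (h : f ∘ (n - 1 - ·) = 0) : f = 0 := by
    ext j
    simpa using congr_fun h (n - 1 - j)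
  refine hF.reflect.isNoetherianRing_of_symbols
    (sym := fun n => LinearMap.funLeft k k (n - 1 - ·) ∘ₗ component n ∘ₗ
      (symbolAlgebra F).val.toLinearMap ∘ₗ (MulOpposite.opLinearEquiv k).symm.toLinearMap)
    (fun φ => ?_) (fun φ hφ => ?_) (fun n φ => ⟨?_, fun j hj => ?_⟩) fun w hw => ?_
  · obtain ⟨N, hN⟩ := hF.exists_forall_component_eq_zero φ.unop
    refine ⟨N, mem_orderLT.2 fun n hn => ?_⟩
    ext j
    exact congr_fun (hN n hn) _
  · exact MulOpposite.unop_injective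
      (hF.eq_zero_of_forall_component_eq_zero fun n => hrev (hφ n))
  · exact comp_mem_pow (fun f hf => hF.comp_sub_mem_reflect hf _) (hF.component_mem_pow φ.unop n).1
  · have h := (hF.component_mem_pow φ.unop n).2 (n - 1 - j) (by omega)
    rwa [Nat.cast_sub (by omega), Nat.cast_sub (by omega), Nat.cast_one] at h
  · have hw' : w ∘ Neg.neg ∈ vanishingAt F 0 :=
      mem_vanishingAt.2 ⟨hw.1, by simpa using (mem_vanishingAt.1 hw).2⟩
    refine ⟨.op ⟨_, weightedShift_mem_symbolAlgebra hw'⟩, fun n φ j => ?_⟩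
    refine (component_mul_weightedShift n (w ∘ Neg.neg) φ.unop _).trans ?_
    refine congr_arg₂ (w · * component n (φ.unop : Module.End k k[T;T⁻¹]) ·) ?_ ?_ <;>
    · push_cast
      ring

end IsSymbolSpace

end Operators

section SymbolSpace

variable {k : Type*} [Field k] {ι : Type*} {p : ι → k}

/-- The space spanned by `1`, `j` and `p i ^ j`, to which the symbols of `D₁` and of the Eulerian
derivatives `D_{p i}` belong. -/
def symbolSpace (p : ι → k) : Submodule k (ℤ → k) :=
  .span k ({1, Int.cast} ∪ Set.range fun i j => p i ^ j)

theorem symbolSpace_le_iff {V : Submodule k (ℤ → k)} :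
    symbolSpace p ≤ V ↔ 1 ∈ V ∧ Int.cast ∈ V ∧ ∀ i, (fun j : ℤ => p i ^ j) ∈ V := by
  simp [symbolSpace, Submodule.span_le, Set.subset_def, and_assoc]

theorem one_mem_symbolSpace : 1 ∈ symbolSpace p :=
  (symbolSpace_le_iff.1 le_rfl).1

theorem intCast_mem_symbolSpace : Int.cast ∈ symbolSpace p :=
  (symbolSpace_le_iff.1 le_rfl).2.1

theorem zpow_mem_symbolSpace (i : ι) : (fun j : ℤ => p i ^ j) ∈ symbolSpace p :=
  (symbolSpace_le_iff.1 le_rfl).2.2 i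

theorem vanishingAt_symbolSpace (hp1 : ∀ i, p i ≠ 1) :
    vanishingAt (symbolSpace p) 0 =
      .span k ({Int.cast} ∪ Set.range fun i j => (p i ^ j - 1) / (p i - 1)) := by
  apply le_antisymm
  · let e : (ℤ → k) →ₗ[k] (ℤ → k) := .id - (LinearMap.proj 0).smulRight 1
    suffices h : symbolSpace p ≤ Submodule.comap e
        (.span k ({Int.cast} ∪ Set.range fun i j => (p i ^ j - 1) / (p i - 1))) by
      intro f hf
      simpa [e, (mem_vanishingAt.1 hf).2] using h (mem_vanishingAt.1 hf).1
    refine symbolSpace_le_iff.2 ⟨by simp [e], ?_, fun i => ?_⟩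
    · refine Submodule.mem_comap.2 (Submodule.subset_span (.inl ?_))
      ext j
      simp [e]
    · have hi : (fun j : ℤ => (p i ^ j - 1) / (p i - 1)) ∈
          Submodule.span k ({Int.cast} ∪ Set.range fun i j => (p i ^ j - 1) / (p i - 1)) :=
        Submodule.subset_span (.inr ⟨i, rfl⟩)
      rw [Submodule.mem_comap]
      convert Submodule.smul_mem _ (p i - 1) hi using 1
      ext j
      simp [e, mul_div_cancel₀ _ (sub_ne_zero.2 (hp1 i))]
  · rw [Submodule.span_le, Set.union_subset_iff, Set.singleton_subset_iff, Set.range_subset_iff]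
    refine ⟨mem_vanishingAt.2 ⟨intCast_mem_symbolSpace, Int.cast_zero⟩, fun i =>
      mem_vanishingAt.2 ⟨?_, by simp⟩⟩
    convert Submodule.smul_mem _ (p i - 1)⁻¹
      (Submodule.sub_mem _ (zpow_mem_symbolSpace i) one_mem_symbolSpace) using 1
    ext j
    simp [div_eq_inv_mul]

theorem shift_mem_symbolSpace (hp0 : ∀ i, p i ≠ 0) {f : ℤ → k} (hf : f ∈ symbolSpace p) (l : ℤ) :
    (fun j => f (j + l)) ∈ symbolSpace p := by
  suffices h : symbolSpace p ≤ (symbolSpace p).comap (LinearMap.funLeft k k (· + l)) from h hf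
  refine symbolSpace_le_iff.2 ⟨one_mem_symbolSpace, ?_, fun i => ?_⟩
  · rw [Submodule.mem_comap]
    convert Submodule.add_mem _ intCast_mem_symbolSpace
      (Submodule.smul_mem _ (l : k) one_mem_symbolSpace) using 1
    ext j
    simp [LinearMap.funLeft_apply]
  · rw [Submodule.mem_comap]
    convert Submodule.smul_mem _ (p i ^ l) (zpow_mem_symbolSpace i) using 1
    ext j
    simp [LinearMap.funLeft_apply, zpow_add₀ (hp0 i), mul_comm]

/-- Evaluation of polynomials at the functions `j ↦ j` and `j ↦ p i ^ j`. -/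
def symbolEval (p : ι → k) : MvPolynomial ι k[X] →ₐ[k] (ℤ → k) :=
  MvPolynomial.aevalTower (Polynomial.aeval Int.cast) fun i j => p i ^ j

theorem symbolEval_eq_expPoly [Fintype ι] (P : MvPolynomial ι k[X]) (j : ℤ) :
    symbolEval p P j = expPoly (fun a : P.support => ∏ i, p i ^ a.1 i) (fun a => P.coeff a) j := by
  refine (congr_fun (MvPolynomial.eval₂_eq' _ _ P) j).trans ?_
  rw [Finset.sum_apply, ← Finset.sum_coe_sort]
  refine Finset.sum_congr rfl fun a _ => ?_
  simp [Polynomial.aeval_fn_apply, ← Finset.prod_zpow, ← zpow_natCast, zpow_comm (p _) j]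


theorem symbolSpace_pow_le_range_symbolEval (n : ℕ) :
    symbolSpace p ^ n ≤ Subalgebra.toSubmodule (symbolEval p).range := by
  have hle : symbolSpace p ≤ Subalgebra.toSubmodule (symbolEval p).range :=
    symbolSpace_le_iff.2 ⟨one_mem (symbolEval p).range,
      ⟨MvPolynomial.C X, by simp [symbolEval]⟩, fun i => ⟨MvPolynomial.X i, by simp [symbolEval]⟩⟩
  intro f hf
  induction hf using Submodule.pow_induction_on_left' with
  | algebraMap c => exact (symbolEval p).range.algebraMap_mem c
  | add _ _ _ _ _ hf hg => exact add_mem hf hg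
  | mem_mul f hf _ g _ hg => exact (symbolEval p).range.mul_mem (hle hf) hg

theorem injective_prod_pow [Fintype ι] (hp0 : ∀ i, p i ≠ 0)
    (hfree : ∀ m : ι → ℤ, ∏ i, p i ^ m i = 1 → ∀ i, m i = 0) {N : ℕ} (hN : N ≠ 0) :
    Function.Injective fun a : ι → ℕ => (∏ i, p i ^ a i) ^ N := by
  intro a b hab
  suffices h : ∏ i, p i ^ (N * (a i - b i) : ℤ) = 1 by
    ext i
    simpa [hN, sub_eq_zero] using hfree _ h i
  have hb : (∏ i, p i ^ b i) ^ N ≠ 0 :=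
    pow_ne_zero _ (Finset.prod_ne_zero_iff.2 fun i _ => pow_ne_zero _ (hp0 i))
  rw [← (div_eq_one_iff_eq hb).2 hab]
  simp_rw [← Finset.prod_pow, ← Finset.prod_div_distrib]
  refine Finset.prod_congr rfl fun i _ => ?_
  rw [mul_sub, zpow_sub₀ (hp0 i), mul_comm, zpow_mul, mul_comm, zpow_mul]
  norm_cast

theorem finite_zeros_of_mem_symbolSpace_pow [CharZero k] [Fintype ι] (hp0 : ∀ i, p i ≠ 0)
    (hfree : ∀ m : ι → ℤ, ∏ i, p i ^ m i = 1 → ∀ i, m i = 0) {n : ℕ} {f : ℤ → k}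
    (hf : f ∈ symbolSpace p ^ n) (hf0 : f ≠ 0) : {j | f j = 0}.Finite := by
  obtain ⟨P, rfl⟩ := symbolSpace_pow_le_range_symbolEval n hf
  obtain ⟨a, ha⟩ := MvPolynomial.ne_zero_iff.1 fun h : P = 0 => hf0 (by simp [h])
  simp only [AlgHom.toRingHom_eq_coe, RingHom.coe_coe, symbolEval_eq_expPoly]
  exact finite_zeros_expPoly
    (fun a => Finset.prod_ne_zero_iff.2 fun i _ => pow_ne_zero _ (hp0 i))
    (fun N hN a b hab => Subtype.ext (DFunLike.coe_injective (injective_prod_pow hp0 hfree hN hab)))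
    fun h => ha (congr_fun h ⟨a, MvPolynomial.mem_support_iff.2 ha⟩)

theorem isSymbolSpace_symbolSpace [CharZero k] [Fintype ι] [Nonempty ι] (hp0 : ∀ i, p i ≠ 0)
    (hp1 : ∀ i, p i ≠ 1)
    (hfree : ∀ m : ι → ℤ, ∏ i, p i ^ m i = 1 → ∀ i, m i = 0) : IsSymbolSpace (symbolSpace p) where
  fg := Submodule.fg_span ((Set.toFinite _).union (Set.finite_range _))
  one_mem := one_mem_symbolSpace
  intCast_mem := intCast_mem_symbolSpace
  shift_mem _ hf l := shift_mem_symbolSpace hp0 hf l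
  finite_zeros _ _ hf hf0 := finite_zeros_of_mem_symbolSpace_pow hp0 hfree hf hf0
  exists_vanish := by
    obtain ⟨i⟩ := ‹Nonempty ι›
    refine ⟨(fun j => p i ^ j) - 1 - (p i - 1) • Int.cast,
      sub_mem (sub_mem (zpow_mem_symbolSpace i) one_mem_symbolSpace)
        (Submodule.smul_mem _ _ intCast_mem_symbolSpace), fun h => ?_, by simp, by simp⟩
    have hsq : (p i - 1) ^ 2 = 0 := by
      refine Eq.trans ?_ (congr_fun h 2)
      simp only [Pi.sub_apply, zpow_ofNat, Pi.one_apply, Pi.smul_apply, Int.cast_ofNat, smul_eq_mul]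
      ring
    exact hp1 i (sub_eq_zero.1 (pow_eq_zero_iff two_ne_zero |>.1 hsq))

end SymbolSpace

section EulerianDerivatives

open LaurentPolynomial

theorem adjoin_eulerian_eq_symbolAlgebra {k ι : Type*} [Field k] {p : ι → k}
    (hp1 : ∀ i, p i ≠ 1) {D₁ : Module.End k k[T;T⁻¹]}
    (hD₁ : ∀ n : ℤ, D₁ (T n) = (n : k) • T (n - 1)) {D : ι → Module.End k k[T;T⁻¹]}
    (hD : ∀ i, ∀ n : ℤ, D i (T n) = ((p i ^ n - 1) / (p i - 1)) • T (n - 1)) :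
    Algebra.adjoin k ({D₁} ∪ Set.range D) = symbolAlgebra (symbolSpace p) := by
  have hD₁' : D₁ = weightedShift 1 Int.cast := eq_weightedShift_iff.2 hD₁
  have hD' : D = fun i => weightedShift 1 fun j => (p i ^ j - 1) / (p i - 1) :=
    funext fun i => eq_weightedShift_iff.2 (hD i)
  rw [symbolAlgebra, vanishingAt_symbolSpace hp1, Submodule.map_span, Algebra.adjoin_span,
    Set.image_union, Set.image_singleton, ← Set.range_comp, hD₁', hD']
  rfl

theorem stmt_5_general {k ι : Type*} [Field k] [CharZero k] [Fintype ι] [Nonempty ι]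
    (p : ι → k) (hp0 : ∀ i, p i ≠ 0)
    (hfree : ∀ m : ι → ℤ, (∏ i, p i ^ m i) = 1 → ∀ i, m i = 0)
    (D₁ : Module.End k k[T;T⁻¹]) (hD₁ : ∀ n : ℤ, D₁ (T n) = (n : k) • T (n - 1))
    (D : ι → Module.End k k[T;T⁻¹])
    (hD : ∀ i, ∀ n : ℤ, D i (T n) = ((p i ^ n - 1) / (p i - 1)) • T (n - 1)) :
    IsNoetherianRing (Algebra.adjoin k ({D₁} ∪ Set.range D)) ∧
      IsNoetherianRing (↥(Algebra.adjoin k ({D₁} ∪ Set.range D)))ᵐᵒᵖ := by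
  classical
  have hp1 (i : ι) : p i ≠ 1 := fun h => by
    have hsingle : ∏ l, p l ^ (Pi.single i 1 : ι → ℤ) l = 1 := by
      simp [Pi.single_apply, h]
    simpa using hfree _ hsingle i
  have hF := isSymbolSpace_symbolSpace hp0 hp1 hfree
  rw [adjoin_eulerian_eq_symbolAlgebra hp1 hD₁ hD]
  exact ⟨hF.isNoetherianRing_symbolAlgebra, hF.isNoetherianRing_op_symbolAlgebra⟩

end EulerianDerivatives

/-- in characteristic zero, the algebra generated by `D_1 = d/dY` together
with Eulerian derivatives `D_{p₂}, …, D_{p_t}` (the `pᵢ` distinct, `≠ 0, 1`, generating a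
free abelian subgroup of `k˟` of rank `t − 1`, here `t = s + 1 ≥ 2`) is noetherian. -/
theorem stmt_5 {k : Type*} [Field k] [IsAlgClosed k] [CharZero k]
    (s : ℕ) (hs : 1 ≤ s) (p : Fin s → k)
    (hp0 : ∀ i, p i ≠ 0) (hp1 : ∀ i, p i ≠ 1)
    (hdist : Function.Injective p)
    (hfree : ∀ m : Fin s → ℤ, (∏ i, p i ^ m i) = 1 → ∀ i, m i = 0)
    (D1 : Module.End k (LaurentPolynomial k))
    (hD1 : ∀ n : ℤ, D1 (LaurentPolynomial.T n) = (n : k) • LaurentPolynomial.T (n - 1))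
    (D : Fin s → Module.End k (LaurentPolynomial k))
    (hD : ∀ i, ∀ n : ℤ, D i (LaurentPolynomial.T n)
        = ((p i ^ n - 1) / (p i - 1)) • LaurentPolynomial.T (n - 1)) :
    IsNoetherianRing (Algebra.adjoin k ({D1} ∪ Set.range D)) ∧
      IsNoetherianRing (↥(Algebra.adjoin k ({D1} ∪ Set.range D)))ᵐᵒᵖ := by
  have : Nonempty (Fin s) := ⟨⟨0, hs⟩⟩
  exact stmt_5_general p hp0 hfree D1 hD1 D hD
end
end

section
/- Assume k has characteristic p > 0 and let y ∈ k be transcendental over the prime subfield 𝔽_p. Then the k-subalgebra of End_k(k[Y,Y⁻¹]) generated by the two Eulerian derivatives D_y and D_{y+1} is neither left noetherian nor right noetherian. -/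
set_option synthInstance.maxHeartbeats 1000000
set_option maxHeartbeats 4000000
set_option maxSynthPendingDepth 3

noncomputable section

/-!
Write `[n]_q = (q ^ n - 1) / (q - 1)`, so that `D_q Tⁿ = [n]_q Tⁿ⁻¹`. An operator in the algebra
generated by `D_y` and `D_{y+1}` is a sum of operators `Tⁿ ↦ f n • Tⁿ⁻ᵈ`, where `f` is a linear
combination of exponentials `n ↦ uⁿ`, and composing with `D_q` multiplies `f`, suitably
reparametrised, by an exponential sum with a zero at `d`.

The function `ℓ n = (y + 1) ^ n - y ^ n - 1` vanishes at `n = p ^ r` by Frobenius. With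
`M = p ^ r - 1`, the coefficient function of a suitable combination of `D_{y+1} D_y ^ M` and
`D_y ^ M D_{y+1}` is `ℓ * Q` with `Q (p ^ r) ≠ 0`: its essential factor is the equation of the line
through the points `(yⁿ, (y + 1)ⁿ)` for `n = 1` and `n = p ^ r`. On the other hand, the operators
all of whose coefficient functions have the form `ℓ * Q`, with `Q` vanishing at every `p ^ r ≤ d`
with `r ≥ N`, form a left (or right) ideal, so these ideals strictly increase with `N`.
The cofactor `Q` is unique because `ℓ` has no zero at `n ≤ 0`, while a nonzero exponential sum
cannot vanish on all of `n ≤ 0`.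
-/

section NoetherianSubalgebra

variable {R E : Type*} [CommSemiring R] [Semiring E] [Algebra R E] {S : Set E}

lemma mul_mem_of_mem_adjoin {W : Submodule R E} (hW : ∀ a ∈ S, ∀ x ∈ W, a * x ∈ W) {a x : E}
    (ha : a ∈ Algebra.adjoin R S) (hx : x ∈ W) : a * x ∈ W := by
  induction ha using Algebra.adjoin_induction generalizing x with
  | mem a ha => exact hW a ha x hx
  | algebraMap r => rw [← Algebra.smul_def]; exact W.smul_mem r hx
  | add a b _ _ iha ihb => rw [add_mul]; exact add_mem (iha hx) (ihb hx)
  | mul a b _ _ iha ihb => rw [mul_assoc]; exact iha (ihb hx)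

lemma not_isNoetherianRing_adjoin_of_strictMono {W : ℕ → Submodule R E} (hmono : Monotone W)
    (hW : ∀ N, ∀ a ∈ S, ∀ x ∈ W N, a * x ∈ W N)
    (hstrict : ∀ N, ∃ x ∈ Algebra.adjoin R S, x ∈ W (N + 1) ∧ x ∉ W N) :
    ¬ IsNoetherianRing (Algebra.adjoin R S) := by
  let I (N : ℕ) : Ideal (Algebra.adjoin R S) :=
    { carrier := {a | (a : E) ∈ W N}
      zero_mem' := (W N).zero_mem
      add_mem' := (W N).add_mem
      smul_mem' := fun a _ hb ↦ mul_mem_of_mem_adjoin (hW N) a.2 hb }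
  intro hnoeth
  refine not_strictMono_of_wellFoundedGT I (strictMono_nat_of_lt_succ fun N ↦ ?_)
  obtain ⟨x, hx, hx_succ, hx_not⟩ := hstrict N
  exact SetLike.lt_iff_le_and_exists.mpr
    ⟨fun a ha ↦ hmono N.le_succ ha, ⟨x, hx⟩, hx_succ, hx_not⟩

lemma not_isNoetherianRing_adjoin_op
    (h : ¬ IsNoetherianRing (Algebra.adjoin R (MulOpposite.unop ⁻¹' S))) :
    ¬ IsNoetherianRing (Algebra.adjoin R S)ᵐᵒᵖ := by
  rw [← Subalgebra.op_adjoin] at h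
  intro hnoeth
  exact h <| isNoetherianRing_of_ringEquiv _ <|
    (RingEquiv.op (Subalgebra.algEquivOpMop (Algebra.adjoin R S)).toRingEquiv).trans
      (RingEquiv.opOp _).symm

end NoetherianSubalgebra

section ExponentialSums

variable (k : Type*) [Field k]

/-- The algebra of exponential sums, that is, of the linear combinations of the functions
`n ↦ u ^ n` on `ℤ`; it is realised as the image of the group algebra of `kˣ`. -/
def exponentialSums : Subalgebra k (ℤ → k) :=
  (MonoidAlgebra.lift k (ℤ → k) kˣ
    { toFun := fun u n ↦ ↑(u ^ n)
      map_one' := by funext n; simp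
      map_mul' := fun u v ↦ by funext n; simp [mul_zpow] }).range

variable {k}

lemma zpow_mem_exponentialSums {q : k} (hq : q ≠ 0) :
    (fun n : ℤ ↦ q ^ n) ∈ exponentialSums k :=
  ⟨MonoidAlgebra.of k kˣ (Units.mk0 q hq), by
    funext n; simp [MonoidAlgebra.lift_apply]⟩

lemma zpow_affine_mem_exponentialSums {q : k} (hq : q ≠ 0) (a b : ℤ) :
    (fun n : ℤ ↦ q ^ (a * n + b)) ∈ exponentialSums k := by
  convert (exponentialSums k).smul_mem (zpow_mem_exponentialSums (zpow_ne_zero a hq)) (q ^ b)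
    using 1
  funext n
  rw [zpow_add₀ hq, zpow_mul, Pi.smul_apply, smul_eq_mul, mul_comm]

lemma eq_zero_of_mem_exponentialSums {f : ℤ → k} (hf : f ∈ exponentialSums k)
    (h : ∀ m : ℕ, f (-m) = 0) : f = 0 := by
  obtain ⟨F, rfl⟩ := hf
  have hinj : Function.Injective fun u : kˣ ↦ powersHom k ↑u⁻¹ := fun u v huv ↦
    inv_injective (Units.ext ((powersHom k).injective huv))
  have hindep := (linearIndependent_monoidHom (Multiplicative ℕ) k).comp _ hinj
  have hF : F.coeff = 0 := by
    refine linearIndependent_iff.mp hindep _ ?_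
    funext m
    rw [Pi.zero_apply, ← h m.toAdd]
    simp [MonoidAlgebra.lift_apply, Finsupp.linearCombination_apply, Finsupp.sum]
  rw [show F = 0 from MonoidAlgebra.coeff_injective hF, map_zero]

lemma mul_left_cancel_of_mem_exponentialSums {ℓ f g : ℤ → k} (hℓ : ∀ m : ℕ, ℓ (-m) ≠ 0)
    (hf : f ∈ exponentialSums k) (hg : g ∈ exponentialSums k) (h : ℓ * f = ℓ * g) : f = g :=
  sub_eq_zero.mp <| eq_zero_of_mem_exponentialSums (sub_mem hf hg) fun m ↦
    sub_eq_zero.mpr (mul_left_cancel₀ (hℓ m) (congrFun h (-m)))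

end ExponentialSums

section Cofactors

variable {k E : Type*} [Field k]

/-- The elements whose components are multiples `ℓ * Q` of `ℓ` by an exponential sum `Q` which,
for the component of degree `d`, vanishes at the points of `Z` up to `d`. -/
def cofactorSubmodule [AddCommGroup E] [Module k E] (c : ℤ → E →ₗ[k] ℤ → k) (ℓ : ℤ → k)
    (Z : Set ℤ) : Submodule k E where
  carrier := {x | ∀ d, ∃ Q ∈ exponentialSums k, c d x = ℓ * Q ∧ ∀ z ∈ Z, z ≤ d → Q z = 0}
  zero_mem' d := ⟨0, zero_mem _, by simp, by simp⟩
  add_mem' {x y} hx hy d := by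
    obtain ⟨Q, hQ, hxQ, hQZ⟩ := hx d
    obtain ⟨R, hR, hyR, hRZ⟩ := hy d
    refine ⟨Q + R, add_mem hQ hR, by rw [map_add, hxQ, hyR, mul_add], fun z hz hzd ↦ ?_⟩
    rw [Pi.add_apply, hQZ z hz hzd, hRZ z hz hzd, add_zero]
  smul_mem' t x hx d := by
    obtain ⟨Q, hQ, hxQ, hQZ⟩ := hx d
    refine ⟨t • Q, Subalgebra.smul_mem _ hQ t, by rw [map_smul, hxQ, mul_smul_comm],
      fun z hz hzd ↦ ?_⟩
    rw [Pi.smul_apply, hQZ z hz hzd, smul_zero]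

lemma cofactorSubmodule_antitone [AddCommGroup E] [Module k E] (c : ℤ → E →ₗ[k] ℤ → k)
    (ℓ : ℤ → k) : Antitone (cofactorSubmodule c ℓ) := fun _ _ hZ _ hx d ↦
  let ⟨Q, hQ, hxQ, hQZ⟩ := hx d
  ⟨Q, hQ, hxQ, fun z hz ↦ hQZ z (hZ hz)⟩

variable [Ring E] [Algebra k E] {S : Set E}

/-- Left multiplication by `a` raises degrees by one and multiplies the component landing in degree
`d` by an exponential sum that vanishes at `d`. -/
def ActsByVanishingFactors (c : ℤ → E →ₗ[k] ℤ → k) (a : E) : Prop :=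
  ∀ d, ∃ w ∈ exponentialSums k, w d = 0 ∧ ∀ x, c d (a * x) = w * c (d - 1) x

lemma ActsByVanishingFactors.mul_mem_cofactorSubmodule {c : ℤ → E →ₗ[k] ℤ → k} {a : E}
    (ha : ActsByVanishingFactors c a) {ℓ : ℤ → k} {Z : Set ℤ} {x : E}
    (hx : x ∈ cofactorSubmodule c ℓ Z) : a * x ∈ cofactorSubmodule c ℓ Z := by
  intro d
  obtain ⟨w, hw, hwd, hac⟩ := ha d
  obtain ⟨Q, hQ, hxQ, hQZ⟩ := hx (d - 1)
  refine ⟨w * Q, mul_mem hw hQ, by rw [hac, hxQ, mul_left_comm], fun z hz hzd ↦ ?_⟩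
  rw [Pi.mul_apply]
  rcases hzd.eq_or_lt with rfl | hlt
  · rw [hwd, zero_mul]
  · rw [hQZ z hz (Int.le_sub_one_of_lt hlt), mul_zero]

lemma not_isNoetherianRing_adjoin_of_cofactors {c : ℤ → E →ₗ[k] ℤ → k}
    (hS : ∀ a ∈ S, ActsByVanishingFactors c a) {ℓ : ℤ → k} (hℓ : ∀ m : ℕ, ℓ (-m) ≠ 0)
    {s : ℕ → ℤ} (hs : StrictMono s)
    (hx : ∀ r, ∃ x ∈ Algebra.adjoin k S, ∃ Q ∈ exponentialSums k, Q (s r) ≠ 0 ∧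
      ∀ d, c d x = if d = s r then ℓ * Q else 0) :
    ¬ IsNoetherianRing (Algebra.adjoin k S) := by
  refine not_isNoetherianRing_adjoin_of_strictMono
    (W := fun N ↦ cofactorSubmodule c ℓ (s '' Set.Ici N))
    (fun M N h ↦ cofactorSubmodule_antitone c ℓ (Set.image_mono (Set.Ici_subset_Ici.mpr h)))
    (fun N a ha x hx ↦ (hS a ha).mul_mem_cofactorSubmodule hx) fun N ↦ ?_
  obtain ⟨x, hxS, Q, hQ, hQs, hc⟩ := hx N
  refine ⟨x, hxS, fun d ↦ ?_, fun hxN ↦ ?_⟩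
  · rw [hc]
    split_ifs with hd
    · refine ⟨Q, hQ, rfl, ?_⟩
      rintro _ ⟨r, hr, rfl⟩ hrd
      exact absurd (hs.le_iff_le.mp (hrd.trans hd.le)) (Nat.not_le.mpr hr)
    · exact ⟨0, zero_mem _, (mul_zero ℓ).symm, fun _ _ _ ↦ rfl⟩
  · obtain ⟨R, hR, hxR, hRZ⟩ := hxN (s N)
    rw [hc, if_pos rfl] at hxR
    rw [mul_left_cancel_of_mem_exponentialSums hℓ hQ hR hxR] at hQs
    exact hQs (hRZ _ ⟨N, Set.self_mem_Ici, rfl⟩ le_rfl)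

end Cofactors

section EulerianDerivatives

open LaurentPolynomial

variable {k : Type*} [Field k]

/-- The `q`-analogue `[n]_q` of the integer `n`. -/
def qNumber (q : k) (n : ℤ) : k := (q ^ n - 1) / (q - 1)

lemma qNumber_zero (q : k) : qNumber q 0 = 0 := by simp [qNumber]

lemma qNumber_ne_zero {q : k} (hq : ∀ n : ℤ, n ≠ 0 → q ^ n ≠ 1) {n : ℤ} (hn : n ≠ 0) :
    qNumber q n ≠ 0 :=
  div_ne_zero (sub_ne_zero.mpr (hq n hn)) (sub_ne_zero.mpr (by simpa using hq 1 one_ne_zero))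

lemma qNumber_affine_mem_exponentialSums {q : k} (hq : q ≠ 0) (a b : ℤ) {t : ℤ → ℤ}
    (ht : ∀ n, t n = a * n + b) : (fun n ↦ qNumber q (t n)) ∈ exponentialSums k := by
  convert (exponentialSums k).smul_mem
    (sub_mem (zpow_affine_mem_exponentialSums hq a b) (one_mem _)) (q - 1)⁻¹ using 1
  funext n
  simp [qNumber, ht, div_eq_inv_mul]

/-- The property of being the Eulerian derivative `D_q`. -/
def IsEulerianDerivative (q : k) (D : Module.End k k[T;T⁻¹]) : Prop :=
  ∀ n : ℤ, D (T n) = qNumber q n • T (n - 1)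

variable {a b q : k} {A B D : Module.End k k[T;T⁻¹]}

lemma IsEulerianDerivative.coeff_apply (hD : IsEulerianDerivative q D) (f : k[T;T⁻¹]) (m : ℤ) :
    (D f).coeff m = qNumber q (m + 1) * f.coeff (m + 1) := by
  induction f using LaurentPolynomial.induction_on' with
  | add f g hf hg => simp [hf, hg, mul_add]
  | C_mul_T n t =>
    rw [← smul_eq_C_mul, map_smul, hD]
    simp only [AddMonoidAlgebra.coeff_smul, Finsupp.smul_apply, T_apply, smul_eq_mul]
    by_cases h : n = m + 1
    · subst h; simp [mul_comm]
    · rw [if_neg h, if_neg (by lia)]; simp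

lemma IsEulerianDerivative.pow_apply_T (hD : IsEulerianDerivative q D) (m : ℕ) (n : ℤ) :
    (D ^ m) (T n) = (∏ j ∈ Finset.range m, qNumber q (n - j)) • T (n - m) := by
  induction m with
  | zero => simp
  | succ m ih =>
    rw [pow_succ', Module.End.mul_apply, ih, map_smul, hD, smul_smul, Finset.prod_range_succ]
    congr 2
    push_cast
    ring

lemma IsEulerianDerivative.pow_mul_apply_T (hA : IsEulerianDerivative a A)
    (hB : IsEulerianDerivative b B) (m : ℕ) (n : ℤ) :
    (A ^ m * B) (T n) =
      (qNumber b n * ∏ j ∈ Finset.range m, qNumber a (n - 1 - j)) • T (n - 1 - m) := by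
  rw [Module.End.mul_apply, hB, map_smul, hA.pow_apply_T, smul_smul]

lemma IsEulerianDerivative.mul_pow_succ_apply_T (hA : IsEulerianDerivative a A)
    (hB : IsEulerianDerivative b B) (m : ℕ) (n : ℤ) :
    (B * A ^ (m + 1)) (T n) = (qNumber b (n - 1 - m) * (qNumber a n *
      ∏ j ∈ Finset.range m, qNumber a (n - 1 - j))) • T (n - 1 - m - 1) := by
  rw [pow_succ, Module.End.mul_apply, hA.pow_mul_apply_T hA, map_smul, hB, smul_smul, mul_comm]

lemma IsEulerianDerivative.skewCommutator_apply_T (hA : IsEulerianDerivative a A)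
    (hB : IsEulerianDerivative b B) (m : ℕ) (u v : k) (n : ℤ) :
    (u • (B * A ^ (m + 1)) - v • (A ^ (m + 1) * B)) (T n) =
      ((u * (qNumber a n * qNumber b (n - 1 - m)) - v * (qNumber b n * qNumber a (n - 1 - m))) *
        ∏ j ∈ Finset.range m, qNumber a (n - 1 - j)) • T (n - (m + 2 : ℕ)) := by
  rw [LinearMap.sub_apply, LinearMap.smul_apply, LinearMap.smul_apply,
    hA.mul_pow_succ_apply_T hB, hA.pow_mul_apply_T hB, Finset.prod_range_succ, smul_smul, smul_smul,
    show n - 1 - m - 1 = n - (m + 2 : ℕ) by push_cast; ring,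
    show n - 1 - (m + 1 : ℕ) = n - (m + 2 : ℕ) by push_cast; ring, ← sub_smul]
  congr 1
  ring

/-- The sequence of matrix coefficients of an operator with respect to the basis `T n`, at the
rows `i n` and columns `j n`. -/
def matrixCoeff (i j : ℤ → ℤ) : Module.End k k[T;T⁻¹] →ₗ[k] ℤ → k where
  toFun x n := (x (T (j n))).coeff (i n)
  map_add' x y := by funext n; simp
  map_smul' t x := by funext n; simp

lemma matrixCoeff_apply (i j : ℤ → ℤ) (x : Module.End k k[T;T⁻¹]) (n : ℤ) :
    matrixCoeff i j x n = (x (T (j n))).coeff (i n) := rfl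

lemma matrixCoeff_of_apply_T {i j : ℤ → ℤ} {d e : ℤ} (hij : ∀ n, i n = j n - d)
    {x : Module.End k k[T;T⁻¹]} {f : ℤ → k} (hx : ∀ n, x (T n) = f n • T (n - e)) :
    matrixCoeff i j x = if d = e then f ∘ j else 0 := by
  funext n
  rw [matrixCoeff_apply, hx, hij, AddMonoidAlgebra.coeff_smul, Finsupp.smul_apply, T_apply]
  split_ifs <;> simp_all

/-- The components of an operator that turn left multiplication by an Eulerian derivative into
multiplication by a function. The component of degree `d` at `n` is the coefficient of
`T (n - 1 - d)` in the image of `T (n - 1)`; the shift by one puts the zeros at `1, …, d`. -/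
def leftComponent (d : ℤ) : Module.End k k[T;T⁻¹] →ₗ[k] ℤ → k :=
  matrixCoeff (fun n ↦ n - 1 - d) (fun n ↦ n - 1)

/-- The analogue of `leftComponent` for right multiplication, on the opposite algebra. Reading the
coefficients in the reverse order again puts the zeros at `1, …, d`. -/
def rightComponent (d : ℤ) : (Module.End k k[T;T⁻¹])ᵐᵒᵖ →ₗ[k] ℤ → k :=
  matrixCoeff (fun n ↦ -n) (fun n ↦ d - n) ∘ₗ (MulOpposite.opLinearEquiv k).symm.toLinearMap

lemma rightComponent_op (d : ℤ) (x : Module.End k k[T;T⁻¹]) :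
    rightComponent d (MulOpposite.op x) = matrixCoeff (fun n ↦ -n) (fun n ↦ d - n) x := rfl

lemma IsEulerianDerivative.actsByVanishingFactors_left (hD : IsEulerianDerivative q D)
    (hq : q ≠ 0) : ActsByVanishingFactors leftComponent D := by
  refine fun d ↦ ⟨fun n ↦ qNumber q (n - d),
    qNumber_affine_mem_exponentialSums hq 1 (-d) fun n ↦ by ring, by simp [qNumber_zero],
    fun x ↦ ?_⟩
  funext n
  rw [Pi.mul_apply, leftComponent, leftComponent, matrixCoeff_apply, matrixCoeff_apply,
    Module.End.mul_apply, hD.coeff_apply]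
  ring_nf

lemma IsEulerianDerivative.actsByVanishingFactors_right (hD : IsEulerianDerivative q D)
    (hq : q ≠ 0) : ActsByVanishingFactors rightComponent (MulOpposite.op D) := by
  refine fun d ↦ ⟨fun n ↦ qNumber q (d - n),
    qNumber_affine_mem_exponentialSums hq (-1) d fun n ↦ by ring, by simp [qNumber_zero],
    fun x ↦ ?_⟩
  funext n
  change (x.unop (D (T (d - n)))).coeff (-n)
    = qNumber q (d - n) * (x.unop (T (d - 1 - n))).coeff (-n)
  rw [hD, map_smul, AddMonoidAlgebra.coeff_smul, Finsupp.smul_apply, smul_eq_mul, sub_right_comm]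

end EulerianDerivatives

section FrobeniusLine

open LaurentPolynomial

variable {F k : Type*} [Field F] [Field k] [Algebra F k] {y : k}

lemma ne_zero_of_transcendental (hy : Transcendental F y) : y ≠ 0 :=
  fun h ↦ hy (h ▸ isAlgebraic_zero)

lemma zpow_ne_one_of_transcendental (hy : Transcendental F y) (n : ℤ) (hn : n ≠ 0) :
    y ^ n ≠ 1 := by
  intro h
  have hpow : y ^ n.natAbs = 1 := by
    rw [← zpow_natCast]
    rcases n.natAbs_eq with e | e
    · rw [← e, h]
    · rw [← neg_eq_iff_eq_neg.mpr e, zpow_neg, h, inv_one]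
  exact hy (IsAlgebraic.of_pow (Int.natAbs_pos.mpr hn) (hpow ▸ isAlgebraic_one))

lemma sub_one_ne_zero_of_transcendental (hy : Transcendental F y) : y - 1 ≠ 0 :=
  sub_ne_zero.mpr fun h ↦ hy (h ▸ isAlgebraic_one)

lemma add_one_ne_zero_of_transcendental (hy : Transcendental F y) : y + 1 ≠ 0 := fun h ↦ hy <| by
  rw [eq_neg_of_add_eq_zero_left h]
  exact isAlgebraic_one.neg

/-- The values at the points `(y ^ n, (y + 1) ^ n)` of the equation `Y - X - 1` of a line, which in
characteristic `p` passes through the points with `n = p ^ r`. -/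
def frobeniusLine (y : k) (n : ℤ) : k := (y + 1) ^ n - y ^ n - 1

lemma frobeniusLine_neg_ne_zero (hy : Transcendental F y) (m : ℕ) :
    frobeniusLine y (-m) ≠ 0 := by
  intro h
  have hy0 : y ^ m ≠ 0 := pow_ne_zero _ (ne_zero_of_transcendental hy)
  have hy1 : (y + 1) ^ m ≠ 0 := pow_ne_zero _ (add_one_ne_zero_of_transcendental hy)
  have hrel : y ^ m - (y + 1) ^ m - y ^ m * (y + 1) ^ m = 0 := by
    rw [frobeniusLine, zpow_neg, zpow_neg, zpow_natCast, zpow_natCast] at h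
    field_simp at h
    linear_combination h
  open Polynomial in
  have hzero : (X ^ m - (X + 1) ^ m - X ^ m * (X + 1) ^ m : F[X]) = 0 :=
    transcendental_iff.mp hy _ (by simpa using hrel)
  simpa using congrArg (Polynomial.eval 0) hzero

lemma zpow_sub_add_two {x : k} (hx : x ≠ 0) (n : ℤ) (m : ℕ) :
    x ^ (n - (m + 2 : ℕ)) = x ^ n / x ^ (m + 2) := by
  rw [zpow_sub₀ hx, zpow_natCast]

-- The right-hand side is the determinant whose vanishing says that the points of the orbit with
-- exponents `1`, `e` and `n` are collinear.
lemma frobeniusLine_mul_eq {e : ℕ} (he : (y + 1) ^ e = y ^ e + 1) (n : ℤ) :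
    frobeniusLine y n * (y ^ e - y) =
      (y ^ n - y) * ((y + 1) ^ n - (y + 1) ^ e) - ((y + 1) ^ n - (y + 1)) * (y ^ n - y ^ e) := by
  rw [frobeniusLine, he]
  ring

lemma leftCoeff_skewCommutator_eq (hy : Transcendental F y) {m : ℕ}
    (he : (y + 1) ^ (m + 2) = y ^ (m + 2) + 1) (n : ℤ) :
    (y + 1) ^ (m + 1) * (qNumber y (n - 1) * qNumber (y + 1) (n - 1 - 1 - m)) -
        y ^ (m + 1) * (qNumber (y + 1) (n - 1) * qNumber y (n - 1 - 1 - m)) =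
      frobeniusLine y n * ((y ^ (m + 2) - y) / (y ^ 2 * (y + 1) * (y - 1))) := by
  have hy0 := ne_zero_of_transcendental hy
  have hy1 := add_one_ne_zero_of_transcendental hy
  have hy' := sub_one_ne_zero_of_transcendental hy
  have hline := frobeniusLine_mul_eq he n
  have hexp : n - 1 - 1 - m = n - (m + 2 : ℕ) := by push_cast; ring
  rw [hexp]
  simp only [qNumber, zpow_sub_add_two hy0, zpow_sub_add_two hy1,
    zpow_sub_one₀ hy0, zpow_sub_one₀ hy1, add_sub_cancel_right]
  field_simp
  linear_combination -y ^ (m + 2) * (y + 1) ^ (m + 2) * hline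

lemma rightCoeff_skewCommutator_eq (hy : Transcendental F y) {m : ℕ}
    (he : (y + 1) ^ (m + 2) = y ^ (m + 2) + 1) (n : ℤ) :
    qNumber y ((m + 2 : ℕ) - n) * qNumber (y + 1) ((m + 2 : ℕ) - n - 1 - m) -
        qNumber (y + 1) ((m + 2 : ℕ) - n) * qNumber y ((m + 2 : ℕ) - n - 1 - m) =
      frobeniusLine y n * ((y - y ^ (m + 2)) / (y * (y - 1)) * (y ^ (-n) * (y + 1) ^ (-n))) := by
  have hy0 := ne_zero_of_transcendental hy
  have hy1 := add_one_ne_zero_of_transcendental hy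
  have hy' := sub_one_ne_zero_of_transcendental hy
  have hline := frobeniusLine_mul_eq he n
  have hexp : (m + 2 : ℕ) - n - 1 - m = 1 - n := by push_cast; ring
  rw [hexp]
  simp only [qNumber, zpow_sub₀ hy0, zpow_sub₀ hy1, zpow_neg, zpow_one,
    zpow_natCast, add_sub_cancel_right]
  field_simp
  linear_combination hline

variable {A B : Module.End k k[T;T⁻¹]}

lemma skewCommutator_mem_adjoin (A B : Module.End k k[T;T⁻¹]) (m : ℕ) (u v : k) :
    u • (B * A ^ m) - v • (A ^ m * B) ∈ Algebra.adjoin k {A, B} := by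
  have hA : A ∈ Algebra.adjoin k {A, B} := Algebra.subset_adjoin (Set.mem_insert _ _)
  have hB : B ∈ Algebra.adjoin k {A, B} := Algebra.subset_adjoin (Set.mem_insert_of_mem _ rfl)
  have hAm := pow_mem hA m
  exact sub_mem (Subalgebra.smul_mem _ (mul_mem hB hAm) u)
    (Subalgebra.smul_mem _ (mul_mem hAm hB) v)

lemma pow_add_two_ne_self (hy : Transcendental F y) (m : ℕ) : y ^ (m + 2) ≠ y := fun h ↦
  zpow_ne_one_of_transcendental hy (m + 1 : ℕ) (by lia) <|
    mul_right_cancel₀ (ne_zero_of_transcendental hy) (by rw [zpow_natCast, ← pow_succ, h, one_mul])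

lemma exists_leftComponent_eq (hy : Transcendental F y) (hA : IsEulerianDerivative y A)
    (hB : IsEulerianDerivative (y + 1) B) {m : ℕ} (he : (y + 1) ^ (m + 2) = y ^ (m + 2) + 1) :
    ∃ x ∈ Algebra.adjoin k {A, B}, ∃ Q ∈ exponentialSums k, Q (m + 2 : ℕ) ≠ 0 ∧
      ∀ d, leftComponent d x = if d = (m + 2 : ℕ) then frobeniusLine y * Q else 0 := by
  have hy0 := ne_zero_of_transcendental hy
  have hroot := zpow_ne_one_of_transcendental hy
  have hconst : (y ^ (m + 2) - y) / (y ^ 2 * (y + 1) * (y - 1)) ≠ 0 :=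
    div_ne_zero (sub_ne_zero.mpr (pow_add_two_ne_self hy m)) <|
      mul_ne_zero (mul_ne_zero (pow_ne_zero 2 hy0) (add_one_ne_zero_of_transcendental hy))
        (sub_one_ne_zero_of_transcendental hy)
  refine ⟨_, skewCommutator_mem_adjoin A B (m + 1) ((y + 1) ^ (m + 1)) (y ^ (m + 1)),
    ((y ^ (m + 2) - y) / (y ^ 2 * (y + 1) * (y - 1))) •
      ∏ j ∈ Finset.range m, fun n : ℤ ↦ qNumber y (n - 1 - 1 - j),
    ?_, ?_, fun d ↦ ?_⟩
  · refine Subalgebra.smul_mem _ (Subalgebra.prod_mem _ fun j _ ↦ ?_) _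
    exact qNumber_affine_mem_exponentialSums hy0 1 (-2 - j) fun n ↦ by ring
  · rw [Pi.smul_apply, Finset.prod_apply]
    refine smul_ne_zero hconst (Finset.prod_ne_zero_iff.mpr fun j hj ↦ qNumber_ne_zero hroot ?_)
    have := Finset.mem_range.mp hj
    lia
  · rw [leftComponent, matrixCoeff_of_apply_T (fun n ↦ rfl) (hA.skewCommutator_apply_T hB m _ _)]
    congr 1
    funext n
    simp only [Function.comp_apply, leftCoeff_skewCommutator_eq hy he, Pi.mul_apply, Pi.smul_apply,
      Finset.prod_apply, smul_eq_mul, mul_assoc]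

lemma exists_rightComponent_eq (hy : Transcendental F y) (hA : IsEulerianDerivative y A)
    (hB : IsEulerianDerivative (y + 1) B) {m : ℕ} (he : (y + 1) ^ (m + 2) = y ^ (m + 2) + 1) :
    ∃ x ∈ Algebra.adjoin k {A, B}, ∃ Q ∈ exponentialSums k, Q (m + 2 : ℕ) ≠ 0 ∧
      ∀ d, rightComponent d (MulOpposite.op x) =
        if d = (m + 2 : ℕ) then frobeniusLine y * Q else 0 := by
  have hy0 := ne_zero_of_transcendental hy
  have hy1 := add_one_ne_zero_of_transcendental hy
  have hroot := zpow_ne_one_of_transcendental hy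
  have hconst : (y - y ^ (m + 2)) / (y * (y - 1)) ≠ 0 :=
    div_ne_zero (sub_ne_zero.mpr (pow_add_two_ne_self hy m).symm)
      (mul_ne_zero hy0 (sub_one_ne_zero_of_transcendental hy))
  refine ⟨_, skewCommutator_mem_adjoin A B (m + 1) 1 1,
    ((y - y ^ (m + 2)) / (y * (y - 1))) • ((fun n : ℤ ↦ y ^ (-n)) * fun n : ℤ ↦ (y + 1) ^ (-n)) *
      ∏ j ∈ Finset.range m, fun n : ℤ ↦ qNumber y ((m + 2 : ℕ) - n - 1 - j),
    ?_, ?_, fun d ↦ ?_⟩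
  · refine mul_mem (Subalgebra.smul_mem _ (mul_mem ?_ ?_) _) (Subalgebra.prod_mem _ fun j _ ↦ ?_)
    · simpa using zpow_affine_mem_exponentialSums hy0 (-1) 0
    · simpa using zpow_affine_mem_exponentialSums hy1 (-1) 0
    · exact qNumber_affine_mem_exponentialSums hy0 (-1) (m + 1 - j) fun n ↦ by push_cast; ring
  · rw [Pi.mul_apply, Finset.prod_apply]
    refine mul_ne_zero (smul_ne_zero hconst (mul_ne_zero (zpow_ne_zero _ hy0) (zpow_ne_zero _ hy1)))
      (Finset.prod_ne_zero_iff.mpr fun j _ ↦ qNumber_ne_zero hroot (by lia))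
  · rw [rightComponent_op, matrixCoeff_of_apply_T (fun n ↦ by ring)
      (hA.skewCommutator_apply_T hB m _ _)]
    split_ifs with hd
    · subst hd
      funext n
      simp only [Function.comp_apply, one_mul, rightCoeff_skewCommutator_eq hy he,
        Pi.mul_apply, Pi.smul_apply, Finset.prod_apply, smul_eq_mul, mul_assoc]
    · rfl

end FrobeniusLine

theorem stmt_6_general {k : Type*} [Field k]
    (p : ℕ) [Fact p.Prime] [CharP k p] [Algebra (ZMod p) k]
    {y : k} (hy : Transcendental (ZMod p) y)
    {D1 D2 : Module.End k (LaurentPolynomial k)} (hD1 : IsEulerianDerivative y D1)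
    (hD2 : IsEulerianDerivative (y + 1) D2) :
    ¬ IsNoetherianRing (Algebra.adjoin k ({D1, D2} : Set (Module.End k (LaurentPolynomial k)))) ∧
    ¬ IsNoetherianRing
        (↥(Algebra.adjoin k ({D1, D2} : Set (Module.End k (LaurentPolynomial k)))))ᵐᵒᵖ := by
  have hy0 := ne_zero_of_transcendental hy
  have hy1 := add_one_ne_zero_of_transcendental hy
  have hp : 1 < p := (Fact.out : p.Prime).one_lt
  have hs : StrictMono fun r : ℕ ↦ ((p ^ (r + 1) : ℕ) : ℤ) := fun a b hab ↦
    Int.ofNat_lt.mpr (Nat.pow_lt_pow_right hp (Nat.succ_lt_succ hab))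
  have hexponent (r : ℕ) : ∃ m, p ^ (r + 1) = m + 2 ∧ (y + 1) ^ (m + 2) = y ^ (m + 2) + 1 := by
    obtain ⟨m, hm⟩ := Nat.exists_eq_add_of_le' (Nat.one_lt_pow r.succ_ne_zero hp)
    exact ⟨m, hm, by rw [← hm, add_pow_char_pow, one_pow]⟩
  constructor
  · refine not_isNoetherianRing_adjoin_of_cofactors (c := leftComponent) ?_
      (frobeniusLine_neg_ne_zero hy) hs fun r ↦ ?_
    · rintro _ (rfl | rfl)
      exacts [hD1.actsByVanishingFactors_left hy0, hD2.actsByVanishingFactors_left hy1]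
    · obtain ⟨m, hm, he⟩ := hexponent r
      simpa only [hm] using exists_leftComponent_eq hy hD1 hD2 he
  · refine not_isNoetherianRing_adjoin_op <| not_isNoetherianRing_adjoin_of_cofactors
      (c := rightComponent) ?_ (frobeniusLine_neg_ne_zero hy) hs fun r ↦ ?_
    · rintro ⟨_⟩ (rfl | rfl)
      exacts [hD1.actsByVanishingFactors_right hy0, hD2.actsByVanishingFactors_right hy1]
    · obtain ⟨m, hm, he⟩ := hexponent r
      obtain ⟨x, hx, hQ⟩ := exists_rightComponent_eq hy hD1 hD2 he
      exact ⟨MulOpposite.op x, by rwa [← Subalgebra.op_adjoin], by simpa only [hm] using hQ⟩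

/-- in characteristic `p > 0`, for `y` transcendental over the prime
subfield `𝔽_p`, the algebra generated by the Eulerian derivatives `D_y` and `D_{y+1}`
is neither left nor right noetherian. -/
theorem stmt_6 {k : Type*} [Field k] [IsAlgClosed k]
    (p : ℕ) [Fact p.Prime] [CharP k p] [Algebra (ZMod p) k]
    (y : k) (hy : Transcendental (ZMod p) y)
    (D1 D2 : Module.End k (LaurentPolynomial k))
    (hD1 : ∀ n : ℤ, D1 (LaurentPolynomial.T n)
        = ((y ^ n - 1) / (y - 1)) • LaurentPolynomial.T (n - 1))
    (hD2 : ∀ n : ℤ, D2 (LaurentPolynomial.T n)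
        = (((y + 1) ^ n - 1) / ((y + 1) - 1)) • LaurentPolynomial.T (n - 1)) :
    ¬ IsNoetherianRing (Algebra.adjoin k ({D1, D2} : Set (Module.End k (LaurentPolynomial k)))) ∧
    ¬ IsNoetherianRing
        (↥(Algebra.adjoin k ({D1, D2} : Set (Module.End k (LaurentPolynomial k)))))ᵐᵒᵖ :=
  stmt_6_general p hy hD1 hD2
end
end

section
/- Assume k has characteristic 0. Let L be an invertible (t+1)×(t+1) matrix over k and let v ∈ k^{t+1} be a nonzero vector. Suppose that for every nonzero homogeneous polynomial F ∈ k[x_0,…,x_t] there exists n ∈ ℤ with F(Lⁿv) ≠ 0 (i.e. the orbit {Lⁿv : n ∈ ℤ}, viewed in P^t, is Zariski dense). Then for every nonzero homogeneous F ∈ k[x_0,…,x_t] the set {n ∈ ℤ : F(Lⁿv) = 0} is finite (i.e. the orbit is critically dense in P^t). -/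
set_option synthInstance.maxHeartbeats 1000000
set_option maxHeartbeats 4000000

noncomputable section

/-!
Let `F` vanish at infinitely many points `Lⁿ v`. The finitely many scalars involved generate a
ring that embeds into a finite free `ℤ_[p]`-algebra `S` for a suitable prime `p`: Noether
normalisation makes a finitely generated `ℚ`-algebra integral over a polynomial ring, whose
variables can be sent to algebraically independent `p`-adic integers, and `p` is chosen to avoid
all denominators. Over `S` some power `Lᵐ` is congruent to `1` modulo `p²`, so the `j`-th forward
difference of `n ↦ F(L^(a + m n) v)` is divisible by `p^(2j)`; since `j!` divides `p^j` in `ℤ_[p]`,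
the Newton series of each coordinate of this function has coefficients tending to zero, and by
a Strassmann-type argument it has finitely many zeros or vanishes identically. Hence `F` vanishes on
`L^(a + m ℤ) v` for some residue `a`, and `∏ j < m, F ∘ L^j` is a nonzero homogeneous polynomial
vanishing on the whole orbit.
-/

section NewtonSeries

open Filter Topology Polynomial

theorem mem_span_image_Ioi_of_card_isRoot {R : Type*} [CommRing R] [IsDomain R] {P : ℕ → R[X]}
    (hmonic : ∀ j, (P j).Monic) (hdeg : ∀ j, (P j).natDegree = j) (d : ℕ → R) {J N : ℕ}
    (hJN : J < N) {Z : Finset R} (hcard : Z.card = J + 1)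
    (hroot : ∀ z ∈ Z, (∑ j ∈ Finset.range N, C (d j) * P j).IsRoot z) :
    d J ∈ Ideal.span (d '' Set.Ioi J) := by
  let Q : R[X] := (Z.val.map fun z => X - C z).prod
  have hQ : Q.Monic := monic_multisetProd_X_sub_C Z.val
  have hQdeg : Q.natDegree = J + 1 := by
    rw [← hcard]; exact natDegree_multiset_prod_X_sub_C_eq_card Z.val
  have hdvd : Q ∣ ∑ j ∈ Finset.range N, C (d j) * P j := by
    by_cases h0 : ∑ j ∈ Finset.range N, C (d j) * P j = 0
    · exact h0 ▸ dvd_zero Q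
    · exact (Multiset.prod_X_sub_C_dvd_iff_le_roots h0 _).2
        ((Multiset.le_iff_subset Z.nodup).2 fun z hz => (mem_roots h0).2 (hroot z hz))
  -- Reduction modulo `Q` kills the sum and fixes `P j` for `j ≤ J`; of these only `P J`
  -- has a term in `X ^ J`.
  let l : R[X] →ₗ[R] R := (lcoeff R J).comp (modByMonicHom Q)
  have hlow : ∀ j ≤ J, l (P j) = (P j).coeff J := fun j hj =>
    congrArg (coeff · J) ((modByMonic_eq_self_iff hQ).2
      (degree_lt_degree (by rw [hdeg, hQdeg]; lia)))
  have hltJ : ∀ j < J, l (P j) = 0 := fun j hj => by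
    rw [hlow j hj.le, coeff_eq_zero_of_natDegree_lt ((hdeg j).trans_lt hj)]
  have hJ : l (P J) = 1 := by
    have hlead := (hmonic J).coeff_natDegree
    rwa [hdeg, ← hlow J le_rfl] at hlead
  have hsum : ∑ j ∈ Finset.range N, d j * l (P j) = 0 := by
    have hzero : l (∑ j ∈ Finset.range N, C (d j) * P j) = 0 :=
      congrArg (coeff · J) ((modByMonic_eq_zero_iff_dvd hQ).2 hdvd)
    simpa only [map_sum, C_mul', map_smul, smul_eq_mul] using hzero
  rw [← Finset.add_sum_erase _ _ (Finset.mem_range.2 hJN), hJ, mul_one] at hsum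
  rw [eq_neg_of_add_eq_zero_left hsum]
  refine neg_mem (sum_mem fun j hj => ?_)
  rcases (Finset.ne_of_mem_erase hj).lt_or_gt with hj | hj
  · simp [hltJ j hj]
  · exact Ideal.mul_mem_right _ _ (Ideal.subset_span (Set.mem_image_of_mem d hj))

variable {p : ℕ} [Fact p.Prime]

theorem exists_ne_zero_forall_norm_lt_of_tendsto_zero {E : Type*} [NormedAddCommGroup E]
    {d : ℕ → E} (hd : Tendsto d atTop (𝓝 0)) (hne : d ≠ 0) :
    ∃ J, d J ≠ 0 ∧ ∀ j > J, ‖d j‖ < ‖d J‖ := by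
  obtain ⟨i, hi⟩ := Function.ne_iff.1 hne
  have hsmall : ∀ᶠ j in atTop, ‖d j‖ < ‖d i‖ :=
    (tendsto_zero_iff_norm_tendsto_zero.1 hd).eventually_lt_const (norm_pos_iff.2 hi)
  have hfin : {j | ‖d i‖ ≤ ‖d j‖}.Finite := by
    simpa [← Nat.cofinite_eq_atTop, eventually_cofinite] using hsmall
  obtain ⟨J, hJ, hmax⟩ := hfin.exists_maximal ⟨i, le_refl ‖d i‖⟩
  refine ⟨J, norm_pos_iff.1 ((norm_pos_iff.2 hi).trans_le hJ), fun j hj => ?_⟩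
  by_contra! hle
  exact hj.not_ge (hmax (hJ.trans hle) hj.le)

theorem norm_lt_of_mem_span {s : Set ℤ_[p]} {x : ℤ_[p]} {r : ℝ} (hr : 0 < r)
    (hs : ∀ y ∈ s, ‖y‖ < r) (hx : x ∈ Ideal.span s) : ‖x‖ < r := by
  induction hx using Submodule.span_induction with
  | mem y hy => exact hs y hy
  | zero => rwa [norm_zero]
  | add y z _ _ hy hz => exact (PadicInt.nonarchimedean y z).trans_lt (max_lt hy hz)
  | smul a y _ hy =>
    rw [smul_eq_mul, norm_mul]
    exact (mul_le_of_le_one_left (norm_nonneg y) a.norm_le_one).trans_lt hy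

theorem sum_range_mul_descFactorial_eq_eval {R : Type*} [CommRing R] (d : ℕ → R) {n N : ℕ}
    (hn : n < N) :
    ∑ j ∈ Finset.range (n + 1), d j * (n.descFactorial j : R) =
      (∑ j ∈ Finset.range N, C (d j) * descPochhammer R j).eval (n : R) := by
  simp only [eval_finsetSum, eval_mul, eval_C, descPochhammer_eval_eq_descFactorial]
  refine Finset.sum_subset (Finset.range_mono hn) fun j _ hj => ?_
  rw [Nat.descFactorial_of_lt (by simpa using hj), Nat.cast_zero, mul_zero]

theorem eq_zero_of_infinite_sum_mul_descFactorial_eq_zero {d : ℕ → ℤ_[p]}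
    (hd : Tendsto d atTop (𝓝 0))
    (hinf : {n : ℕ | ∑ j ∈ Finset.range (n + 1),
      d j * (n.descFactorial j : ℤ_[p]) = 0}.Infinite) :
    d = 0 := by
  by_contra hne
  obtain ⟨J, hJ, hlt⟩ := exists_ne_zero_forall_norm_lt_of_tendsto_zero hd hne
  obtain ⟨Z, hZ, hcard⟩ := hinf.exists_subset_card_eq (J + 1)
  have hmem := mem_span_image_Ioi_of_card_isRoot (fun j => monic_descPochhammer ℤ_[p] j)
    (fun j => descPochhammer_natDegree ℤ_[p] j) d (J := J) (N := J + Z.sup id + 1) (by lia)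
    (Z := Z.map Nat.castEmbedding) (by rwa [Finset.card_map]) <| by
      simp only [Finset.forall_mem_map]
      intro n hn
      have hle : n ≤ Z.sup id := Finset.le_sup (f := id) hn
      exact (sum_range_mul_descFactorial_eq_eval d (by lia)).symm.trans (hZ hn)
  exact lt_irrefl _ (norm_lt_of_mem_span (norm_pos_iff.2 hJ) (Set.forall_mem_image.2 hlt) hmem)

theorem natCast_factorial_dvd_pow (j : ℕ) : (j.factorial : ℤ_[p]) ∣ (p : ℤ_[p]) ^ j := by
  have hne : (j.factorial : ℤ_[p]) ≠ 0 := Nat.cast_ne_zero.2 j.factorial_ne_zero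
  have hval : (j.factorial : ℤ_[p]).valuation = padicValNat p j.factorial := by
    have h := PadicInt.valuation_coe (j.factorial : ℤ_[p])
    rw [PadicInt.coe_natCast, Padic.valuation_natCast] at h
    exact_mod_cast h.symm
  rw [PadicInt.unitCoeff_spec hne, Units.mul_left_dvd, hval]
  exact pow_dvd_pow _ (padicValNat_factorial_le p j)

theorem eq_zero_of_pow_dvd_fwdDiff_iter {g : ℕ → ℤ_[p]}
    (hg : ∀ j, ((p : ℤ_[p]) ^ 2) ^ j ∣ (fwdDiff 1)^[j] g 0) (hinf : {n | g n = 0}.Infinite) :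
    g = 0 := by
  have hfact : ∀ j, ∃ c : ℤ_[p], (fwdDiff 1)^[j] g 0 = j.factorial * (p ^ j * c) := fun j => by
    obtain ⟨c, hc⟩ := hg j
    obtain ⟨u, hu⟩ := natCast_factorial_dvd_pow (p := p) j
    exact ⟨u * c, by rw [hc, ← pow_mul, two_mul, pow_add]; nth_rw 1 [hu]; ring⟩
  choose c hc using hfact
  have hnewton : ∀ n, g n =
      ∑ j ∈ Finset.range (n + 1), (p ^ j * c j) * (n.descFactorial j : ℤ_[p]) := fun n => by
    have h := shift_eq_sum_fwdDiff_iter 1 g n 0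
    simp only [smul_eq_mul, mul_one, zero_add] at h
    rw [h]
    refine Finset.sum_congr rfl fun j _ => ?_
    rw [hc, Nat.descFactorial_eq_factorial_mul_choose, nsmul_eq_mul, Nat.cast_mul]
    ring
  have htendsto : Tendsto (fun j => (p : ℤ_[p]) ^ j * c j) atTop (𝓝 0) := by
    have hp : ‖(p : ℤ_[p])‖ < 1 := PadicInt.mem_nonunits.1 PadicInt.p_nonunit
    refine squeeze_zero_norm (fun j => ?_)
      (tendsto_pow_atTop_nhds_zero_of_lt_one (norm_nonneg _) hp)
    rw [norm_mul, norm_pow]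
    exact mul_le_of_le_one_right (by positivity) (c j).norm_le_one
  have hcoeff := eq_zero_of_infinite_sum_mul_descFactorial_eq_zero htendsto <| by
    simpa only [← hnewton] using hinf
  funext n
  rw [hnewton]
  exact Finset.sum_eq_zero fun j _ => by rw [congrFun hcoeff j, Pi.zero_apply, zero_mul]

end NewtonSeries

section FwdDiff

open scoped Matrix

theorem fwdDiff_mul {A S : Type*} [AddCommMonoid A] [CommRing S] (h : A) (f g : A → S) :
    fwdDiff h (f * g) = fwdDiff h f * g + f * fwdDiff h g + fwdDiff h f * fwdDiff h g := by
  ext n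
  simp only [fwdDiff, Pi.add_apply, Pi.mul_apply]
  ring

theorem exists_fwdDiff_eq_smul_of_mem_adjoin {A S : Type*} [AddCommMonoid A] [CommRing S] {h : A}
    {q : S} {s : Set (A → S)} (hs : ∀ f ∈ s, ∃ g ∈ Algebra.adjoin S s, fwdDiff h f = q • g)
    {f : A → S} (hf : f ∈ Algebra.adjoin S s) :
    ∃ g ∈ Algebra.adjoin S s, fwdDiff h f = q • g := by
  induction hf using Algebra.adjoin_induction with
  | mem f hf => exact hs f hf
  | algebraMap a => exact ⟨0, zero_mem _, by rw [smul_zero]; exact fwdDiff_const h a⟩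
  | add f₁ f₂ _ _ hf₁ hf₂ =>
    obtain ⟨g₁, hg₁, h₁⟩ := hf₁
    obtain ⟨g₂, hg₂, h₂⟩ := hf₂
    exact ⟨g₁ + g₂, add_mem hg₁ hg₂, by rw [fwdDiff_add, h₁, h₂, smul_add]⟩
  | mul f₁ f₂ hf₁ hf₂ ih₁ ih₂ =>
    obtain ⟨g₁, hg₁, h₁⟩ := ih₁
    obtain ⟨g₂, hg₂, h₂⟩ := ih₂
    refine ⟨g₁ * f₂ + f₁ * g₂ + q • (g₁ * g₂), add_mem (add_mem (mul_mem hg₁ hf₂)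
      (mul_mem hf₁ hg₂)) (Subalgebra.smul_mem _ (mul_mem hg₁ hg₂) q), ?_⟩
    rw [fwdDiff_mul, h₁, h₂]
    simp only [smul_add, smul_mul_assoc, mul_smul_comm]

theorem pow_dvd_fwdDiff_iter_of_mem_adjoin {A S : Type*} [AddCommMonoid A] [CommRing S] {h : A}
    {q : S} {s : Set (A → S)} (hs : ∀ f ∈ s, ∃ g ∈ Algebra.adjoin S s, fwdDiff h f = q • g)
    {f : A → S} (hf : f ∈ Algebra.adjoin S s) (i : ℕ) (n : A) :
    q ^ i ∣ (fwdDiff h)^[i] f n := by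
  induction i generalizing f with
  | zero => simp
  | succ i ih =>
    obtain ⟨g, hg, hfg⟩ := exists_fwdDiff_eq_smul_of_mem_adjoin hs hf
    rw [Function.iterate_succ_apply, hfg, fwdDiff_iter_const_smul, pow_succ', Pi.smul_apply,
      smul_eq_mul]
    exact mul_dvd_mul_left q (ih hg)

theorem fwdDiff_pow_mulVec_apply {S ι : Type*} [CommRing S] [Fintype ι] [DecidableEq ι] {q : S}
    {M B : Matrix ι ι S} (hM : M = 1 + q • B) (w : ι → S) (i : ι) :
    fwdDiff 1 (fun n => (M ^ n *ᵥ w) i) = q • fun n => (M ^ n *ᵥ (B *ᵥ w)) i := by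
  ext n
  have hMw : M *ᵥ w = w + q • B *ᵥ w := by
    rw [hM, Matrix.add_mulVec, Matrix.one_mulVec, Matrix.smul_mulVec]
  simp only [fwdDiff, pow_succ, ← Matrix.mulVec_mulVec, hMw, Matrix.mulVec_add,
    Matrix.mulVec_smul, Pi.add_apply, Pi.smul_apply, add_sub_cancel_left]

theorem pow_dvd_fwdDiff_iter_eval_pow_mulVec {S ι : Type*} [CommRing S] [Fintype ι]
    [DecidableEq ι] {q : S} {M B : Matrix ι ι S} (hM : M = 1 + q • B) (w : ι → S)
    (F : MvPolynomial ι S) (j n : ℕ) :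
    q ^ j ∣ (fwdDiff 1)^[j] (fun n => MvPolynomial.eval (M ^ n *ᵥ w) F) n := by
  let coord : (ι → S) × ι → ℕ → S := fun wi n => (M ^ n *ᵥ wi.1) wi.2
  have hcoord : ∀ wi, coord wi ∈ Algebra.adjoin S (Set.range coord) := fun wi =>
    Algebra.subset_adjoin ⟨wi, rfl⟩
  have heval : (fun n => MvPolynomial.eval (M ^ n *ᵥ w) F) =
      MvPolynomial.aeval (fun i => coord (w, i)) F := by
    ext n
    exact (MvPolynomial.comp_aeval_apply (fun i => coord (w, i))
      (Pi.evalAlgHom S (fun _ => S) n) F).symm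
  refine pow_dvd_fwdDiff_iter_of_mem_adjoin (s := Set.range coord) ?_ ?_ j n
  · rintro _ ⟨⟨w, i⟩, rfl⟩
    exact ⟨_, hcoord (B *ᵥ w, i), fwdDiff_pow_mulVec_apply hM w i⟩
  · rw [heval]
    exact MvPolynomial.eval₂_mem (fun d _ => Subalgebra.algebraMap_mem _ (F.coeff d))
      fun i => hcoord (w, i)

theorem fwdDiff_iter_comp_addMonoidHom {A G H : Type*} [AddCommMonoid A] [AddCommGroup G]
    [AddCommGroup H] (l : G →+ H) (h : A) (k : ℕ) (f : A → G) :
    (fwdDiff h)^[k] (l ∘ f) = l ∘ (fwdDiff h)^[k] f :=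
  (Function.Semiconj.iterate_right (f := (l ∘ ·)) (fun f => by ext n; simp [fwdDiff]) k f).symm

end FwdDiff

section IntegralOrbits

open Filter
open scoped Matrix

variable {S ι : Type*} [CommRing S] [Fintype ι] [DecidableEq ι]

theorem exists_pow_eq_one_add_smul (q : S) [Finite (S ⧸ Ideal.span {q})] (L : GL ι S) :
    ∃ m > 0, ∃ B : Matrix ι ι S, (L ^ m).1 = 1 + q • B := by
  let π := Ideal.Quotient.mk (Ideal.span {q})
  obtain ⟨m, hm, hLm⟩ :=
    (isOfFinOrder_of_finite (Matrix.GeneralLinearGroup.map π L)).exists_pow_eq_one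
  have hdvd : ∀ i j, ∃ b, (L ^ m).1 i j - (1 : Matrix ι ι S) i j = q * b := fun i j => by
    rw [← map_pow, ← map_one (Matrix.GeneralLinearGroup.map π)] at hLm
    exact Ideal.mem_span_singleton.1 (Ideal.Quotient.eq.1 (congrArg (fun M => M.1 i j) hLm))
  choose B hB using hdvd
  refine ⟨m, hm, Matrix.of B, Matrix.ext fun i j => ?_⟩
  rw [Matrix.add_apply, Matrix.smul_apply, Matrix.of_apply, smul_eq_mul, ← hB, add_sub_cancel]

theorem val_inv_eq_one_add_smul {q : S} {M : GL ι S} {B : Matrix ι ι S} (hM : M.1 = 1 + q • B) :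
    (M⁻¹).1 = 1 + q • -((M⁻¹).1 * B) := by
  rw [smul_neg, ← Matrix.mul_smul, eq_sub_of_add_eq' hM.symm, mul_sub, Units.inv_mul, mul_one]
  abel

theorem zpow_mulVec_zpow_mulVec (L : GL ι S) (a b : ℤ) (v : ι → S) :
    (L ^ a).1 *ᵥ ((L ^ b).1 *ᵥ v) = (L ^ (a + b)).1 *ᵥ v := by
  rw [Matrix.mulVec_mulVec, ← Units.val_mul, ← zpow_add]

theorem exists_infinite_setOf_add_mul_mem {s : Set ℤ} (hs : s.Infinite) {m : ℕ} (hm : 0 < m) :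
    ∃ a : ℤ, {n : ℤ | a + m * n ∈ s}.Infinite := by
  by_contra! hfin
  refine hs (((Set.finite_Ico 0 (m : ℤ)).biUnion
    fun a _ => (hfin a).image (a + m * ·)).subset fun n hn => ?_)
  refine Set.mem_biUnion ⟨n.emod_nonneg (by lia), n.emod_lt_of_pos (by lia)⟩
    ⟨n / m, ?_, n.emod_add_mul_ediv m⟩
  rwa [Set.mem_ofPred_eq, n.emod_add_mul_ediv]

theorem finite_quotient_map_algebraMap {R : Type*} [CommRing R] [Algebra R S] [Module.Finite R S]
    (I : Ideal R) [Finite (R ⧸ I)] : Finite (S ⧸ I.map (algebraMap R S)) := by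
  have : Finite (S ⧸ I • (⊤ : Submodule R S)) :=
    Submodule.finite_quotient_smul I Module.Finite.fg_top
  rw [Ideal.smul_top_eq_map] at this
  exact this

variable {p : ℕ} [Fact p.Prime] [Algebra ℤ_[p] S]

theorem finite_quotient_span_algebraMap_pow [Module.Finite ℤ_[p] S] (N : ℕ) :
    Finite (S ⧸ Ideal.span {algebraMap ℤ_[p] S (p ^ N)}) := by
  have : NeZero (p ^ N) := ⟨pow_ne_zero N (Fact.out : p.Prime).ne_zero⟩
  have : Finite (ℤ_[p] ⧸ Ideal.span {(p : ℤ_[p]) ^ N}) := by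
    rw [← PadicInt.ker_toZModPow]
    exact .of_injective _ (RingHom.kerLift_injective (PadicInt.toZModPow N))
  rw [← Set.image_singleton, ← Ideal.map_span]
  exact finite_quotient_map_algebraMap _

variable [Module.Free ℤ_[p] S]

theorem eval_mulVec_eq_zero_of_infinite {M B : Matrix ι ι S}
    (hM : M = 1 + algebraMap ℤ_[p] S (p ^ 2) • B) {w : ι → S} {F : MvPolynomial ι S}
    (hinf : {n : ℕ | MvPolynomial.eval (M ^ n *ᵥ w) F = 0}.Infinite) :
    MvPolynomial.eval w F = 0 := by
  let b := Module.Free.chooseBasis ℤ_[p] S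
  refine b.ext_elem fun j => ?_
  let f : ℕ → S := fun n => MvPolynomial.eval (M ^ n *ᵥ w) F
  have hcoord : b.coord j ∘ f = 0 := by
    refine eq_zero_of_pow_dvd_fwdDiff_iter (fun i => ?_) (hinf.mono fun n hn => ?_)
    · obtain ⟨c, hc⟩ := pow_dvd_fwdDiff_iter_eval_pow_mulVec hM w F i 0
      have hcomp := fwdDiff_iter_comp_addMonoidHom (b.coord j).toAddMonoidHom 1 i f
      refine ⟨b.coord j c, (congrFun hcomp 0).trans ?_⟩
      rw [Function.comp_apply, hc, ← map_pow, ← Algebra.smul_def]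
      exact map_smul (b.coord j) _ c
    · exact (congrArg (b.coord j) hn).trans (map_zero _)
  simpa [f] using congrFun hcoord 0

variable {M : GL ι S} {B : Matrix ι ι S}

theorem eval_zpow_mulVec_eq_zero_of_frequently_atTop
    (hM : M.1 = 1 + algebraMap ℤ_[p] S (p ^ 2) • B) {w : ι → S} {F : MvPolynomial ι S}
    (hfreq : ∃ᶠ n : ℤ in atTop, MvPolynomial.eval ((M ^ n).1 *ᵥ w) F = 0) (n : ℤ) :
    MvPolynomial.eval ((M ^ n).1 *ᵥ w) F = 0 := by
  refine eval_mulVec_eq_zero_of_infinite hM (Nat.frequently_atTop_iff_infinite.1 ?_)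
  refine frequently_atTop.2 fun a => ?_
  obtain ⟨z, hz, hzero⟩ := frequently_atTop.1 hfreq (a + n)
  refine ⟨(z - n).toNat, by lia, ?_⟩
  rwa [← Units.val_pow_eq_pow_val, ← zpow_natCast, zpow_mulVec_zpow_mulVec,
    show ((z - n).toNat : ℤ) + n = z by lia]

theorem eval_zpow_mulVec_eq_zero_of_infinite
    (hM : M.1 = 1 + algebraMap ℤ_[p] S (p ^ 2) • B) {w : ι → S} {F : MvPolynomial ι S}
    (hinf : {n : ℤ | MvPolynomial.eval ((M ^ n).1 *ᵥ w) F = 0}.Infinite) (n : ℤ) :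
    MvPolynomial.eval ((M ^ n).1 *ᵥ w) F = 0 := by
  rw [← frequently_cofinite_iff_infinite, Int.cofinite_eq, frequently_sup] at hinf
  rcases hinf with hbot | htop
  · have hfreq : ∃ᶠ n : ℤ in atTop, MvPolynomial.eval ((M⁻¹ ^ n).1 *ᵥ w) F = 0 :=
      tendsto_neg_atBot_atTop.frequently (by simpa only [inv_zpow', neg_neg] using hbot)
    simpa only [inv_zpow', neg_neg] using
      eval_zpow_mulVec_eq_zero_of_frequently_atTop (val_inv_eq_one_add_smul hM) hfreq (-n)
  · exact eval_zpow_mulVec_eq_zero_of_frequently_atTop hM htop n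

variable (p) in
theorem exists_forall_eval_zpow_add_mul_mulVec_eq_zero_of_finite_free [Module.Finite ℤ_[p] S]
    (L : GL ι S) (v : ι → S) (F : MvPolynomial ι S)
    (hinf : {n : ℤ | MvPolynomial.eval ((L ^ n).1 *ᵥ v) F = 0}.Infinite) :
    ∃ m > 0, ∃ a : ℤ, ∀ n : ℤ, MvPolynomial.eval ((L ^ (a + (m : ℕ) * n)).1 *ᵥ v) F = 0 := by
  have := finite_quotient_span_algebraMap_pow (p := p) (S := S) 2
  obtain ⟨m, hm, B, hB⟩ := exists_pow_eq_one_add_smul (algebraMap ℤ_[p] S (p ^ 2)) L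
  obtain ⟨a, ha⟩ := exists_infinite_setOf_add_mul_mem hinf hm
  have hsub : ∀ n : ℤ, ((L ^ m) ^ n).1 *ᵥ ((L ^ a).1 *ᵥ v) = (L ^ (a + m * n)).1 *ᵥ v :=
    fun n => by rw [← zpow_natCast, ← zpow_mul, zpow_mulVec_zpow_mulVec, add_comm]
  refine ⟨m, hm, a, fun n => ?_⟩
  rw [← hsub]
  exact eval_zpow_mulVec_eq_zero_of_infinite hB (by simpa only [hsub, Set.mem_ofPred_eq] using ha) n

end IntegralOrbits

section Embedding

theorem exists_algebraicIndependent_nat (R A : Type*) [CommRing R] [CommRing A] [IsDomain A]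
    [Algebra R A] [FaithfulSMul R A] [Countable R] [Uncountable A] :
    ∃ ξ : ℕ → A, AlgebraicIndependent R ξ := by
  have : Nontrivial R := (algebraMap R A).domain_nontrivial
  obtain ⟨s, hs⟩ := exists_isTranscendenceBasis R A
  have hinf : Infinite s := by
    by_contra hfin
    rw [not_infinite_iff_finite] at hfin
    have hadj : Countable (Algebra.adjoin R s) := by
      rw [← Cardinal.mk_le_aleph0_iff, ← Cardinal.lift_le_aleph0]
      refine (Algebra.lift_cardinalMk_adjoin_le R s).trans ?_
      simp
    have : Algebra.IsAlgebraic (Algebra.adjoin R s) A := by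
      have halg := hs.isAlgebraic
      rwa [Subtype.range_coe] at halg
    refine not_countable (α := A) (Cardinal.mk_le_aleph0_iff.1 ?_)
    exact (Algebra.IsAlgebraic.cardinalMk_le_max (Algebra.adjoin R s) A).trans
      (max_le (Cardinal.mk_le_aleph0_iff.2 hadj) le_rfl)
  exact ⟨_, hs.1.comp _ (Infinite.natEmbedding s).injective⟩

theorem uncountable_padicInt (p : ℕ) [Fact p.Prime] : Uncountable ℤ_[p] := by
  rw [← Cardinal.aleph0_lt_mk_iff, ← IsFractionRing.cardinalMk ℤ_[p] ℚ_[p]]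
  exact Cardinal.aleph0_lt_continuum.trans_le
    (continuum_le_cardinal_of_nontriviallyNormedField ℚ_[p])

theorem exists_algebraicIndependent_rat_padicInt (p : ℕ) [Fact p.Prime] :
    ∃ ξ : ℕ → ℤ_[p], AlgebraicIndependent ℚ (fun i => (ξ i : ℚ_[p])) := by
  have := uncountable_padicInt p
  obtain ⟨ξ, hξ⟩ := exists_algebraicIndependent_nat ℤ ℤ_[p]
  have hξ' : AlgebraicIndependent ℤ fun i => (ξ i : ℚ_[p]) :=
    hξ.map' (f := (Algebra.ofId ℤ_[p] ℚ_[p]).restrictScalars ℤ) Subtype.val_injective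
  have : Algebra.IsAlgebraic ℤ ℚ := IsLocalization.isAlgebraic ℚ (nonZeroDivisors ℤ)
  exact ⟨ξ, hξ'.extendScalars ℚ⟩

theorem exists_prime_forall_not_dvd_den (C : Finset ℚ) :
    ∃ p : ℕ, p.Prime ∧ ∀ c ∈ C, ¬ p ∣ c.den := by
  obtain ⟨p, hlt, hp⟩ := Nat.exists_infinite_primes (C.sup Rat.den + 1)
  refine ⟨p, hp, fun c hc => Nat.not_dvd_of_pos_of_lt c.den_pos ?_⟩
  exact (Finset.le_sup (f := Rat.den) hc).trans_lt hlt

theorem aeval_mem_padicInt_subring {p : ℕ} [Fact p.Prime] {σ : Type*} (ξ : σ → ℤ_[p])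
    {q : MvPolynomial σ ℚ} (hq : ∀ c ∈ q.coeffs, ¬ p ∣ c.den) :
    MvPolynomial.aeval (fun i => (ξ i : ℚ_[p])) q ∈ PadicInt.subring p :=
  MvPolynomial.eval₂_mem (fun m hm => Padic.norm_rat_le_one
    (hq _ (MvPolynomial.coeff_mem_coeffs m (MvPolynomial.mem_support_iff.1 hm)))) fun i => (ξ i).2

theorem isIntegral_of_monic_of_coeff_mem_range {R S : Type*} [CommRing R] [CommRing S]
    [Algebra R S] {P : Polynomial S} (hP : P.Monic)
    (hcoeff : ∀ i, P.coeff i ∈ (algebraMap R S).range) {x : S} (hx : P.IsRoot x) :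
    IsIntegral R x := by
  nontriviality S
  obtain ⟨Q, rfl, -, hQ⟩ :=
    Polynomial.lifts_and_natDegree_eq_and_monic ((Polynomial.lifts_iff_coeff_lifts P).2 hcoeff) hP
  exact ⟨Q, hQ, by rwa [← Polynomial.eval_map]⟩

theorem exists_injective_ringHom_comp_eq_of_isIntegral {B A Ω : Type*} [CommRing B] [CommRing A]
    [IsDomain A] [Field Ω] [IsAlgClosed Ω] {g : B →+* A} (hg : Function.Injective g)
    (hint : g.IsIntegral) {θ : B →+* Ω} (hθ : Function.Injective θ) :
    ∃ φ : A →+* Ω, Function.Injective φ ∧ φ.comp g = θ := by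
  have := hg.isDomain g
  let := g.toAlgebra
  let := θ.toAlgebra
  have : Algebra.IsIntegral B A := ⟨hint⟩
  have : FaithfulSMul B A := (faithfulSMul_iff_algebraMap_injective _ _).2 hg
  have : FaithfulSMul B Ω := (faithfulSMul_iff_algebraMap_injective _ _).2 hθ
  let φ : A →ₐ[B] Ω := IsAlgClosed.lift
  refine ⟨φ, ?_, φ.comp_algebraMap⟩
  rw [RingHom.injective_iff_ker_eq_bot]
  refine Ideal.eq_bot_of_comap_eq_bot (R := B) ?_
  rw [RingHom.comap_ker, φ.comp_algebraMap]
  exact (RingHom.injective_iff_ker_eq_bot _).1 hθ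


theorem exists_prime_injective_ringHom_forall_isIntegral {A : Type*} [CommRing A] [IsDomain A]
    [Algebra ℚ A] [Algebra.FiniteType ℚ A] (T : Finset A) :
    ∃ (p : ℕ) (_ : Fact p.Prime) (φ : A →+* AlgebraicClosure ℚ_[p]),
      Function.Injective φ ∧ ∀ a ∈ T, IsIntegral ℤ_[p] (φ a) := by
  classical
  obtain ⟨d, g, hg, hint⟩ := exists_integral_inj_algHom_of_fg ℚ A
  choose P hP hroot using hint
  obtain ⟨p, hp, hden⟩ := exists_prime_forall_not_dvd_den
    (T.biUnion fun a => (P a).support.biUnion fun i => ((P a).coeff i).coeffs)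
  have : Fact p.Prime := ⟨hp⟩
  obtain ⟨ξ, hξ⟩ := exists_algebraicIndependent_rat_padicInt p
  let ξ' : Fin d → ℤ_[p] := fun i => ξ i
  let ev : MvPolynomial (Fin d) ℚ →ₐ[ℚ] ℚ_[p] := MvPolynomial.aeval fun i => (ξ' i : ℚ_[p])
  let θ := (algebraMap ℚ_[p] (AlgebraicClosure ℚ_[p])).comp ev.toRingHom
  have hθ : Function.Injective θ :=
    (algebraMap _ _).injective.comp (hξ.comp _ Fin.val_injective)
  obtain ⟨φ, hφ, hφg⟩ := exists_injective_ringHom_comp_eq_of_isIntegral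
    (g := g.toRingHom) hg (fun a => ⟨P a, hP a, hroot a⟩) hθ
  refine ⟨p, this, φ, hφ, fun a ha =>
    isIntegral_of_monic_of_coeff_mem_range ((hP a).map θ) (fun i => ?_) ?_⟩
  · have hmem : ev ((P a).coeff i) ∈ PadicInt.subring p :=
      aeval_mem_padicInt_subring ξ' fun c hc => hden c <| by
        have hi : i ∈ (P a).support := by
          rw [Polynomial.mem_support_iff]
          intro h0
          simp [h0] at hc
        exact Finset.mem_biUnion.2 ⟨a, ha, Finset.mem_biUnion.2 ⟨i, hi, hc⟩⟩
    exact ⟨⟨_, hmem⟩, by rw [Polynomial.coeff_map]; rfl⟩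
  · rw [Polynomial.IsRoot, Polynomial.eval_map, ← hφg, ← Polynomial.hom_eval₂]
    exact (congrArg φ (hroot a)).trans (map_zero φ)

theorem closure_coe_preimage_closure_eq_top {R : Type*} [Ring R] (s : Set R) :
    Subring.closure ((↑) ⁻¹' s : Set (Subring.closure s)) = ⊤ := by
  refine SetLike.coe_injective ((Subring.closure s).subtype_injective.image_injective ?_)
  rw [← Subring.coe_map, ← Subring.coe_map, RingHom.map_closure, ← RingHom.range_eq_map,
    Subring.range_subtype, Subring.coe_subtype, Set.image_preimage_eq_of_subset]
  simp

theorem exists_prime_injective_ringHom_closure_finite_free {K : Type*} [Field K] [CharZero K]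
    (T : Finset K) :
    ∃ (p : ℕ) (_ : Fact p.Prime) (S : Type) (_ : CommRing S) (_ : Algebra ℤ_[p] S)
      (ψ : Subring.closure (T : Set K) →+* S),
      Module.Finite ℤ_[p] S ∧ Module.Free ℤ_[p] S ∧ Function.Injective ψ := by
  classical
  let A := Algebra.adjoin ℚ (T : Set K)
  have : Algebra.FiniteType ℚ A :=
    A.fg_iff_finiteType.1 (Subalgebra.fg_adjoin_finset T)
  let incl : Subring.closure (T : Set K) →+* A :=
    Subring.inclusion (T := A.toSubring) (Subring.closure_le.2 Algebra.subset_adjoin)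
  have hincl : Function.Injective incl := Subring.inclusion_injective _
  let U : Set (Subring.closure (T : Set K)) := Subtype.val ⁻¹' (T : Set K)
  have hU : U.Finite := T.finite_toSet.preimage Subtype.val_injective.injOn
  obtain ⟨p, hp, φ, hφ, hint⟩ :=
    exists_prime_injective_ringHom_forall_isIntegral (hU.toFinset.image incl)
  let S := Algebra.adjoin ℤ_[p] (φ ∘ incl '' U)
  have hfin : Module.Finite ℤ_[p] S := Module.Finite.iff_fg.2 <|
    fg_adjoin_of_finite (hU.image _) <| Set.forall_mem_image.2 fun x hx =>
      hint _ (Finset.mem_image_of_mem incl (hU.mem_toFinset.2 hx))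
  have : FaithfulSMul ℤ_[p] (AlgebraicClosure ℚ_[p]) :=
    .trans ℤ_[p] ℚ_[p] (AlgebraicClosure ℚ_[p])
  have hfree : Module.Free ℤ_[p] S := Module.free_of_finite_type_torsion_free'
  have hmem : (⊤ : Subring _) ≤ S.toSubring.comap (φ.comp incl) := by
    rw [← closure_coe_preimage_closure_eq_top, Subring.closure_le]
    exact fun x hx => Algebra.subset_adjoin (Set.mem_image_of_mem _ hx)
  exact ⟨p, hp, S, inferInstance, inferInstance,
    (φ.comp incl).codRestrict S fun x => hmem (Subring.mem_top x), hfin, hfree,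
    fun x y hxy => hincl (hφ (congrArg Subtype.val hxy))⟩

end Embedding

section SkolemMahlerLech

open scoped Matrix

variable {R S ι : Type*} [CommRing R] [CommRing S] [Fintype ι] [DecidableEq ι]

theorem map_eval_zpow_mulVec (f : R →+* S) (L : GL ι R) (v : ι → R) (F : MvPolynomial ι R)
    (n : ℤ) :
    f (MvPolynomial.eval ((L ^ n).1 *ᵥ v) F) =
      MvPolynomial.eval ((Matrix.GeneralLinearGroup.map f L ^ n).1 *ᵥ (f ∘ v))
        (MvPolynomial.map f F) := by
  rw [MvPolynomial.map_eval, ← map_zpow]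
  congr 2
  ext i
  exact RingHom.map_mulVec f _ _ _

theorem exists_map_generalLinearGroup_eq {f : R →+* S} (hf : Function.Injective f) {L : GL ι S}
    (hL : ∀ i j, L.1 i j ∈ Set.range f) (hLinv : ∀ i j, (L⁻¹).1 i j ∈ Set.range f) :
    ∃ L₀ : GL ι R, Matrix.GeneralLinearGroup.map f L₀ = L := by
  choose M hM using hL
  choose N hN using hLinv
  have hfM : f.mapMatrix (Matrix.of M) = L.1 := Matrix.ext hM
  have hfN : f.mapMatrix (Matrix.of N) = (L⁻¹).1 := Matrix.ext hN
  have hinj : Function.Injective (f.mapMatrix : Matrix ι ι R →+* Matrix ι ι S) :=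
    Matrix.map_injective hf
  refine ⟨⟨Matrix.of M, Matrix.of N, hinj ?_, hinj ?_⟩, Units.ext hfM⟩
  · rw [map_mul, hfM, hfN, map_one, Units.mul_inv]
  · rw [map_mul, hfM, hfN, map_one, Units.inv_mul]

theorem exists_finset_map_subtype_closure_eq (L : GL ι R) (v : ι → R) (F : MvPolynomial ι R) :
    ∃ (T : Finset R) (L₀ : GL ι (Subring.closure (T : Set R)))
      (v₀ : ι → Subring.closure (T : Set R)) (F₀ : MvPolynomial ι (Subring.closure (T : Set R))),
      Matrix.GeneralLinearGroup.map (Subring.closure (T : Set R)).subtype L₀ = L ∧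
        (Subring.closure (T : Set R)).subtype ∘ v₀ = v ∧
        MvPolynomial.map (Subring.closure (T : Set R)).subtype F₀ = F := by
  classical
  let entries (M : Matrix ι ι R) : Finset R := Finset.univ.image (Function.uncurry M)
  have hentries : ∀ M i j, M i j ∈ entries M := fun M i j =>
    Finset.mem_image_of_mem (Function.uncurry M) (Finset.mem_univ (i, j))
  let T := entries L.1 ∪ entries (L⁻¹).1 ∪ Finset.univ.image v ∪ F.coeffs
  let κ := (Subring.closure (T : Set R)).subtype
  have hT : ∀ c ∈ T, c ∈ Set.range κ := fun c hc => ⟨⟨c, Subring.subset_closure hc⟩, rfl⟩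
  obtain ⟨L₀, hL₀⟩ : ∃ L₀, Matrix.GeneralLinearGroup.map κ L₀ = L :=
    exists_map_generalLinearGroup_eq Subtype.val_injective
      (fun i j => hT _ (by simp only [T, Finset.mem_union, hentries, true_or]))
      (fun i j => hT _ (by simp only [T, Finset.mem_union, hentries, true_or, or_true]))
  have hv : ∀ i, v i ∈ Set.range κ := fun i => hT _ (by simp [T])
  choose v₀ hv₀ using hv
  obtain ⟨F₀, hF₀⟩ : ∃ F₀, MvPolynomial.map κ F₀ = F :=
    MvPolynomial.mem_range_map_iff_coeffs_subset.2 fun c hc => hT c (Finset.mem_union_right _ hc)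
  exact ⟨T, L₀, v₀, F₀, hL₀, funext hv₀, hF₀⟩

theorem exists_forall_eval_zpow_add_mul_mulVec_eq_zero {K : Type*} [Field K] [CharZero K]
    (L : GL ι K) (v : ι → K) (F : MvPolynomial ι K)
    (hinf : {n : ℤ | MvPolynomial.eval ((L ^ n).1 *ᵥ v) F = 0}.Infinite) :
    ∃ m > 0, ∃ a : ℤ, ∀ n : ℤ, MvPolynomial.eval ((L ^ (a + (m : ℕ) * n)).1 *ᵥ v) F = 0 := by
  obtain ⟨T, L, v, F, rfl, rfl, rfl⟩ := exists_finset_map_subtype_closure_eq L v F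
  obtain ⟨p, _, S, _, _, ψ, _, _, hψ⟩ := exists_prime_injective_ringHom_closure_finite_free T
  simp only [← map_eval_zpow_mulVec, map_eq_zero_iff _ (Subring.subtype_injective _)] at hinf ⊢
  simp only [← map_eq_zero_iff ψ hψ, map_eval_zpow_mulVec] at hinf ⊢
  exact exists_forall_eval_zpow_add_mul_mulVec_eq_zero_of_finite_free p _ _ _ hinf

end SkolemMahlerLech

section LinearSubstitution

open MvPolynomial
open scoped Matrix

variable {R ι : Type*} [CommRing R] [Fintype ι]

theorem eval_bind₁_toMvPolynomial (M : Matrix ι ι R) (F : MvPolynomial ι R) (x : ι → R) :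
    eval x (bind₁ M.toMvPolynomial F) = eval (M *ᵥ x) F := by
  have heval : (fun i => eval x (M.toMvPolynomial i)) = M *ᵥ x :=
    funext fun i => M.toMvPolynomial_eval_eq_apply i x
  rw [← heval]
  exact eval₂Hom_bind₁ (RingHom.id R) x M.toMvPolynomial F

theorem isHomogeneous_bind₁_toMvPolynomial {F : MvPolynomial ι R} {d : ℕ}
    (hF : F.IsHomogeneous d) (M : Matrix ι ι R) :
    (bind₁ M.toMvPolynomial F).IsHomogeneous d := by
  simpa only [one_mul] using! hF.aeval M.toMvPolynomial M.toMvPolynomial_isHomogeneous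

theorem bind₁_toMvPolynomial_ne_zero [IsDomain R] [Infinite R] [DecidableEq ι] (L : GL ι R)
    {F : MvPolynomial ι R} (hF : F ≠ 0) : bind₁ L.1.toMvPolynomial F ≠ 0 := by
  refine fun hzero => hF (MvPolynomial.funext fun x => ?_)
  have hx : L.1 *ᵥ ((L⁻¹).1 *ᵥ x) = x := by
    rw [Matrix.mulVec_mulVec, Units.mul_inv, Matrix.one_mulVec]
  rw [← hx, ← eval_bind₁_toMvPolynomial, hzero, map_zero, map_zero]

end LinearSubstitution

theorem exists_natCast_add_eq_add_mul (a n : ℤ) {m : ℕ} (hm : 0 < m) :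
    ∃ j < m, ∃ q : ℤ, (j : ℤ) + n = a + m * q := by
  have hnonneg := (a - n).emod_nonneg (by lia : (m : ℤ) ≠ 0)
  have hlt := (a - n).emod_lt_of_pos (by lia : (0 : ℤ) < m)
  refine ⟨((a - n) % m).toNat, by lia, -((a - n) / m), ?_⟩
  have hdiv := (a - n).emod_add_mul_ediv m
  rw [mul_neg]
  lia

theorem stmt_14_general {k ι : Type*} [Field k] [CharZero k] [Fintype ι] [DecidableEq ι]
    (L : GL ι k) (v : ι → k)
    (hdense : ∀ F : MvPolynomial ι k, F ≠ 0 → (∃ d, F.IsHomogeneous d) →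
      ∃ n : ℤ, MvPolynomial.eval ((L ^ n).1.mulVec v) F ≠ 0)
    (F : MvPolynomial ι k) (hF : F ≠ 0) (hhom : ∃ d, F.IsHomogeneous d) :
    {n : ℤ | MvPolynomial.eval ((L ^ n).1.mulVec v) F = 0}.Finite := by
  obtain ⟨d, hd⟩ := hhom
  by_contra hinf
  obtain ⟨m, hm, a, hzero⟩ := exists_forall_eval_zpow_add_mul_mulVec_eq_zero L v F hinf
  let G (j : ℕ) : MvPolynomial ι k := MvPolynomial.bind₁ (L ^ j).1.toMvPolynomial F
  have hG : ∏ j ∈ Finset.range m, G j ≠ 0 :=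
    Finset.prod_ne_zero_iff.2 fun j _ => bind₁_toMvPolynomial_ne_zero (L ^ j) hF
  obtain ⟨n, hn⟩ := hdense _ hG ⟨_, MvPolynomial.IsHomogeneous.prod _ _ (fun _ => d) fun j _ =>
    isHomogeneous_bind₁_toMvPolynomial hd _⟩
  obtain ⟨j, hj, q, hq⟩ := exists_natCast_add_eq_add_mul a n hm
  refine hn ((map_prod _ _ _).trans (Finset.prod_eq_zero (Finset.mem_range.2 hj) ?_))
  rw [eval_bind₁_toMvPolynomial, ← zpow_natCast, zpow_mulVec_zpow_mulVec, hq, hzero]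

/-- in characteristic `0`, if the orbit `{Lⁿv : n ∈ ℤ}` of a nonzero vector
`v` under an invertible matrix `L`, viewed in `ℙ^t`, is Zariski dense, then it is
critically dense: every nonzero homogeneous polynomial vanishes at only finitely many
points of the orbit. -/
theorem stmt_14 {k : Type*} [Field k] [IsAlgClosed k] [CharZero k]
    (t : ℕ) (ht : 1 ≤ t)
    (L : GL (Fin (t + 1)) k) (v : Fin (t + 1) → k) (hv : v ≠ 0)
    (hdense : ∀ F : MvPolynomial (Fin (t + 1)) k, F ≠ 0 → (∃ d, F.IsHomogeneous d) →
      ∃ n : ℤ, MvPolynomial.eval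
        (((L ^ n : GL (Fin (t + 1)) k) : Matrix (Fin (t + 1)) (Fin (t + 1)) k).mulVec v) F ≠ 0) :
    ∀ F : MvPolynomial (Fin (t + 1)) k, F ≠ 0 → (∃ d, F.IsHomogeneous d) →
      {n : ℤ | MvPolynomial.eval
        (((L ^ n : GL (Fin (t + 1)) k) : Matrix (Fin (t + 1)) (Fin (t + 1)) k).mulVec v) F
          = 0}.Finite :=
  stmt_14_general L v hdense
end
end
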